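/- arXiv:1103.1469 — 5 statements merged into one kernel-verified Lean document; each statement's English description precedes it below -/
import Mathlib

section
/- Let D ⊆ ℝⁿ be a nonempty open connected set, let v = (v', v_{n+1}) ∈ ℝⁿ × ℝ, and let f₁, f₂ : D → ℝ be smooth solutions of the translator equation with velocity v on D. If the function f₂ − f₁ attains its infimum over D at some point of D, then f₂ − f₁ is constant on D. -/
open scoped RealInnerProductSpace

/-- The Hessian of `f` at `x`, applied to the vector `ξ` (i.e. `(D²f(x))ξ`). -/
noncomputable def hess {n : ℕ} (f : EuclideanSpace ℝ (Fin n) → ℝ)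
    (x ξ : EuclideanSpace ℝ (Fin n)) : EuclideanSpace ℝ (Fin n) :=
  fderiv ℝ (gradient f) x ξ

/-- The Laplacian of `f` at `x`, as the trace of the Hessian. -/
noncomputable def lap {n : ℕ} (f : EuclideanSpace ℝ (Fin n) → ℝ)
    (x : EuclideanSpace ℝ (Fin n)) : ℝ :=
  ∑ i, ⟪hess f x (EuclideanSpace.single i 1), EuclideanSpace.single i 1⟫

/-- `f` satisfies the translator equation with velocity `(v', vn) ∈ ℝⁿ × ℝ` at the point `x`:
`(1 + |∇f|²)·Δf − ⟨∇f, (D²f)∇f⟩ = (v_{n+1} − ⟨v', ∇f⟩)·(1 + |∇f|²)`. -/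
def TranslatorEqAt {n : ℕ} (f : EuclideanSpace ℝ (Fin n) → ℝ)
    (v' : EuclideanSpace ℝ (Fin n)) (vn : ℝ) (x : EuclideanSpace ℝ (Fin n)) : Prop :=
  (1 + ‖gradient f x‖ ^ 2) * lap f x - ⟪gradient f x, hess f x (gradient f x)⟫
    = (vn - ⟪v', gradient f x⟫) * (1 + ‖gradient f x‖ ^ 2)


open Filter Topology Metric Set

/-- At a local minimum the Hessian is positive semidefinite. -/
lemma IsLocalMin.inner_fderiv_gradient_nonneg {F : Type*} [NormedAddCommGroup F]
    [InnerProductSpace ℝ F] [CompleteSpace F] {h : F → ℝ} {G : F → F} {A : F →L[ℝ] F} {x : F}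
    (hmin : IsLocalMin h x) (hG : ∀ᶠ y in 𝓝 x, HasGradientAt h (G y) y)
    (hA : HasFDerivAt G A x) (ξ : F) : 0 ≤ ⟪A ξ, ξ⟫ := by
  by_contra! hneg
  let γ : ℝ → F := fun t => x + t • ξ
  have hγ (t : ℝ) : HasDerivAt γ ξ t := by
    simpa [γ] using ((hasDerivAt_id t).smul_const ξ).const_add x
  have hγ0 : γ 0 = x := by simp [γ]
  have hlim : Tendsto γ (𝓝 0) (𝓝 x) := hγ0 ▸ (hγ 0).continuousAt
  have hderiv : ∀ᶠ t in 𝓝 (0 : ℝ), HasDerivAt (h ∘ γ) ⟪G (γ t), ξ⟫ t := by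
    filter_upwards [hlim.eventually hG] with t ht
    simpa using ht.hasFDerivAt.comp_hasDerivAt t (hγ t)
  have hfst : deriv (h ∘ γ) =ᶠ[𝓝 0] fun t => ⟪G (γ t), ξ⟫ :=
    hderiv.mono fun t ht => ht.deriv
  have hsnd : deriv (deriv (h ∘ γ)) 0 = ⟪A ξ, ξ⟫ := by
    rw [hfst.deriv_eq]
    have hAγ : HasDerivAt (fun t => G (γ t)) (A ξ) 0 :=
      HasFDerivAt.comp_hasDerivAt (x := (0 : ℝ)) (by rwa [hγ0]) (hγ 0)
    simpa using (hAγ.inner ℝ (hasDerivAt_const (0 : ℝ) ξ)).deriv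
  have hmin' : IsLocalMin (h ∘ γ) 0 := by
    have := hlim.eventually hmin
    filter_upwards [this] with t ht
    simpa [hγ0] using ht
  have hmax : IsLocalMax (h ∘ γ) 0 :=
    isLocalMax_of_deriv_deriv_neg (hsnd ▸ hneg) hmin'.deriv_eq_zero
      hderiv.self_of_nhds.continuousAt
  have hconst : h ∘ γ =ᶠ[𝓝 0] fun _ => (h ∘ γ) 0 := by
    filter_upwards [hmin', hmax] with t h₁ h₂ using le_antisymm h₂ h₁
  have : deriv (deriv (h ∘ γ)) 0 = 0 := by
    rw [hconst.deriv.deriv_eq]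
    simp
  rw [hsnd] at this
  exact hneg.ne this

/-- A positive semidefinite quadratic form is bounded by its trace. -/
lemma inner_apply_self_le_trace {F : Type*} [NormedAddCommGroup F] [InnerProductSpace ℝ F]
    [FiniteDimensional ℝ F] (A : F →ₗ[ℝ] F) (hA : ∀ ξ, 0 ≤ ⟪A ξ, ξ⟫) (p : F) :
    ⟪p, A p⟫ ≤ ‖p‖ ^ 2 * LinearMap.trace ℝ F A := by
  classical
  rcases eq_or_ne p 0 with rfl | hp
  · simp
  have hnorm : ‖(‖p‖⁻¹ • p)‖ = 1 := norm_smul_inv_norm hp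
  have horth : Orthonormal ℝ ((↑) : ({‖p‖⁻¹ • p} : Set F) → F) := by
    rw [orthonormal_subtype_iff_ite]
    simp [hnorm]
  obtain ⟨s, b, hs, hb⟩ := horth.exists_orthonormalBasis_extension
  have hle := Finset.single_le_sum (f := fun i => ⟪b i, A (b i)⟫)
    (fun i _ => by rw [real_inner_comm]; exact hA _)
    (Finset.mem_univ (⟨‖p‖⁻¹ • p, by simpa using hs⟩ : s))
  rw [← A.trace_eq_sum_inner b] at hle
  simp only [hb, map_smul, inner_smul_left, inner_smul_right] at hle
  have hpos : 0 < ‖p‖ := norm_pos_iff.mpr hp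
  calc ⟪p, A p⟫ = ‖p‖ ^ 2 * (‖p‖⁻¹ * (‖p‖⁻¹ * ⟪p, A p⟫)) := by field_simp
    _ ≤ _ := by gcongr; simpa using hle

lemma trace_nonneg_of_inner_nonneg {F : Type*} [NormedAddCommGroup F] [InnerProductSpace ℝ F]
    [FiniteDimensional ℝ F] (A : F →ₗ[ℝ] F) (hA : ∀ ξ, 0 ≤ ⟪A ξ, ξ⟫) :
    0 ≤ LinearMap.trace ℝ F A := by
  rw [A.trace_eq_sum_inner (stdOrthonormalBasis ℝ F)]
  exact Finset.sum_nonneg fun i _ => by rw [real_inner_comm]; exact hA _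

lemma lap_eq_trace {n : ℕ} (f : EuclideanSpace ℝ (Fin n) → ℝ) (x : EuclideanSpace ℝ (Fin n)) :
    lap f x = LinearMap.trace ℝ _ (fderiv ℝ (gradient f) x).toLinearMap := by
  rw [LinearMap.trace_eq_sum_inner _ (EuclideanSpace.basisFun (Fin n) ℝ)]
  simp only [lap, hess, EuclideanSpace.basisFun_apply, ContinuousLinearMap.coe_coe]
  exact Finset.sum_congr rfl fun i _ => real_inner_comm _ _

/-- The first-order dependence of the translator operator on the gradient slot is Lipschitz. -/
lemma translator_operator_sub_le {F : Type*} [NormedAddCommGroup F] [InnerProductSpace ℝ F]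
    (A : F →L[ℝ] F) (p q v' : F) (vn τ M : ℝ)
    (hA : ‖A‖ ≤ M) (hp : ‖p‖ ≤ M) (hτ : |τ| ≤ M) (hv' : ‖v'‖ ≤ M) (hvn : |vn| ≤ M)
    (hq : ‖q‖ ≤ 1) :
    ((1 + ‖p‖ ^ 2) * τ - ⟪p, A p⟫ - (vn - ⟪v', p⟫) * (1 + ‖p‖ ^ 2))
      - ((1 + ‖p + q‖ ^ 2) * τ - ⟪p + q, A (p + q)⟫ - (vn - ⟪v', p + q⟫) * (1 + ‖p + q‖ ^ 2))
      ≤ ((2 * M + 1) * M + (2 * M + 1) * M + (M + M * M) * (2 * M + 1)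
        + M * (1 + (M + 1) ^ 2)) * ‖q‖ := by
  have hM : 0 ≤ M := (norm_nonneg _).trans hA
  have hq0 := norm_nonneg q
  have hAle (a b : F) : |⟪a, A b⟫| ≤ ‖a‖ * (M * ‖b‖) :=
    (abs_real_inner_le_norm _ _).trans (by gcongr; exact A.le_of_opNorm_le hA b)
  have hexp : ‖p + q‖ ^ 2 = ‖p‖ ^ 2 + (2 * ⟪p, q⟫ + ‖q‖ ^ 2) := by
    rw [norm_add_sq_real]; ring
  have hs : |2 * ⟪p, q⟫ + ‖q‖ ^ 2| ≤ (2 * M + 1) * ‖q‖ := by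
    have h₁ := abs_real_inner_le_norm p q
    have h₂ : ‖p‖ * ‖q‖ ≤ M * ‖q‖ := by gcongr
    have h₃ : ‖q‖ ^ 2 ≤ ‖q‖ := by nlinarith
    rw [abs_le] at *
    constructor <;> nlinarith [sq_nonneg ‖q‖]
  have hpq : ‖p + q‖ ≤ M + 1 := (norm_add_le _ _).trans (add_le_add hp hq)
  have h₁ : |(2 * ⟪p, q⟫ + ‖q‖ ^ 2) * τ| ≤ (2 * M + 1) * ‖q‖ * M := by
    rw [abs_mul]; gcongr
  have h₂ : |⟪p, A q⟫ + ⟪q, A p⟫ + ⟪q, A q⟫| ≤ (2 * M + 1) * M * ‖q‖ := by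
    have e₁ : |⟪p, A q⟫| ≤ M * (M * ‖q‖) := (hAle p q).trans (by gcongr)
    have e₂ : |⟪q, A p⟫| ≤ ‖q‖ * (M * M) := (hAle q p).trans (by gcongr)
    have e₃ : |⟪q, A q⟫| ≤ ‖q‖ * (M * 1) := (hAle q q).trans (by gcongr)
    refine (abs_add_three _ _ _).trans ?_
    linarith
  have h₃ : |(vn - ⟪v', p⟫) * (2 * ⟪p, q⟫ + ‖q‖ ^ 2)| ≤ (M + M * M) * ((2 * M + 1) * ‖q‖) := by
    rw [abs_mul]
    gcongr
    refine (abs_sub _ _).trans (add_le_add hvn ((abs_real_inner_le_norm _ _).trans ?_))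
    gcongr
  have h₄ : |⟪v', q⟫ * (1 + ‖p + q‖ ^ 2)| ≤ M * ‖q‖ * (1 + (M + 1) ^ 2) := by
    rw [abs_mul, abs_of_nonneg (by positivity : 0 ≤ 1 + ‖p + q‖ ^ 2)]
    gcongr
    exact (abs_real_inner_le_norm _ _).trans (by gcongr)
  have hid : ((1 + ‖p‖ ^ 2) * τ - ⟪p, A p⟫ - (vn - ⟪v', p⟫) * (1 + ‖p‖ ^ 2))
      - ((1 + ‖p + q‖ ^ 2) * τ - ⟪p + q, A (p + q)⟫ - (vn - ⟪v', p + q⟫) * (1 + ‖p + q‖ ^ 2))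
      = -((2 * ⟪p, q⟫ + ‖q‖ ^ 2) * τ) + (⟪p, A q⟫ + ⟪q, A p⟫ + ⟪q, A q⟫)
        + (vn - ⟪v', p⟫) * (2 * ⟪p, q⟫ + ‖q‖ ^ 2) - ⟪v', q⟫ * (1 + ‖p + q‖ ^ 2) := by
    simp only [map_add, inner_add_left, inner_add_right, hexp]
    ring
  rw [hid]
  have := neg_abs_le ((2 * ⟪p, q⟫ + ‖q‖ ^ 2) * τ)
  have := le_abs_self (⟪p, A q⟫ + ⟪q, A p⟫ + ⟪q, A q⟫)
  have := le_abs_self ((vn - ⟪v', p⟫) * (2 * ⟪p, q⟫ + ‖q‖ ^ 2))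
  have := neg_abs_le (⟪v', q⟫ * (1 + ‖p + q‖ ^ 2))
  linarith

lemma ContDiffOn.gradient {F : Type*} [NormedAddCommGroup F] [InnerProductSpace ℝ F]
    [CompleteSpace F] {f : F → ℝ} {D : Set F} (hD : IsOpen D)
    (hf : ContDiffOn ℝ (⊤ : ℕ∞) f D) : ContDiffOn ℝ (⊤ : ℕ∞) (gradient f) D := by
  let L : StrongDual ℝ F ≃ₗᵢ[ℝ] F := (InnerProductSpace.toDual ℝ F).symm
  exact L.toContinuousLinearEquiv.contDiff.comp_contDiffOn
    (hf.fderiv_of_isOpen hD (by simp))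

section Barrier

variable {F : Type*} [NormedAddCommGroup F] [InnerProductSpace ℝ F]

/-- The Hessian of `x ↦ ε * exp (-α * ‖x - y‖ ^ 2)` is `gaussianHess k α d` with `d = x - y` and
`k` the value of the function. -/
noncomputable def gaussianHess (k α : ℝ) (d : F) : F →L[ℝ] F :=
  k • ((4 * α ^ 2) • (innerSL ℝ d).smulRight d - (2 * α) • ContinuousLinearMap.id ℝ F)

lemma gaussianHess_apply (k α : ℝ) (d ξ : F) :
    gaussianHess k α d ξ = k • ((4 * α ^ 2) • ⟪d, ξ⟫ • d - (2 * α) • ξ) := by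
  simp [gaussianHess]

lemma trace_gaussianHess [FiniteDimensional ℝ F] (k α : ℝ) (d : F) :
    LinearMap.trace ℝ F (gaussianHess k α d).toLinearMap
      = k * (4 * α ^ 2 * ‖d‖ ^ 2 - 2 * α * Module.finrank ℝ F) := by
  have hb := stdOrthonormalBasis ℝ F
  rw [LinearMap.trace_eq_sum_inner _ hb]
  simp only [ContinuousLinearMap.coe_coe, gaussianHess_apply, inner_smul_right, inner_sub_right,
    real_inner_self_eq_norm_sq, hb.norm_eq_one]
  rw [← Finset.mul_sum, Finset.sum_sub_distrib, ← Finset.mul_sum, hb.sum_inner_mul_inner,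
    real_inner_self_eq_norm_sq]
  simp [mul_comm]

lemma hasGradientAt_gaussian [CompleteSpace F] (ε α : ℝ) (y x : F) :
    HasGradientAt (fun x => ε * Real.exp (-α * ‖x - y‖ ^ 2))
      (-(2 * α * (ε * Real.exp (-α * ‖x - y‖ ^ 2))) • (x - y)) x := by
  rw [hasGradientAt_iff_hasFDerivAt]
  have h := (((((hasFDerivAt_id (𝕜 := ℝ) x).sub_const y).norm_sq).const_mul (-α)).exp).const_mul ε
  refine h.congr_fderiv ?_
  ext ξ
  simp
  ring

lemma hasFDerivAt_gradient_gaussian (ε α : ℝ) (y x : F) :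
    HasFDerivAt (fun x => -(2 * α * (ε * Real.exp (-α * ‖x - y‖ ^ 2))) • (x - y))
      (gaussianHess (ε * Real.exp (-α * ‖x - y‖ ^ 2)) α (x - y)) x := by
  have hd := (hasFDerivAt_id (𝕜 := ℝ) x).sub_const y
  have h := ((((((hd.norm_sq).const_mul (-α)).exp).const_mul ε).const_mul (2 * α)).neg).smul hd
  refine h.congr_fderiv ?_
  ext ξ
  simp [gaussianHess_apply, smul_smul, -map_sub]
  module

/-- If a solution of the translator equation is touched from above by another one minus a Gaussian
barrier, then the exponent of the barrier is bounded. -/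
lemma gaussian_exponent_le_of_touching [FiniteDimensional ℝ F] (A₁ A₂ : F →L[ℝ] F)
    (p₁ p₂ v' d : F) (vn M k α r R : ℝ)
    (hA : ‖A₁‖ ≤ M) (hp : ‖p₁‖ ≤ M) (hτ : |LinearMap.trace ℝ F A₁.toLinearMap| ≤ M)
    (hv' : ‖v'‖ ≤ M) (hvn : |vn| ≤ M) (hk : 0 < k) (hα : 0 < α) (hr : 0 ≤ r) (hrd : r ≤ ‖d‖)
    (hdR : ‖d‖ ≤ R) (hsmall : 2 * α * k * ‖d‖ ≤ 1)
    (h₁ : (1 + ‖p₁‖ ^ 2) * LinearMap.trace ℝ F A₁.toLinearMap - ⟪p₁, A₁ p₁⟫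
      = (vn - ⟪v', p₁⟫) * (1 + ‖p₁‖ ^ 2))
    (h₂ : (1 + ‖p₂‖ ^ 2) * LinearMap.trace ℝ F A₂.toLinearMap - ⟪p₂, A₂ p₂⟫
      = (vn - ⟪v', p₂⟫) * (1 + ‖p₂‖ ^ 2))
    (hgrad : p₂ - p₁ - (-(2 * α * k) • d) = 0)
    (hhess : ∀ ξ, 0 ≤ ⟪(A₂ - A₁ - gaussianHess k α d) ξ, ξ⟫) :
    2 * α * r ^ 2 ≤ Module.finrank ℝ F * (1 + (M + 1) ^ 2)
      + ((2 * M + 1) * M + (2 * M + 1) * M + (M + M * M) * (2 * M + 1)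
        + M * (1 + (M + 1) ^ 2)) * R := by
  set C := (2 * M + 1) * M + (2 * M + 1) * M + (M + M * M) * (2 * M + 1)
        + M * (1 + (M + 1) ^ 2) with hC
  set q : F := -(2 * α * k) • d with hq
  have hM : 0 ≤ M := (norm_nonneg _).trans hA
  have hC0 : 0 ≤ C := by positivity
  obtain rfl : p₂ = p₁ + q := by rw [← sub_eq_zero, ← hgrad]; abel
  have hqn : ‖q‖ = 2 * α * k * ‖d‖ := by
    rw [hq, norm_smul, norm_neg, Real.norm_of_nonneg (by positivity)]
  have hlip := translator_operator_sub_le A₁ p₁ q v' vn _ M hA hp hτ hv' hvn (hqn ▸ hsmall)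
  have hpsd := inner_apply_self_le_trace (A₂ - A₁ - gaussianHess k α d).toLinearMap hhess (p₁ + q)
  have htr := trace_nonneg_of_inner_nonneg (A₂ - A₁ - gaussianHess k α d).toLinearMap hhess
  have hcoe : (A₂ - A₁ - gaussianHess k α d).toLinearMap
    = A₂.toLinearMap - A₁.toLinearMap - (gaussianHess k α d).toLinearMap := rfl
  rw [hcoe] at hpsd htr
  simp only [map_sub, LinearMap.sub_apply, ContinuousLinearMap.coe_coe, inner_sub_right,
    trace_gaussianHess, gaussianHess_apply, inner_smul_right, real_inner_self_eq_norm_sq]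
    at hpsd htr
  set P := p₁ + q
  rw [← hC, hqn] at hlip
  have hP : ‖P‖ ^ 2 ≤ (M + 1) ^ 2 := by
    gcongr
    exact (norm_add_le _ _).trans (add_le_add hp (hqn ▸ hsmall))
  have hcs : ⟪P, d⟫ * ⟪P, d⟫ ≤ ‖P‖ ^ 2 * ‖d‖ ^ 2 := by
    have := real_inner_mul_inner_self_le P d
    simpa [real_inner_self_eq_norm_sq] using this
  rw [real_inner_comm P d] at hpsd
  have hsum : 2 * α * k * ((1 + ‖P‖ ^ 2) * (2 * α * ‖d‖ ^ 2 - Module.finrank ℝ F)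
      - 2 * α * (⟪P, d⟫ * ⟪P, d⟫) + ‖P‖ ^ 2) ≤ 2 * α * k * (C * ‖d‖) := by linarith
  have hdiv := le_of_mul_le_mul_left hsum (by positivity)
  have hcs' := mul_le_mul_of_nonneg_left hcs (by positivity : 0 ≤ 2 * α)
  have hfr : (Module.finrank ℝ F : ℝ) * (1 + ‖P‖ ^ 2)
    ≤ Module.finrank ℝ F * (1 + (M + 1) ^ 2) := by gcongr
  have hCR : C * ‖d‖ ≤ C * R := by gcongr
  have hsq : 2 * α * r ^ 2 ≤ 2 * α * ‖d‖ ^ 2 := by gcongr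
  linarith [sq_nonneg ‖P‖]

end Barrier

/-- Two translators cannot touch at a boundary point of a ball in which one lies strictly above
the other. -/
lemma false_of_touching_at_ball_boundary {n : ℕ} {D : Set (EuclideanSpace ℝ (Fin n))}
    (hD : IsOpen D) {v' : EuclideanSpace ℝ (Fin n)} {vn : ℝ} {f₁ f₂ : EuclideanSpace ℝ (Fin n) → ℝ}
    (hf₁ : ContDiffOn ℝ (⊤ : ℕ∞) f₁ D) (hf₂ : ContDiffOn ℝ (⊤ : ℕ∞) f₂ D)
    (ht₁ : ∀ x ∈ D, TranslatorEqAt f₁ v' vn x) (ht₂ : ∀ x ∈ D, TranslatorEqAt f₂ v' vn x)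
    {m : ℝ} (hm : ∀ x ∈ D, m ≤ f₂ x - f₁ x) {x₀ y : EuclideanSpace ℝ (Fin n)} (hx₀ : x₀ ∈ D)
    (hx₀m : f₂ x₀ - f₁ x₀ = m) (hne : x₀ ≠ y)
    (hball : ∀ x ∈ D, dist x y ≤ dist x₀ y → x ≠ x₀ → m < f₂ x - f₁ x) : False := by
  set ρ := dist x₀ y
  have hρ0 : 0 < ρ := dist_pos.mpr hne
  obtain ⟨δ, hδ0, hδρ, hδD⟩ : ∃ δ > 0, δ ≤ ρ / 2 ∧ closedBall x₀ δ ⊆ D := by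
    obtain ⟨δ, hδ, hsub⟩ := nhds_basis_closedBall.mem_iff.mp (hD.mem_nhds hx₀)
    exact ⟨min δ (ρ / 2), by positivity, min_le_right _ _,
      (closedBall_subset_closedBall (min_le_left _ _)).trans hsub⟩
  have hK : IsCompact (closedBall x₀ δ) := isCompact_closedBall _ _
  have hg₁ := hf₁.gradient hD
  have hg₂ := hf₂.gradient hD
  have hH₁ : ContinuousOn (fderiv ℝ (gradient f₁)) D :=
    hg₁.continuousOn_fderiv_of_isOpen hD (by simp)
  obtain ⟨M, hM⟩ : ∃ M, ∀ x ∈ closedBall x₀ δ, ‖gradient f₁ x‖ + ‖fderiv ℝ (gradient f₁) x‖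
      + |lap f₁ x| + ‖v'‖ + |vn| ≤ M := by
    have hlap : ContinuousOn (lap f₁) D := by
      unfold lap hess
      fun_prop
    have hcont : ContinuousOn (fun x => ‖gradient f₁ x‖ + ‖fderiv ℝ (gradient f₁) x‖
      + |lap f₁ x| + ‖v'‖ + |vn|) D := by
      have := hg₁.continuousOn
      fun_prop
    obtain ⟨M, hM⟩ := hK.bddAbove_image (hcont.mono hδD)
    exact ⟨M, fun x hx => hM (mem_image_of_mem _ hx)⟩
  set C := (2 * M + 1) * M + (2 * M + 1) * M + (M + M * M) * (2 * M + 1)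
        + M * (1 + (M + 1) ^ 2) with hC
  obtain ⟨α, hα0, hα⟩ : ∃ α > 0, n * (1 + (M + 1) ^ 2) + C * (2 * ρ) < 2 * α * (ρ / 2) ^ 2 := by
    obtain ⟨α, hα⟩ := exists_gt (max 0 ((n * (1 + (M + 1) ^ 2) + C * (2 * ρ)) / (2 * (ρ / 2) ^ 2)))
    rw [max_lt_iff, div_lt_iff₀ (by positivity)] at hα
    exact ⟨α, hα.1, by linarith [hα.2]⟩
  have hcont : ContinuousOn (fun x => f₂ x - f₁ x) D := hf₂.continuousOn.sub hf₁.continuousOn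
  obtain ⟨c, hc0, hc⟩ : ∃ c > 0, ∀ x ∈ sphere x₀ δ ∩ closedBall y ρ, m + c ≤ f₂ x - f₁ x := by
    have hsub : sphere x₀ δ ∩ closedBall y ρ ⊆ D :=
      (inter_subset_left.trans sphere_subset_closedBall).trans hδD
    have hcompact := (isCompact_sphere x₀ δ).inter_right (isClosed_closedBall (x := y) (ε := ρ))
    obtain ⟨a, ha, hle⟩ := hcompact.exists_forall_le' (hcont.mono hsub) (a := m)
      fun x hx => hball x (hsub hx) hx.2 (ne_of_mem_sphere hx.1 hδ0.ne')
    exact ⟨a - m, sub_pos.mpr ha, fun x hx => by linarith [hle x hx]⟩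
  obtain ⟨ε, hε0, hεc, hεα⟩ : ∃ ε > 0, ε < c ∧ 2 * α * ε * (2 * ρ) ≤ 1 := by
    refine ⟨min (c / 2) (1 / (2 * α * (2 * ρ))), by positivity,
      (min_le_left _ _).trans_lt (half_lt_self hc0), ?_⟩
    have := min_le_right (c / 2) (1 / (2 * α * (2 * ρ)))
    rw [le_div_iff₀ (by positivity)] at this
    linarith
  let w : EuclideanSpace ℝ (Fin n) → ℝ := fun x => ε * Real.exp (-α * ‖x - y‖ ^ 2)
  have hw0 (x) : 0 < w x := by positivity
  have hwε (x) : w x ≤ ε := mul_le_of_le_one_right hε0.le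
    (Real.exp_le_one_iff.mpr (by nlinarith [sq_nonneg ‖x - y‖]))
  have hwcont : Continuous w := by fun_prop
  obtain ⟨x₁, hx₁, hx₁min⟩ := hK.exists_isMinOn ⟨x₀, mem_closedBall_self hδ0.le⟩
    ((hcont.mono hδD).sub hwcont.continuousOn)
  have hle₀ : f₂ x₁ - f₁ x₁ - w x₁ ≤ m - w x₀ := by
    rw [← hx₀m]; exact hx₁min (mem_closedBall_self hδ0.le)
  have hx₁D : x₁ ∈ D := hδD hx₁
  have hx₁ball : x₁ ∈ ball x₀ δ := by
    by_contra hnot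
    have hsph : x₁ ∈ sphere x₀ δ := le_antisymm hx₁ (not_lt.mp hnot)
    rcases le_or_gt (dist x₁ y) ρ with hin | hout
    · linarith [hc x₁ ⟨hsph, hin⟩, hwε x₁, hw0 x₀]
    · have : w x₁ < w x₀ := by
        simp only [w, neg_mul, ← dist_eq_norm]
        gcongr
      linarith [hm x₁ hx₁D]
  have hlocal : IsLocalMin (fun x => f₂ x - f₁ x - w x) x₁ :=
    hx₁min.isLocalMin (mem_of_superset (isOpen_ball.mem_nhds hx₁ball) ball_subset_closedBall)
  have hgrad : ∀ᶠ x in 𝓝 x₁, HasGradientAt (fun x => f₂ x - f₁ x - w x)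
      (gradient f₂ x - gradient f₁ x - -(2 * α * w x) • (x - y)) x := by
    filter_upwards [hD.mem_nhds hx₁D] with x hx
    have e₁ := ((hf₁.contDiffAt (hD.mem_nhds hx)).differentiableAt (by simp)).hasGradientAt
    have e₂ := ((hf₂.contDiffAt (hD.mem_nhds hx)).differentiableAt (by simp)).hasGradientAt
    have e₃ := hasGradientAt_gaussian ε α y x
    rw [hasGradientAt_iff_hasFDerivAt] at *
    rw [map_sub, map_sub]
    exact (e₂.sub e₁).sub e₃
  have hhess : HasFDerivAt (fun x => gradient f₂ x - gradient f₁ x - -(2 * α * w x) • (x - y))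
      (fderiv ℝ (gradient f₂) x₁ - fderiv ℝ (gradient f₁) x₁
        - gaussianHess (w x₁) α (x₁ - y)) x₁ := by
    have e₁ := ((hg₁.contDiffAt (hD.mem_nhds hx₁D)).differentiableAt (by simp)).hasFDerivAt
    have e₂ := ((hg₂.contDiffAt (hD.mem_nhds hx₁D)).differentiableAt (by simp)).hasFDerivAt
    exact (e₂.sub e₁).sub (hasFDerivAt_gradient_gaussian ε α y x₁)
  have hcrit : gradient f₂ x₁ - gradient f₁ x₁ - -(2 * α * w x₁) • (x₁ - y) = 0 := by
    have := hlocal.hasFDerivAt_eq_zero hgrad.self_of_nhds.hasFDerivAt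
    simpa only [map_eq_zero_iff _ (InnerProductSpace.toDual ℝ _).injective] using this
  have hdist₁ : ρ / 2 ≤ ‖x₁ - y‖ := by
    rw [← dist_eq_norm]
    linarith [dist_triangle_left x₀ y x₁, mem_ball.mp hx₁ball]
  have hdist₂ : ‖x₁ - y‖ ≤ 2 * ρ := by
    rw [← dist_eq_norm]
    linarith [dist_triangle x₁ x₀ y, mem_ball.mp hx₁ball]
  have hMx := hM x₁ hx₁
  have := norm_nonneg (gradient f₁ x₁)
  have := norm_nonneg (fderiv ℝ (gradient f₁) x₁)
  have := abs_nonneg (lap f₁ x₁)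
  have := norm_nonneg v'
  have := abs_nonneg vn
  have heq₁ := ht₁ x₁ hx₁D
  have heq₂ := ht₂ x₁ hx₁D
  rw [TranslatorEqAt, lap_eq_trace] at heq₁ heq₂
  have hbound := gaussian_exponent_le_of_touching (fderiv ℝ (gradient f₁) x₁)
    (fderiv ℝ (gradient f₂) x₁) (gradient f₁ x₁) (gradient f₂ x₁) v' (x₁ - y) vn M (w x₁) α (ρ / 2)
    (2 * ρ) (by linarith) (by linarith) (by rw [← lap_eq_trace]; linarith) (by linarith)
    (by linarith) (hw0 x₁) hα0 (by positivity) hdist₁ hdist₂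
    (le_trans (by gcongr; exact hwε x₁) hεα) heq₁ heq₂ hcrit
    (hlocal.inner_fderiv_gradient_nonneg hgrad hhess)
  rw [finrank_euclideanSpace_fin] at hbound
  exact hbound.not_gt hα

/-- If `f₁, f₂` are smooth solutions of the translator equation with the same
velocity `v = (v', vn)` on a nonempty open connected set `D ⊆ ℝⁿ`, and `f₂ − f₁` attains its
infimum over `D` at a point of `D`, then `f₂ − f₁` is constant on `D`. -/
theorem subsequent_singularities_stmt0 {n : ℕ}
    (D : Set (EuclideanSpace ℝ (Fin n))) (hD : IsOpen D) (hDconn : IsConnected D)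
    (v' : EuclideanSpace ℝ (Fin n)) (vn : ℝ)
    (f₁ f₂ : EuclideanSpace ℝ (Fin n) → ℝ)
    (hf₁ : ContDiffOn ℝ (⊤ : ℕ∞) f₁ D) (hf₂ : ContDiffOn ℝ (⊤ : ℕ∞) f₂ D)
    (ht₁ : ∀ x ∈ D, TranslatorEqAt f₁ v' vn x)
    (ht₂ : ∀ x ∈ D, TranslatorEqAt f₂ v' vn x)
    (p : EuclideanSpace ℝ (Fin n)) (hp : p ∈ D)
    (hmin : ∀ x ∈ D, f₂ p - f₁ p ≤ f₂ x - f₁ x) :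
    ∀ x ∈ D, f₂ x - f₁ x = f₂ p - f₁ p := by
  set m := f₂ p - f₁ p
  have hcont : ContinuousOn (fun x => f₂ x - f₁ x) D := hf₂.continuousOn.sub hf₁.continuousOn
  have hopen_pos : IsOpen (D ∩ (fun x => f₂ x - f₁ x) ⁻¹' Ioi m) :=
    hcont.isOpen_inter_preimage hD isOpen_Ioi
  have hopen_zero : IsOpen {x ∈ D | f₂ x - f₁ x = m} := by
    refine Metric.isOpen_iff.mpr fun z ⟨hzD, hz⟩ => ?_
    obtain ⟨r, hr, hrD⟩ := Metric.isOpen_iff.mp hD z hzD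
    refine ⟨r / 2, by positivity, fun y hy => ?_⟩
    have hyD : y ∈ D := hrD (ball_subset_ball (by linarith) hy)
    refine ⟨hyD, ?_⟩
    by_contra hne
    have hsub : closedBall y (dist z y) ⊆ D := fun x hx => hrD <| by
      rw [mem_closedBall] at hx
      rw [mem_ball] at hy ⊢
      linarith [dist_triangle x y z, dist_comm y z]
    -- a nearest zero to `y`
    have hcompact : IsCompact (closedBall y (dist z y) ∩ (fun x => f₂ x - f₁ x) ⁻¹' {m}) :=
      (isCompact_closedBall y _).of_isClosed_subset
        ((hcont.mono hsub).preimage_isClosed_of_isClosed isClosed_closedBall isClosed_singleton)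
        inter_subset_left
    obtain ⟨x₀, ⟨hx₀b, hx₀m⟩, hx₀min⟩ := hcompact.exists_isMinOn
      ⟨z, mem_closedBall.mpr le_rfl, hz⟩
      (continuous_id.dist (continuous_const (y := y))).continuousOn
    have hx₀y : x₀ ≠ y := fun h => hne (h ▸ hx₀m)
    have hpos0 : 0 < dist x₀ y := dist_pos.mpr hx₀y
    have hmid : dist x₀ (midpoint ℝ x₀ y) = dist x₀ y / 2 := by
      rw [dist_left_midpoint]; simp; ring
    have hmidy : dist (midpoint ℝ x₀ y) y = dist x₀ y / 2 := by
      rw [dist_midpoint_right]; simp; ring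
    refine false_of_touching_at_ball_boundary hD hf₁ hf₂ ht₁ ht₂ hmin (hsub hx₀b) hx₀m
      (y := midpoint ℝ x₀ y) (dist_pos.mp (by linarith)) fun x hxD hxle hxne => ?_
    refine (hmin x hxD).lt_of_ne' fun hxm => hxne ?_
    have htri := dist_triangle x (midpoint ℝ x₀ y) y
    have hxb : dist x y ≤ dist x₀ y := by linarith
    have hxge : dist x₀ y ≤ dist x y :=
      hx₀min ⟨mem_closedBall.mpr (hxb.trans hx₀b), hxm⟩
    have h₁ : dist x (midpoint ℝ x₀ y) = dist x y / 2 := by linarith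
    have h₂ : dist (midpoint ℝ x₀ y) y = dist x y / 2 := by linarith
    have hmm : midpoint ℝ x₀ y = midpoint ℝ x y :=
      eq_midpoint_of_dist_eq_half h₁ h₂
    simpa [midpoint_eq_midpoint_iff_vsub_eq_vsub, sub_eq_zero, eq_comm] using hmm
  have hdisj : Disjoint {x ∈ D | f₂ x - f₁ x = m} (D ∩ (fun x => f₂ x - f₁ x) ⁻¹' Ioi m) :=
    Set.disjoint_left.mpr fun x hx hx' => hx'.2.ne' hx.2
  have hcover : D ⊆ {x ∈ D | f₂ x - f₁ x = m} ∪ (D ∩ (fun x => f₂ x - f₁ x) ⁻¹' Ioi m) :=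
    fun x hx => (hmin x hx).eq_or_lt.imp (fun h => ⟨hx, h.symm⟩) fun h => ⟨hx, h⟩
  exact fun x hx => (hDconn.isPreconnected.subset_left_of_subset_union hopen_zero hopen_pos hdisj
    hcover ⟨p, hp, hp, rfl⟩ hx).2
end

section
/- Let D ⊆ ℝⁿ be a nonempty open connected set, let v = (v', v_{n+1}) ∈ ℝⁿ × ℝ, and let f₁, f₂ : D → ℝ be smooth solutions of the translator equation with velocity v on D with f₂(x) > f₁(x) for all x ∈ D. If the function (x, y) ∈ D × D ↦ ‖(x, f₁(x)) − (y, f₂(y))‖ (Euclidean norm in ℝ^{n+1}) attains its infimum at some pair (p, q) ∈ D × D, then there exist a ∈ ℝⁿ and c₁, c₂ ∈ ℝ such that f₁(x) = ⟨a, x⟩ + c₁ and f₂(x) = ⟨a, x⟩ + c₂ for all x ∈ D (so the two graphs lie in parallel hyperplanes), and moreover v_{n+1} = ⟨v', a⟩ (so v is parallel to those hyperplanes). -/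
open scoped RealInnerProductSpace

open Set Filter Topology MeasureTheory Metric

section Carleman

variable {E : Type*} [NormedAddCommGroup E] [InnerProductSpace ℝ E]

/-- The integral of a directional derivative of a compactly supported function vanishes. -/
theorem integral_lineDeriv_eq_zero [FiniteDimensional ℝ E] [MeasurableSpace E] [BorelSpace E]
    {μ : Measure E} [μ.IsAddHaarMeasure] {F G : E → ℝ} {X : E} {K : Set E} (hK : IsCompact K)
    (hF : Continuous F) (hG : Continuous G) (hF0 : ∀ x ∉ K, F x = 0) (hG0 : ∀ x ∉ K, G x = 0)
    (h : ∀ x, HasLineDerivAt ℝ F (G x) x X) : ∫ x, G x ∂μ = 0 := by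
  have hFi := hF.integrable_of_hasCompactSupport (μ := μ) (HasCompactSupport.intro hK hF0)
  have hGi := hG.integrable_of_hasCompactSupport (μ := μ) (HasCompactSupport.intro hK hG0)
  have key := integral_bilinear_hasLineDerivAt_right_eq_neg_left_of_integrable (μ := μ)
    (f := fun _ : E => (1 : ℝ)) (f' := fun _ => 0) (g := F) (g' := G) (v := X)
    (B := ContinuousLinearMap.mul ℝ ℝ) (by simp) (by simpa using hGi) (by simpa using hFi)
    (fun x _ => by simpa [HasLineDerivAt] using hasDerivAt_const (0 : ℝ) (1 : ℝ))
    (fun x _ => h x)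
  simpa using key

/-- The pointwise algebra behind the Carleman identity: the cross term of the conjugated operator
equals a divergence plus a quadratic form. -/
theorem cross_term_algebra {ι : Type*} [Fintype ι] (d b : ι → ℝ) (s H : ι → ι → ℝ)
    (hs : ∀ i j, s i j = s j i) (v k τ : ℝ) :
    (∑ i, s i i + (τ ^ 2 * ∑ i, b i ^ 2 + τ * k) * v)
        * (-2 * ∑ j, b j * d j - (∑ i, H i i + k) * v) =
      (2 * ∑ i, ∑ j, H i j * (d i * d j) + k * ∑ i, d i ^ 2
        + (τ ^ 2 * (2 * ∑ i, ∑ j, H i j * (b i * b j) - k * ∑ i, b i ^ 2) - τ * k ^ 2) * v ^ 2)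
      + ∑ i, (-2 * (s i i * ∑ j, b j * d j + d i * ∑ j, (H i j * d j + b j * s i j))
        + (H i i * ∑ j, d j ^ 2 + b i * ∑ j, 2 * d j * s i j)
        - (∑ j, H j j + k) * (d i * d i + v * s i i)
        - ((τ ^ 2 * ∑ j, 2 * b j * H i j) * (b i * v ^ 2)
          + (τ ^ 2 * ∑ j, b j ^ 2 + τ * k) * (H i i * v ^ 2 + b i * (2 * v * d i)))) := by
  have e1 : ∑ i, d i * ∑ j, (H i j * d j + b j * s i j)
      = ∑ i, ∑ j, H i j * (d i * d j) + ∑ i, ∑ j, d i * b j * s i j := by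
    rw [← Finset.sum_add_distrib]
    refine Finset.sum_congr rfl fun i _ => ?_
    rw [Finset.mul_sum, ← Finset.sum_add_distrib]
    exact Finset.sum_congr rfl fun j _ => by ring
  have e2 : ∑ i, b i * ∑ j, 2 * d j * s i j = 2 * ∑ i, ∑ j, d i * b j * s i j := by
    rw [Finset.sum_comm (f := fun i j => d i * b j * s i j), Finset.mul_sum]
    refine Finset.sum_congr rfl fun i _ => ?_
    rw [Finset.mul_sum, Finset.mul_sum]
    exact Finset.sum_congr rfl fun j _ => by rw [hs i j]; ring
  have e3 : ∑ i, (τ ^ 2 * ∑ j, 2 * b j * H i j) * (b i * v ^ 2)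
      = 2 * τ ^ 2 * v ^ 2 * ∑ i, ∑ j, H i j * (b i * b j) := by
    rw [Finset.mul_sum]
    refine Finset.sum_congr rfl fun i _ => ?_
    rw [Finset.mul_sum, Finset.mul_sum, Finset.sum_mul]
    exact Finset.sum_congr rfl fun j _ => by ring
  have e4 : ∑ i, (d i * d i + v * s i i) = ∑ i, d i ^ 2 + v * ∑ i, s i i := by
    rw [Finset.sum_add_distrib, ← Finset.mul_sum]
    simp only [pow_two]
  have e5 : ∑ i, (H i i * v ^ 2 + b i * (2 * v * d i))
      = v ^ 2 * ∑ i, H i i + 2 * v * ∑ i, b i * d i := by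
    rw [Finset.sum_add_distrib, Finset.mul_sum, Finset.mul_sum]
    congr 1 <;> exact Finset.sum_congr rfl fun j _ => by ring
  have split : ∀ (s' α h γ δ ε ζ : ι → ℝ) (Q N t B : ℝ),
      ∑ i, (-2 * (s' i * Q + α i) + (h i * N + γ i) - t * δ i - (ε i + B * ζ i))
        = -2 * (Q * ∑ i, s' i + ∑ i, α i) + (N * ∑ i, h i + ∑ i, γ i) - t * ∑ i, δ i
          - (∑ i, ε i + B * ∑ i, ζ i) := by
    intro s' α h γ δ ε ζ Q N t B
    simp only [Finset.sum_add_distrib, Finset.sum_sub_distrib, ← Finset.mul_sum, ← Finset.sum_mul]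
    ring
  rw [split (fun i => s i i) _ (fun i => H i i), e1, e2, e3, e4, e5]
  ring

/-- Integrated form of the cross term of the operator `∑ Xᵢ²` conjugated by `exp (τ φ)`, where
`bᵢ = Xᵢ φ` and the second derivatives `Hᵢⱼ = Xᵢ Xⱼ φ` are constant. -/
theorem integral_cross_term [FiniteDimensional ℝ E] [MeasurableSpace E] [BorelSpace E]
    {μ : Measure E} [μ.IsAddHaarMeasure] {ι : Type*} [Fintype ι] {X : ι → E}
    {b D : ι → E → ℝ} {H : ι → ι → ℝ} {S : ι → ι → E → ℝ} {v : E → ℝ} {K : Set E}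
    (hK : IsCompact K) (hb : ∀ i, Continuous (b i)) (hD : ∀ i, Continuous (D i))
    (hS : ∀ i j, Continuous (S i j)) (hv : Continuous v)
    (hbd : ∀ i j x, HasLineDerivAt ℝ (b j) (H i j) x (X i))
    (hvd : ∀ i x, HasLineDerivAt ℝ v (D i x) x (X i))
    (hDd : ∀ i j x, HasLineDerivAt ℝ (D j) (S i j x) x (X i))
    (hSsymm : ∀ i j x, S i j x = S j i x)
    (hv0 : ∀ x ∉ K, v x = 0) (hD0 : ∀ i, ∀ x ∉ K, D i x = 0) (hS0 : ∀ i j, ∀ x ∉ K, S i j x = 0)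
    (k τ : ℝ) :
    ∫ x, (∑ i, S i i x + (τ ^ 2 * ∑ i, b i x ^ 2 + τ * k) * v x)
        * (-2 * ∑ j, b j x * D j x - (∑ i, H i i + k) * v x) ∂μ =
      ∫ x, (2 * ∑ i, ∑ j, H i j * (D i x * D j x) + k * ∑ i, D i x ^ 2
        + (τ ^ 2 * (2 * ∑ i, ∑ j, H i j * (b i x * b j x) - k * ∑ i, b i x ^ 2) - τ * k ^ 2)
          * v x ^ 2) ∂μ := by
  set G : ι → E → ℝ := fun i x =>
    -2 * (S i i x * ∑ j, b j x * D j x + D i x * ∑ j, (H i j * D j x + b j x * S i j x))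
        + (H i i * ∑ j, D j x ^ 2 + b i x * ∑ j, 2 * D j x * S i j x)
        - (∑ j, H j j + k) * (D i x * D i x + v x * S i i x)
        - ((τ ^ 2 * ∑ j, 2 * b j x * H i j) * (b i x * v x ^ 2)
          + (τ ^ 2 * ∑ j, b j x ^ 2 + τ * k) * (H i i * v x ^ 2 + b i x * (2 * v x * D i x)))
    with hGdef
  have hGc : ∀ i, Continuous (G i) := fun i => by fun_prop
  have hG0 : ∀ i, ∀ x ∉ K, G i x = 0 := fun i x hx => by
    simp [hGdef, hv0 x hx, hD0 _ x hx, hS0 _ _ x hx]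
  have hGint : ∀ i, ∫ x, G i x ∂μ = 0 := by
    intro i
    refine integral_lineDeriv_eq_zero (X := X i)
      (F := fun x => -2 * (D i x * ∑ j, b j x * D j x) + b i x * ∑ j, D j x ^ 2
        - (∑ j, H j j + k) * (v x * D i x)
        - (τ ^ 2 * ∑ j, b j x ^ 2 + τ * k) * (b i x * v x ^ 2))
      hK (by fun_prop) (hGc i) (fun x hx => by simp [hv0 x hx, hD0 _ x hx]) (hG0 i) fun x => ?_
    have hb' := fun j => hbd i j x
    have hv' := hvd i x
    have hD' := fun j => hDd i j x
    simp only [HasLineDerivAt] at hb' hv' hD' ⊢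
    have h1 := HasDerivAt.fun_sum (u := Finset.univ) fun j _ => (hb' j).fun_mul (hD' j)
    have h2 := HasDerivAt.fun_sum (u := Finset.univ) fun j _ => (hD' j).fun_pow 2
    have h3 := HasDerivAt.fun_sum (u := Finset.univ) fun j _ => (hb' j).fun_pow 2
    have h4 := (((((hD' i).fun_mul h1).const_mul (-2)).fun_add ((hb' i).fun_mul h2)).fun_sub
      ((hv'.fun_mul (hD' i)).const_mul (∑ j, H j j + k))).fun_sub
      (((h3.const_mul (τ ^ 2)).add_const (τ * k)).fun_mul ((hb' i).fun_mul (hv'.fun_pow 2)))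
    refine h4.congr_deriv ?_
    simp only [hGdef, zero_smul, add_zero, Nat.cast_ofNat, Nat.add_one_sub_one, pow_one]
  have hRint : Integrable (fun x => 2 * ∑ i, ∑ j, H i j * (D i x * D j x) + k * ∑ i, D i x ^ 2
        + (τ ^ 2 * (2 * ∑ i, ∑ j, H i j * (b i x * b j x) - k * ∑ i, b i x ^ 2) - τ * k ^ 2)
          * v x ^ 2) μ :=
    Continuous.integrable_of_hasCompactSupport (by fun_prop)
      (HasCompactSupport.intro hK fun x hx => by simp [hv0 x hx, hD0 _ x hx])
  have hGi : ∀ i, Integrable (G i) μ := fun i =>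
    (hGc i).integrable_of_hasCompactSupport (HasCompactSupport.intro hK (hG0 i))
  have hpt := fun x => cross_term_algebra (fun i => D i x) (fun i => b i x) (fun i j => S i j x) H
    (fun i j => hSsymm i j x) (v x) k τ
  rw [integral_congr_ae (Eventually.of_forall hpt), integral_add hRint
    (integrable_finsetSum _ fun i _ => hGi i), integral_finsetSum _ fun i _ => hGi i]
  rw [Finset.sum_eq_zero fun i _ => hGint i, add_zero]

/-- **Carleman estimate** for the constant coefficient operator `∑ Xᵢ²`, with a weight `φ` whose
second derivatives `Hᵢⱼ = Xᵢ Xⱼ φ` are constant and which is pseudoconvex on `K`. Here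
`bᵢ = Xᵢ φ`, `Wᵢ = Xᵢ w` and `Qᵢⱼ = Xᵢ Xⱼ w`. -/
theorem carleman_estimate [FiniteDimensional ℝ E] [MeasurableSpace E] [BorelSpace E]
    {μ : Measure E} [μ.IsAddHaarMeasure] {ι : Type*} [Fintype ι] {X : ι → E}
    {φ : E → ℝ} {b : ι → E → ℝ} {H : ι → ι → ℝ} {K : Set E} {k c₀ M : ℝ}
    (hK : IsCompact K) (hφ : Continuous φ) (hb : ∀ i, Continuous (b i))
    (hφd : ∀ i x, HasLineDerivAt ℝ φ (b i x) x (X i))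
    (hbd : ∀ i j x, HasLineDerivAt ℝ (b j) (H i j) x (X i))
    (hHsymm : ∀ i j, H i j = H j i)
    (hk : ∀ d : ι → ℝ, ∑ i, d i ^ 2 ≤ 2 * ∑ i, ∑ j, H i j * (d i * d j) + k * ∑ i, d i ^ 2)
    (hc₀ : 0 < c₀)
    (hbK : ∀ x ∈ K, c₀ ≤ 2 * ∑ i, ∑ j, H i j * (b i x * b j x) - k * ∑ i, b i x ^ 2)
    (hM : 0 ≤ M) (hbM : ∀ x ∈ K, ∑ i, b i x ^ 2 ≤ M) :
    ∃ c > 0, ∃ τ₀ : ℝ, ∀ τ ≥ τ₀, ∀ (w : E → ℝ) (W : ι → E → ℝ) (Q : ι → ι → E → ℝ),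
      Continuous w → (∀ i, Continuous (W i)) → (∀ i j, Continuous (Q i j)) →
      (∀ i x, HasLineDerivAt ℝ w (W i x) x (X i)) →
      (∀ i j x, HasLineDerivAt ℝ (W j) (Q i j x) x (X i)) →
      (∀ i j x, Q i j x = Q j i x) →
      (∀ x ∉ K, w x = 0) → (∀ i, ∀ x ∉ K, W i x = 0) → (∀ i j, ∀ x ∉ K, Q i j x = 0) →
      c * τ * ∫ x, Real.exp (τ * φ x) ^ 2 * (∑ i, W i x ^ 2 + w x ^ 2) ∂μ
        ≤ ∫ x, Real.exp (τ * φ x) ^ 2 * (∑ i, Q i i x) ^ 2 ∂μ := by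
  refine ⟨min 1 (c₀ / (2 * M + 1)), by positivity, max 1 (2 * k ^ 2 / c₀), ?_⟩
  intro τ hτ w W Q hw hW hQ hwd hWd hQsymm hw0 hW0 hQ0
  set c := min 1 (c₀ / (2 * M + 1))
  have hc1 : c ≤ 1 := min_le_left _ _
  have hcM : c * (2 * M + 1) ≤ c₀ := (le_div_iff₀ (by positivity)).1 (min_le_right _ _)
  have hc : 0 < c := by positivity
  have hτ1 : 1 ≤ τ := (le_max_left _ _).trans hτ
  have hτk : 2 * k ^ 2 ≤ τ * c₀ := (div_le_iff₀ hc₀).1 ((le_max_right _ _).trans hτ)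
  set ex : E → ℝ := fun x => Real.exp (τ * φ x) with hex
  have hexc : Continuous ex := by fun_prop
  have hexd : ∀ i x, HasLineDerivAt ℝ ex (ex x * (τ * b i x)) x (X i) := fun i x => by
    have h := hφd i x
    simp only [HasLineDerivAt, hex] at h ⊢
    simpa using (h.const_mul τ).exp
  set v : E → ℝ := fun x => ex x * w x with hv
  set D : ι → E → ℝ := fun i x => ex x * (W i x + τ * b i x * w x) with hD
  set S : ι → ι → E → ℝ := fun i j x => ex x * (Q i j x + τ * b i x * W j x + τ * b j x * W i x
    + τ ^ 2 * (b i x * b j x) * w x + τ * H i j * w x) with hS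
  have hvd : ∀ i x, HasLineDerivAt ℝ v (D i x) x (X i) := fun i x => by
    have h1 := hexd i x
    have h2 := hwd i x
    simp only [HasLineDerivAt] at h1 h2 ⊢
    refine (h1.fun_mul h2).congr_deriv ?_
    simp only [hD, zero_smul, add_zero]
    ring
  have hDd : ∀ i j x, HasLineDerivAt ℝ (D j) (S i j x) x (X i) := fun i j x => by
    have h1 := hexd i x
    have h2 := hwd i x
    have h3 := hWd i j x
    have h4 := hbd i j x
    simp only [HasLineDerivAt] at h1 h2 h3 h4 ⊢
    refine (h1.fun_mul (h3.fun_add ((h4.const_mul τ).fun_mul h2))).congr_deriv ?_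
    simp only [hS, zero_smul, add_zero]
    ring
  have key := integral_cross_term (μ := μ) (D := D) (S := S) (v := v) (b := b) (H := H) hK hb
    (fun i => by fun_prop) (fun i j => by fun_prop) (by fun_prop) hbd hvd hDd
    (fun i j x => by simp only [hS, hHsymm i j, hQsymm i j x]; ring)
    (fun x hx => by simp [hv, hw0 x hx]) (fun i x hx => by simp [hD, hw0 x hx, hW0 i x hx])
    (fun i j x hx => by simp [hS, hw0 x hx, hW0 _ x hx, hQ0 i j x hx]) k τ
  set R : E → ℝ := fun x => 2 * ∑ i, ∑ j, H i j * (D i x * D j x) + k * ∑ i, D i x ^ 2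
        + (τ ^ 2 * (2 * ∑ i, ∑ j, H i j * (b i x * b j x) - k * ∑ i, b i x ^ 2) - τ * k ^ 2)
          * v x ^ 2 with hR
  set C : E → ℝ := fun x => (∑ i, S i i x + (τ ^ 2 * ∑ i, b i x ^ 2 + τ * k) * v x)
        * (-2 * ∑ j, b j x * D j x - (∑ i, H i i + k) * v x) with hC
  have hSc : ∀ i j, Continuous (S i j) := fun i j => by fun_prop
  have hDc : ∀ i, Continuous (D i) := fun i => by fun_prop
  have hvc : Continuous v := by fun_prop
  have hRint : Integrable R μ := Continuous.integrable_of_hasCompactSupport (by fun_prop)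
      (HasCompactSupport.intro hK fun x hx => by
        simp [hR, hv, hD, hw0 x hx, hW0 _ x hx])
  have hCint : Integrable C μ := Continuous.integrable_of_hasCompactSupport (by fun_prop)
      (HasCompactSupport.intro hK fun x hx => by
        simp [hC, hv, hD, hw0 x hx, hW0 _ x hx])
  have hLint : Integrable (fun x => ex x ^ 2 * (∑ i, W i x ^ 2 + w x ^ 2)) μ :=
    Continuous.integrable_of_hasCompactSupport (by fun_prop)
      (HasCompactSupport.intro hK fun x hx => by simp [hw0 x hx, hW0 _ x hx])
  have hPint : Integrable (fun x => ex x ^ 2 * (∑ i, Q i i x) ^ 2) μ :=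
    Continuous.integrable_of_hasCompactSupport (by fun_prop)
      (HasCompactSupport.intro hK fun x hx => by simp [hQ0 _ _ x hx])
  have hPC : ∀ x, 2 * τ * C x ≤ ex x ^ 2 * (∑ i, Q i i x) ^ 2 := by
    intro x
    have e1 : ∑ i, S i i x = ex x * (∑ i, Q i i x + 2 * τ * ∑ i, b i x * W i x
        + τ ^ 2 * w x * ∑ i, b i x ^ 2 + τ * w x * ∑ i, H i i) := by
      simp only [hS, Finset.mul_sum, ← Finset.sum_add_distrib]
      exact Finset.sum_congr rfl fun i _ => by ring
    have e2 : ∑ i, b i x * D i x = ex x * (∑ i, b i x * W i x + τ * w x * ∑ i, b i x ^ 2) := by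
      simp only [hD, Finset.mul_sum, ← Finset.sum_add_distrib]
      exact Finset.sum_congr rfl fun i _ => by ring
    have e3 : ex x * ∑ i, Q i i x = (∑ i, S i i x + (τ ^ 2 * ∑ i, b i x ^ 2 + τ * k) * v x)
        + τ * (-2 * ∑ j, b j x * D j x - (∑ i, H i i + k) * v x) := by
      rw [e1, e2]
      ring
    rw [← mul_pow, e3]
    simp only [hC]
    nlinarith [sq_nonneg (∑ i, S i i x + (τ ^ 2 * ∑ i, b i x ^ 2 + τ * k) * v x),
      sq_nonneg (τ * (-2 * ∑ j, b j x * D j x - (∑ i, H i i + k) * v x))]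
  have hRL : ∀ x, c / 2 * (ex x ^ 2 * (∑ i, W i x ^ 2 + w x ^ 2)) ≤ R x := by
    intro x
    by_cases hx : x ∈ K
    · have h1 : ex x ^ 2 * ∑ i, W i x ^ 2 ≤ 2 * ∑ i, D i x ^ 2
          + 2 * τ ^ 2 * v x ^ 2 * ∑ i, b i x ^ 2 := by
        simp only [Finset.mul_sum, ← Finset.sum_add_distrib]
        refine Finset.sum_le_sum fun i _ => ?_
        have : ex x * W i x = D i x - τ * b i x * v x := by simp only [hD, hv]; ring
        rw [← mul_pow, this]
        nlinarith [sq_nonneg (D i x + τ * b i x * v x)]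
      have h2 := hk fun i => D i x
      have h3 := mul_le_mul_of_nonneg_left (hbK x hx)
        (mul_nonneg (sq_nonneg τ) (sq_nonneg (v x)))
      have h4 := mul_le_mul_of_nonneg_left (hbM x hx)
        (mul_nonneg (sq_nonneg τ) (sq_nonneg (v x)))
      have h5 := mul_le_mul_of_nonneg_left hτk
        (mul_nonneg (zero_le_one.trans hτ1) (sq_nonneg (v x)))
      have h6 : v x ^ 2 ≤ τ ^ 2 * v x ^ 2 :=
        le_mul_of_one_le_left (sq_nonneg _) (one_le_pow₀ hτ1)
      have h7 := mul_le_mul_of_nonneg_left hcM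
        (mul_nonneg (sq_nonneg τ) (sq_nonneg (v x)))
      have h8 : c * ∑ i, D i x ^ 2 ≤ ∑ i, D i x ^ 2 :=
        mul_le_of_le_one_left (Finset.sum_nonneg fun i _ => sq_nonneg _) hc1
      have h9 : ex x ^ 2 * (∑ i, W i x ^ 2 + w x ^ 2) ≤ 2 * ∑ i, D i x ^ 2
          + (2 * M + 1) * (τ ^ 2 * v x ^ 2) := by
        have : ex x ^ 2 * w x ^ 2 = v x ^ 2 := by simp only [hv]; ring
        rw [mul_add, this]
        nlinarith
      have h10 := mul_le_mul_of_nonneg_left h9 hc.le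
      simp only [hR]
      nlinarith
    · simp [hR, hv, hD, hw0 x hx, hW0 _ x hx]
  calc c * τ * ∫ x, ex x ^ 2 * (∑ i, W i x ^ 2 + w x ^ 2) ∂μ
      = 2 * τ * ∫ x, c / 2 * (ex x ^ 2 * (∑ i, W i x ^ 2 + w x ^ 2)) ∂μ := by
        rw [integral_const_mul]; ring
    _ ≤ 2 * τ * ∫ x, R x ∂μ := by
        exact mul_le_mul_of_nonneg_left (integral_mono (hLint.const_mul _) hRint hRL)
          (by positivity)
    _ = ∫ x, 2 * τ * C x ∂μ := by rw [← key, integral_const_mul]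
    _ ≤ _ := integral_mono (hCint.const_mul _) hPint hPC

/-- The quadratic weight `⟪e, x - x₀⟫ + β/2 ⟪e, x - x₀⟫² - κ/2 ‖x - x₀‖²`. It serves both as Carleman
weight and as barrier; near `x₀` its superlevel set `{0 ≤ φ}` is strictly convex. -/
noncomputable def quadWeight (e x₀ : E) (β κ : ℝ) (x : E) : ℝ :=
  ⟪e, x - x₀⟫ + β / 2 * ⟪e, x - x₀⟫ ^ 2 - κ / 2 * ‖x - x₀‖ ^ 2

theorem quadWeight_self (e x₀ : E) (β κ : ℝ) : quadWeight e x₀ β κ x₀ = 0 := by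
  simp [quadWeight]

theorem contDiff_quadWeight (e x₀ : E) (β κ : ℝ) {m : WithTop ℕ∞} :
    ContDiff ℝ m (quadWeight e x₀ β κ) := by
  unfold quadWeight
  have h1 : ContDiff ℝ m fun x : E => ⟪e, x - x₀⟫ :=
    contDiff_const.inner ℝ (contDiff_id.sub contDiff_const)
  have h2 : ContDiff ℝ m fun x : E => ‖x - x₀‖ ^ 2 :=
    (contDiff_id.sub contDiff_const).norm_sq ℝ
  exact (h1.add (contDiff_const.mul (h1.pow 2))).sub (contDiff_const.mul h2)

theorem hasFDerivAt_inner_sub (e x₀ x : E) :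
    HasFDerivAt (fun x : E => ⟪e, x - x₀⟫) (innerSL ℝ e) x :=
  ((innerSL ℝ e).hasFDerivAt.comp x ((hasFDerivAt_id x).sub_const x₀)).congr_fderiv
    (by ext; simp)

theorem hasFDerivAt_quadWeight (e x₀ : E) (β κ : ℝ) (x : E) :
    HasFDerivAt (quadWeight e x₀ β κ)
      ((1 + β * ⟪e, x - x₀⟫) • innerSL ℝ e - κ • innerSL ℝ (x - x₀)) x := by
  have h1 := hasFDerivAt_inner_sub e x₀ x
  have h2 := ((hasFDerivAt_id x).sub_const x₀).norm_sq
  refine ((h1.fun_add ((h1.pow 2).const_mul (β / 2))).fun_sub (h2.const_mul (κ / 2))).congr_fderiv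
    ?_
  ext y
  simp
  ring

theorem fderiv_quadWeight (e x₀ : E) (β κ : ℝ) : fderiv ℝ (quadWeight e x₀ β κ) =
    fun x => (1 + β * ⟪e, x - x₀⟫) • innerSL ℝ e - κ • innerSL ℝ (x - x₀) :=
  funext fun x => (hasFDerivAt_quadWeight e x₀ β κ x).fderiv

theorem hasFDerivAt_fderiv_quadWeight_apply (e x₀ : E) (β κ : ℝ) (x η : E) :
    HasFDerivAt (fun x => fderiv ℝ (quadWeight e x₀ β κ) x η)
      ((β * ⟪e, η⟫) • innerSL ℝ e - κ • innerSL ℝ η) x := by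
  have h1 := hasFDerivAt_inner_sub e x₀ x
  have h2 := hasFDerivAt_inner_sub η x₀ x
  have h : (fun x => fderiv ℝ (quadWeight e x₀ β κ) x η)
      = fun x => (1 + β * ⟪e, x - x₀⟫) * ⟪e, η⟫ - κ * ⟪η, x - x₀⟫ := by
    funext x
    simp [fderiv_quadWeight, real_inner_comm η, inner_sub_right]
  rw [h]
  refine ((((h1.const_mul β).const_add 1).mul_const ⟪e, η⟫).fun_sub
    (h2.const_mul κ)).congr_fderiv ?_
  ext y
  simp
  ring

theorem hasFDerivAt_fderiv_apply {f : E → ℝ} {x : E} (hf : ContDiffAt ℝ 2 f x) (η : E) :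
    HasFDerivAt (fun x => fderiv ℝ f x η) ((fderiv ℝ (fderiv ℝ f) x).flip η) x := by
  have h := ((hf.fderiv_right (m := 1) (by norm_num)).differentiableAt
    (by norm_num)).hasFDerivAt
  exact (((ContinuousLinearMap.apply ℝ ℝ η).hasFDerivAt).comp x h).congr_fderiv (by ext; simp)

theorem fderiv_fderiv_quadWeight (e x₀ : E) (β κ : ℝ) (x ξ η : E) :
    fderiv ℝ (fderiv ℝ (quadWeight e x₀ β κ)) x ξ η = β * ⟪e, ξ⟫ * ⟪e, η⟫ - κ * ⟪ξ, η⟫ := by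
  have h1 := hasFDerivAt_fderiv_apply (contDiff_quadWeight e x₀ β κ (m := 2)).contDiffAt (x := x) η
  have h2 := DFunLike.congr_fun (h1.unique (hasFDerivAt_fderiv_quadWeight_apply e x₀ β κ x η)) ξ
  simp only [ContinuousLinearMap.flip_apply] at h2
  rw [h2]
  simp [real_inner_comm η]
  ring

/-- Near `x₀`, the superlevel set of the weight lies in the ball touching `x₀` in direction `e`. -/
theorem mem_ball_of_quadWeight_nonneg {e x₀ x : E} {β R r : ℝ} (he : ‖e‖ = 1) (hR : 0 < R)
    (hβ : 0 ≤ β) (hβr : β * r ≤ 1) (hx0 : x ≠ x₀) (hxr : ‖x - x₀‖ ≤ r)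
    (h : 0 ≤ quadWeight e x₀ β (2 / R) x) : x ∈ ball (x₀ + R • e) R := by
  have hpos : 0 < ‖x - x₀‖ := norm_pos_iff.2 (sub_ne_zero.2 hx0)
  rw [mem_ball, dist_eq_norm]
  have e1 : x - (x₀ + R • e) = (x - x₀) - R • e := by abel
  rw [e1]
  refine lt_of_pow_lt_pow_left₀ 2 hR.le ?_
  rw [norm_sub_sq_real, inner_smul_right, norm_smul, he, real_inner_comm, Real.norm_eq_abs,
    mul_one, sq_abs]
  have hs : |⟪e, x - x₀⟫| ≤ ‖x - x₀‖ := by simpa [he] using abs_real_inner_le_norm e (x - x₀)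
  unfold quadWeight at h
  set s := ⟪e, x - x₀⟫
  set y := ‖x - x₀‖
  have hβs : |β * s| ≤ 1 := by
    rw [abs_mul, abs_of_nonneg hβ]
    exact (mul_le_mul_of_nonneg_left (hs.trans hxr) hβ).trans hβr
  obtain ⟨h1, h2⟩ := abs_le.1 hβs
  have h3 : y ^ 2 ≤ R * (s * (1 + β * s / 2)) := by
    have h' : 2 / R / 2 * y ^ 2 = y ^ 2 / R := by field_simp
    rw [h'] at h
    have : y ^ 2 / R ≤ s * (1 + β * s / 2) := by nlinarith
    rwa [div_le_iff₀ hR, mul_comm] at this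
  have hspos : 0 < s := by
    by_contra hcon
    push Not at hcon
    have : s * (1 + β * s / 2) ≤ 0 := mul_nonpos_of_nonpos_of_nonneg hcon (by linarith)
    nlinarith [pow_pos hpos 2]
  have h4 : R * (s * (1 + β * s / 2)) ≤ R * (s * (3 / 2)) := by gcongr; linarith
  nlinarith [mul_pos hR hspos]

/-- The quadratic form of the weight's Hessian on a family of vectors. -/
theorem sum_quadWeight_hessian {ι : Type*} [Fintype ι] (X : ι → E) (e : E) (β κ : ℝ) (d : ι → ℝ) :
    ∑ i, ∑ j, (β * ⟪e, X i⟫ * ⟪e, X j⟫ - κ * ⟪X i, X j⟫) * (d i * d j)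
      = β * (∑ i, ⟪e, X i⟫ * d i) ^ 2 - κ * ‖∑ i, d i • X i‖ ^ 2 := by
  rw [← real_inner_self_eq_norm_sq, sum_inner, pow_two, Finset.sum_mul_sum, Finset.mul_sum,
    Finset.mul_sum, ← Finset.sum_sub_distrib]
  refine Finset.sum_congr rfl fun i _ => ?_
  rw [inner_sum, Finset.mul_sum, Finset.mul_sum, ← Finset.sum_sub_distrib]
  refine Finset.sum_congr rfl fun j _ => ?_
  rw [inner_smul_left, inner_smul_right]
  simp only [conj_trivial]
  ring

theorem norm_sum_smul_sq_le {ι : Type*} [Fintype ι] (X : ι → E) (d : ι → ℝ) :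
    ‖∑ i, d i • X i‖ ^ 2 ≤ (∑ i, ‖X i‖ ^ 2) * ∑ i, d i ^ 2 := by
  have h1 : ‖∑ i, d i • X i‖ ≤ ∑ i, ‖X i‖ * |d i| :=
    (norm_sum_le _ _).trans_eq (Finset.sum_congr rfl fun i _ => by
      rw [norm_smul, Real.norm_eq_abs, mul_comm])
  calc ‖∑ i, d i • X i‖ ^ 2 ≤ (∑ i, ‖X i‖ * |d i|) ^ 2 := by gcongr
    _ ≤ (∑ i, ‖X i‖ ^ 2) * ∑ i, |d i| ^ 2 := Finset.sum_mul_sq_le_sq_mul_sq _ _ _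
    _ = _ := by simp only [sq_abs]

/-- For large `β` the quadratic weight satisfies a Carleman estimate near `x₀`. -/
theorem exists_carleman_quadWeight [FiniteDimensional ℝ E] [MeasurableSpace E] [BorelSpace E]
    (μ : Measure E) [μ.IsAddHaarMeasure] {ι : Type*} [Fintype ι] (X : ι → E) {e : E} (x₀ : E)
    {κ : ℝ} (hκ : 0 ≤ κ) (he : 0 < ∑ i, ⟪e, X i⟫ ^ 2) :
    ∃ β ≥ 0, ∃ r₀ > 0, ∀ r ≤ r₀, ∃ c > 0, ∃ τ₀ : ℝ, ∀ τ ≥ τ₀, ∀ w : E → ℝ, ContDiff ℝ 2 w →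
      (∀ x ∉ closedBall x₀ r, w x = 0) →
      c * τ * ∫ x, Real.exp (τ * quadWeight e x₀ β κ x) ^ 2
          * (∑ i, fderiv ℝ w x (X i) ^ 2 + w x ^ 2) ∂μ
        ≤ ∫ x, Real.exp (τ * quadWeight e x₀ β κ x) ^ 2
          * (∑ i, fderiv ℝ (fderiv ℝ w) x (X i) (X i)) ^ 2 ∂μ := by
  set N := ∑ i, ⟪e, X i⟫ ^ 2 with hN
  set A := ∑ i, ‖X i‖ ^ 2 with hA
  have hA0 : 0 ≤ A := Finset.sum_nonneg fun i _ => sq_nonneg _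
  set β := (4 * κ * A + 2) / (2 * N) with hβ
  set k := 1 + 2 * κ * A with hk
  set H : ι → ι → ℝ := fun i j => β * ⟪e, X i⟫ * ⟪e, X j⟫ - κ * ⟪X i, X j⟫ with hH
  set b : ι → E → ℝ := fun i x => fderiv ℝ (quadWeight e x₀ β κ) x (X i) with hb
  have hβ0 : 0 ≤ β := by positivity
  have hbd : ∀ j x, HasFDerivAt (b j) ((β * ⟪e, X j⟫) • innerSL ℝ e - κ • innerSL ℝ (X j)) x :=
    fun j x => hasFDerivAt_fderiv_quadWeight_apply e x₀ β κ x (X j)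
  have hbc : ∀ i, Continuous (b i) := fun i =>
    continuous_iff_continuousAt.2 fun x => (hbd i x).continuousAt
  have hb0 : ∀ i, b i x₀ = ⟪e, X i⟫ := fun i => by simp [hb, fderiv_quadWeight]
  have hform : ∀ d : ι → ℝ, β * (∑ i, ⟪e, X i⟫ * d i) ^ 2 - κ * (A * ∑ i, d i ^ 2)
      ≤ ∑ i, ∑ j, H i j * (d i * d j) := fun d => by
    rw [hH, sum_quadWeight_hessian]
    have := mul_le_mul_of_nonneg_left (norm_sum_smul_sq_le X d) hκ
    linarith
  have hpos : N / 2 < 2 * ∑ i, ∑ j, H i j * (b i x₀ * b j x₀) - k * ∑ i, b i x₀ ^ 2 := by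
    have h := hform fun i => b i x₀
    simp only [hb0, ← pow_two, ← hN] at h ⊢
    have h1 : 2 * (β * N ^ 2) = (4 * κ * A + 2) * N := by
      rw [hβ]
      field_simp
    nlinarith
  have hev1 : ∀ᶠ x in 𝓝 x₀,
      N / 2 < 2 * ∑ i, ∑ j, H i j * (b i x * b j x) - k * ∑ i, b i x ^ 2 :=
    ContinuousAt.eventually_lt continuousAt_const
      (Continuous.continuousAt (by fun_prop)) hpos
  have hev2 : ∀ᶠ x in 𝓝 x₀, ∑ i, b i x ^ 2 < N + 1 :=
    ContinuousAt.eventually_lt (Continuous.continuousAt (by fun_prop)) continuousAt_const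
      (by simp only [hb0, ← hN]; linarith)
  obtain ⟨r₀, hr₀, hball⟩ := nhds_basis_closedBall.eventually_iff.1 (hev1.and hev2)
  refine ⟨β, hβ0, r₀, hr₀, fun r hr => ?_⟩
  obtain ⟨c, hc, τ₀, hcar⟩ := carleman_estimate (μ := μ) (X := X) (φ := quadWeight e x₀ β κ)
    (b := b) (H := H) (K := closedBall x₀ r) (k := k) (c₀ := N / 2) (M := N + 1)
    (isCompact_closedBall x₀ r) (contDiff_quadWeight e x₀ β κ (m := 0)).continuous hbc
    (fun i x => by
      simpa [hb] using ((contDiff_quadWeight e x₀ β κ (m := 1)).differentiable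
        (by norm_num) x).hasFDerivAt.hasLineDerivAt (X i))
    (fun i j x => by
      have := (hbd j x).hasLineDerivAt (X i)
      convert! this using 1
      simp [hH, real_inner_comm (X j)]
      ring)
    (fun i j => by simp only [hH, real_inner_comm (X j)]; ring)
    (fun d => by
      have h := hform d
      have h2 : 0 ≤ β * (∑ i, ⟪e, X i⟫ * d i) ^ 2 := by positivity
      nlinarith)
    (by positivity)
    (fun x hx => (hball (closedBall_subset_closedBall hr hx)).1.le) (by positivity)
    (fun x hx => (hball (closedBall_subset_closedBall hr hx)).2.le)
  refine ⟨c, hc, τ₀, fun τ hτ w hw hw0 => ?_⟩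
  have hw1 : ContDiff ℝ 1 (fderiv ℝ w) := hw.fderiv_right (by norm_num)
  have hw2 : Continuous (fderiv ℝ (fderiv ℝ w)) := hw1.continuous_fderiv (by norm_num)
  have hw1c := hw1.continuous
  have hev : ∀ x ∉ closedBall x₀ r, w =ᶠ[𝓝 x] 0 := fun x hx =>
    eventually_of_mem (isClosed_closedBall.isOpen_compl.mem_nhds hx) hw0
  refine hcar τ hτ w (fun i x => fderiv ℝ w x (X i))
    (fun i j x => fderiv ℝ (fderiv ℝ w) x (X i) (X j)) hw.continuous (fun i => by fun_prop)
    (fun i j => by fun_prop)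
    (fun i x => ((hw.differentiable (by norm_num)) x).hasFDerivAt.hasLineDerivAt (X i))
    (fun i j x => ?_) (fun i j x => ?_) hw0 (fun i x hx => ?_) (fun i j x hx => ?_)
  · simpa using (hasFDerivAt_fderiv_apply hw.contDiffAt (x := x) (X j)).hasLineDerivAt (X i)
  · exact (hw.contDiffAt.isSymmSndFDerivAt (by simp)).eq _ _
  · simp [(hev x hx).fderiv_eq]
  · simp [(hev x hx).fderiv.fderiv_eq]

/-- A continuous function that is negative on a compact set is bounded away from zero there. -/
theorem IsCompact.exists_forall_le_neg {α : Type*} [TopologicalSpace α] {K : Set α}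
    (hK : IsCompact K) {φ : α → ℝ} (hφ : Continuous φ) (h : ∀ x ∈ K, φ x < 0) :
    ∃ δ > 0, ∀ x ∈ K, φ x ≤ -δ := by
  rcases K.eq_empty_or_nonempty with rfl | hne
  · exact ⟨1, one_pos, by simp⟩
  · obtain ⟨y, hy, hmax⟩ := hK.exists_isMaxOn hne hφ.continuousOn
    exact ⟨-φ y, by linarith [h y hy], fun x hx => by simpa using hmax hx⟩

/-- Local unique continuation across a sphere for `|∑ Xᵢ² u| ≲ |X u|`: if `u` vanishes in a ball
touching `x₀`, then it vanishes near `x₀`. -/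
theorem eventually_eq_zero_of_ball [FiniteDimensional ℝ E] {ι : Type*} [Fintype ι] {X : ι → E}
    {u : E → ℝ} {x₀ e : E} {R C : ℝ} (he : ‖e‖ = 1) (hR : 0 < R)
    (heX : 0 < ∑ i, ⟪e, X i⟫ ^ 2) (hu : ∀ᶠ x in 𝓝 x₀, ContDiffAt ℝ 2 u x)
    (hC : ∀ᶠ x in 𝓝 x₀, (∑ i, fderiv ℝ (fderiv ℝ u) x (X i) (X i)) ^ 2
      ≤ C * ∑ i, fderiv ℝ u x (X i) ^ 2)
    (hzero : ∀ x ∈ ball (x₀ + R • e) R, u x = 0) : ∀ᶠ x in 𝓝 x₀, u x = 0 := by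
  borelize E
  set μ : Measure E := Measure.addHaar
  obtain ⟨β, hβ, r₀, hr₀, hcar⟩ := exists_carleman_quadWeight μ X x₀ (κ := 2 / R) (by positivity) heX
  obtain ⟨r₁, hr₁, hball⟩ := nhds_basis_closedBall.eventually_iff.1 (hu.and hC)
  set r := min (min r₀ r₁) (1 / (β + 1)) with hrdef
  have hr : 0 < r := by positivity
  have hβr : β * r ≤ 1 := by
    have : r ≤ 1 / (β + 1) := min_le_right _ _
    rw [le_div_iff₀ (by positivity)] at this
    nlinarith
  have hrr₁ : r ≤ r₁ := (min_le_left _ _).trans (min_le_right _ _)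
  obtain ⟨c, hc, τ₀, hest⟩ := hcar r ((min_le_left _ _).trans (min_le_left _ _))
  set φ := quadWeight e x₀ β (2 / R)
  have hφc : Continuous φ := (contDiff_quadWeight e x₀ β (2 / R) (m := 0)).continuous
  let χ : ContDiffBump x₀ := ⟨r / 2, r, by positivity, by linarith⟩
  set w : E → ℝ := fun x => χ x * u x with hw
  have hK := isCompact_closedBall x₀ r
  have hw0 : ∀ x ∉ closedBall x₀ r, w x = 0 := fun x hx => by
    have : χ x = 0 := χ.zero_of_le_dist (by simpa using (not_le.1 (mt mem_closedBall.2 hx)).le)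
    simp [hw, this]
  have hw0e : ∀ x ∉ closedBall x₀ r, w =ᶠ[𝓝 x] 0 := fun x hx =>
    eventually_of_mem (isClosed_closedBall.isOpen_compl.mem_nhds hx) hw0
  have hwu : ∀ x ∈ ball x₀ (r / 2), w =ᶠ[𝓝 x] u := fun x hx =>
    eventually_of_mem (isOpen_ball.mem_nhds hx) fun y hy => by
      have : χ y = 1 := χ.one_of_mem_closedBall (ball_subset_closedBall hy)
      simp [hw, this]
  have hwball : ∀ x ∈ ball (x₀ + R • e) R, w =ᶠ[𝓝 x] 0 := fun x hx =>
    eventually_of_mem (isOpen_ball.mem_nhds hx) fun y hy => by simp [hw, hzero y hy]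
  have hwsm : ContDiff ℝ 2 w := contDiff_iff_contDiffAt.2 fun x => by
    by_cases hx : x ∈ closedBall x₀ r
    · exact χ.contDiffAt.mul (hball (closedBall_subset_closedBall hrr₁ hx)).1
    · exact contDiffAt_const.congr_of_eventuallyEq (hw0e x hx)
  set L : E → ℝ := fun x => ∑ i, fderiv ℝ (fderiv ℝ w) x (X i) (X i) with hL
  set G : E → ℝ := fun x => ∑ i, fderiv ℝ w x (X i) ^ 2 with hG
  have hw1 : ContDiff ℝ 1 (fderiv ℝ w) := hwsm.fderiv_right (by norm_num)
  have hw2 : Continuous (fderiv ℝ (fderiv ℝ w)) := hw1.continuous_fderiv (by norm_num)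
  have hw1c := hw1.continuous
  have hwc := hwsm.continuous
  have hLc : Continuous L := by fun_prop
  have hGc : Continuous G := by fun_prop
  have hL0 : ∀ x, w =ᶠ[𝓝 x] 0 → L x = 0 := fun x hx => by simp [hL, hx.fderiv.fderiv_eq]
  have hG0 : ∀ x, w =ᶠ[𝓝 x] 0 → G x = 0 := fun x hx => by simp [hG, hx.fderiv_eq]
  have hGnn : ∀ x, 0 ≤ G x := fun x => Finset.sum_nonneg fun i _ => sq_nonneg _
  obtain ⟨N, hN⟩ := hK.exists_bound_of_continuousOn (f := fun x => L x ^ 2) (by fun_prop)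
  set A : Set E := (closedBall x₀ r \ ball x₀ (r / 2)) \ ball (x₀ + R • e) R with hA
  have hAc : IsCompact A := (hK.diff isOpen_ball).diff isOpen_ball
  obtain ⟨δ, hδ, hφA⟩ := hAc.exists_forall_le_neg hφc fun x hx => by
    by_contra hcon
    refine hx.2 (mem_ball_of_quadWeight_nonneg he hR hβ hβr ?_ ?_ (not_lt.1 hcon))
    · rintro rfl
      exact hx.1.2 (mem_ball_self (by positivity))
    · simpa [dist_eq_norm] using hx.1.1
  set C' := max C 0
  set m : ℝ := |N| * μ.real (closedBall x₀ r) with hm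
  have hpt : ∀ τ ≥ (0 : ℝ), ∀ x, Real.exp (τ * φ x) ^ 2 * L x ^ 2
      ≤ C' * (Real.exp (τ * φ x) ^ 2 * G x)
        + (closedBall x₀ r).indicator (fun _ => Real.exp (-(τ * δ)) ^ 2 * |N|) x := by
    intro τ hτ x
    have hC'G : 0 ≤ C' * (Real.exp (τ * φ x) ^ 2 * G x) := by
      have := hGnn x
      positivity
    have hind : 0 ≤ (closedBall x₀ r).indicator (fun _ => Real.exp (-(τ * δ)) ^ 2 * |N|) x :=
      indicator_nonneg (fun _ _ => by positivity) x
    by_cases hxK : x ∈ closedBall x₀ r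
    · by_cases hx2 : x ∈ ball x₀ (r / 2)
      · have h1 : L x ^ 2 ≤ C' * G x := by
          have h := (hball (closedBall_subset_closedBall hrr₁ hxK)).2
          rw [← (hwu x hx2).fderiv_eq, ← (hwu x hx2).fderiv.fderiv_eq] at h
          exact h.trans (mul_le_mul_of_nonneg_right (le_max_left _ _) (hGnn x))
        have h2 := mul_le_mul_of_nonneg_left h1 (sq_nonneg (Real.exp (τ * φ x)))
        linarith
      · by_cases hx3 : x ∈ ball (x₀ + R • e) R
        · rw [hL0 x (hwball x hx3)]
          simpa using add_nonneg hC'G hind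
        · have h1 := hφA x ⟨⟨hxK, hx2⟩, hx3⟩
          have h2 : L x ^ 2 ≤ |N| := (le_abs_self _).trans ((hN x hxK).trans (le_abs_self N))
          rw [indicator_of_mem hxK]
          have h3 : Real.exp (τ * φ x) ^ 2 * L x ^ 2 ≤ Real.exp (-(τ * δ)) ^ 2 * |N| := by
            gcongr
            nlinarith
          linarith
    · rw [hL0 x (hw0e x hxK)]
      simpa using add_nonneg hC'G hind
  set J : E → ℝ := fun x => max (φ x + δ) 0 * w x ^ 2 with hJ
  have hJc : Continuous J := by fun_prop
  have hJs : HasCompactSupport J := HasCompactSupport.intro hK fun x hx => by simp [hJ, hw0 x hx]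
  have hJint := hJc.integrable_of_hasCompactSupport (μ := μ) hJs
  have hbound : ∀ τ ≥ max (max τ₀ 1) (C' / c), c * τ * ∫ x, J x ∂μ ≤ m := by
    intro τ hτ
    have hτ₀ : τ₀ ≤ τ := (le_max_left _ _).trans ((le_max_left _ _).trans hτ)
    have hτ1 : 1 ≤ τ := (le_max_right _ _).trans ((le_max_left _ _).trans hτ)
    have hτC : C' ≤ c * τ := by
      have := (le_max_right _ _).trans hτ
      rwa [div_le_iff₀' hc] at this
    set ex : E → ℝ := fun x => Real.exp (τ * φ x) with hex
    have hexc : Continuous ex := by fun_prop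
    have hGint : Integrable (fun x => ex x ^ 2 * G x) μ :=
      Continuous.integrable_of_hasCompactSupport (by fun_prop)
        (HasCompactSupport.intro hK fun x hx => by simp [hG0 x (hw0e x hx)])
    have hwint : Integrable (fun x => ex x ^ 2 * w x ^ 2) μ :=
      Continuous.integrable_of_hasCompactSupport (by fun_prop)
        (HasCompactSupport.intro hK fun x hx => by simp [hw0 x hx])
    have hLint : Integrable (fun x => ex x ^ 2 * L x ^ 2) μ :=
      Continuous.integrable_of_hasCompactSupport (by fun_prop)
        (HasCompactSupport.intro hK fun x hx => by simp [hL0 x (hw0e x hx)])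
    have hindint : Integrable
        ((closedBall x₀ r).indicator fun _ => Real.exp (-(τ * δ)) ^ 2 * |N|) μ :=
      (integrable_indicator_iff isClosed_closedBall.measurableSet).2
        (integrableOn_const hK.measure_lt_top.ne)
    have h1 := hest τ hτ₀ w hwsm hw0
    have h2 := integral_mono hLint ((hGint.const_mul C').add hindint) (hpt τ (by linarith))
    have h2' : ∫ x, ex x ^ 2 * L x ^ 2 ∂μ ≤ C' * ∫ x, ex x ^ 2 * G x ∂μ
        + Real.exp (-(τ * δ)) ^ 2 * m := by
      refine h2.trans_eq ?_
      simp only [Pi.add_apply]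
      rw [integral_add (hGint.const_mul C') hindint, integral_const_mul,
        integral_indicator isClosed_closedBall.measurableSet, setIntegral_const, hm, smul_eq_mul]
      ring
    have h3 : ∫ x, ex x ^ 2 * (G x + w x ^ 2) ∂μ
        = ∫ x, ex x ^ 2 * G x ∂μ + ∫ x, ex x ^ 2 * w x ^ 2 ∂μ := by
      rw [← integral_add hGint hwint]
      simp only [mul_add]
    have h4 : 0 ≤ ∫ x, ex x ^ 2 * G x ∂μ :=
      integral_nonneg fun x => mul_nonneg (sq_nonneg _) (hGnn x)
    have h5 : c * τ * ∫ x, ex x ^ 2 * w x ^ 2 ∂μ ≤ Real.exp (-(τ * δ)) ^ 2 * m := by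
      have h6 := h1.trans h2'
      rw [h3, mul_add] at h6
      have := mul_le_mul_of_nonneg_right hτC h4
      linarith
    have hexp : Real.exp (τ * δ) ^ 2 * Real.exp (-(τ * δ)) ^ 2 = 1 := by
      rw [← mul_pow, ← Real.exp_add]
      simp
    have h7 : ∫ x, J x ∂μ ≤ Real.exp (τ * δ) ^ 2 * ∫ x, ex x ^ 2 * w x ^ 2 ∂μ := by
      rw [← integral_const_mul]
      refine integral_mono hJint (hwint.const_mul _) fun x => ?_
      have h8 : max (φ x + δ) 0 ≤ Real.exp (τ * δ) ^ 2 * ex x ^ 2 := by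
        rw [hex, ← mul_pow, ← Real.exp_add, ← Real.exp_nat_mul]
        refine max_le ?_ (Real.exp_pos _).le
        rcases le_total (φ x + δ) 0 with hneg | hnn
        · exact hneg.trans (Real.exp_pos _).le
        · refine le_trans ?_ (Real.add_one_le_exp _)
          push_cast
          nlinarith
      simpa only [hJ, mul_assoc] using mul_le_mul_of_nonneg_right h8 (sq_nonneg (w x))
    calc c * τ * ∫ x, J x ∂μ
        ≤ c * τ * (Real.exp (τ * δ) ^ 2 * ∫ x, ex x ^ 2 * w x ^ 2 ∂μ) :=
          mul_le_mul_of_nonneg_left h7 (by positivity)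
      _ = Real.exp (τ * δ) ^ 2 * (c * τ * ∫ x, ex x ^ 2 * w x ^ 2 ∂μ) := by ring
      _ ≤ Real.exp (τ * δ) ^ 2 * (Real.exp (-(τ * δ)) ^ 2 * m) := by gcongr
      _ = m := by rw [← mul_assoc, hexp, one_mul]
  have hJ0 : ∀ x, J x = 0 := by
    by_contra hcon
    push Not at hcon
    obtain ⟨y, hy⟩ := hcon
    have hpos : 0 < ∫ x, J x ∂μ := hJc.integral_pos_of_hasCompactSupport_nonneg_nonzero hJs
      (fun x => mul_nonneg (le_max_right _ _) (sq_nonneg _)) hy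
    set I := ∫ x, J x ∂μ
    have := hbound (max (max (max τ₀ 1) (C' / c)) ((m + 1) / (c * I))) (le_max_left _ _)
    have h2 : (m + 1) / (c * I) ≤ max (max (max τ₀ 1) (C' / c)) ((m + 1) / (c * I)) :=
      le_max_right _ _
    rw [div_le_iff₀ (by positivity)] at h2
    linarith
  have hφ0 : ∀ᶠ x in 𝓝 x₀, -δ < φ x :=
    continuousAt_const.eventually_lt hφc.continuousAt (by simpa [φ, quadWeight_self] using hδ)
  filter_upwards [hφ0, hwu x₀ (mem_ball_self (by positivity))] with x hx hxu
  have h := hJ0 x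
  rw [← hxu]
  simp only [hJ, mul_eq_zero] at h
  rcases h with h | h
  · rw [max_eq_left (by linarith)] at h
    linarith
  · exact pow_eq_zero_iff (two_ne_zero) |>.1 h

/-- A closed set is touched by a ball centred at any given point outside it. -/
theorem IsClosed.exists_touching_ball [FiniteDimensional ℝ E] {S : Set E} (hS : IsClosed S)
    {y z : E} (hy : y ∈ S) (hz : z ∉ S) :
    ∃ x₀ ∈ S, ∃ e : E, ‖e‖ = 1 ∧ ∃ R > 0, R ≤ dist z y ∧ x₀ + R • e = z ∧ dist x₀ z = R ∧
      ∀ x ∈ ball z R, x ∉ S := by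
  have : ProperSpace E := FiniteDimensional.proper ℝ E
  obtain ⟨x₀, hx₀, hd⟩ := hS.exists_infDist_eq_dist ⟨y, hy⟩ z
  have hne : z - x₀ ≠ 0 := sub_ne_zero.2 fun h => hz (h ▸ hx₀)
  have hpos : 0 < dist z x₀ := by rw [dist_eq_norm]; exact norm_pos_iff.2 hne
  refine ⟨x₀, hx₀, (dist z x₀)⁻¹ • (z - x₀), ?_, dist z x₀, hpos, ?_, ?_, dist_comm _ _, ?_⟩
  · rw [norm_smul, norm_inv, Real.norm_of_nonneg hpos.le, ← dist_eq_norm,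
      inv_mul_cancel₀ hpos.ne']
  · rw [← hd]
    exact infDist_le_dist_of_mem hy
  · rw [smul_smul, mul_inv_cancel₀ hpos.ne', one_smul]
    abel
  · intro x hx hxS
    have := infDist_le_dist_of_mem (x := z) hxS
    rw [mem_ball, dist_comm] at hx
    linarith

/-- **Weak unique continuation** for the differential inequality `|∑ Xᵢ² u| ≲ |X u|`. -/
theorem eqOn_zero_of_eventually_eq_zero [FiniteDimensional ℝ E] {ι : Type*} [Fintype ι] {X : ι → E}
    {u : E → ℝ} {D : Set E} (hD : IsOpen D) (hDc : IsPreconnected D)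
    (hX : ∀ e : E, ‖e‖ = 1 → 0 < ∑ i, ⟪e, X i⟫ ^ 2) (hu : ∀ x ∈ D, ContDiffAt ℝ 2 u x)
    (hC : ∀ x₀ ∈ D, ∃ C : ℝ, ∀ᶠ x in 𝓝 x₀, (∑ i, fderiv ℝ (fderiv ℝ u) x (X i) (X i)) ^ 2
      ≤ C * ∑ i, fderiv ℝ u x (X i) ^ 2)
    {p : E} (hp : p ∈ D) (hup : ∀ᶠ x in 𝓝 p, u x = 0) : ∀ x ∈ D, u x = 0 := by
  set Z : Set E := {x | ∀ᶠ y in 𝓝 x, u y = 0} with hZ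
  have hZo : IsOpen Z := isOpen_setOfPred_eventually_nhds
  suffices h : D ⊆ Z from fun x hx => (h hx).self_of_nhds
  refine hDc.subset_of_closure_inter_subset hZo ⟨p, hp, hup⟩ ?_
  rintro y ⟨hyZ, hyD⟩
  by_contra hy
  obtain ⟨ρ, hρ, hball⟩ := Metric.isOpen_iff.1 hD y hyD
  obtain ⟨z, hz, hyz⟩ := Metric.mem_closure_iff.1 hyZ (ρ / 2) (by positivity)
  obtain ⟨x₀, hx₀, e, he, R, hR, hRy, hxz, hdist, hempty⟩ :=
    hZo.isClosed_compl.exists_touching_ball (y := y) (z := z) hy (fun h => h hz)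
  have hx₀D : x₀ ∈ D := hball (by
    rw [mem_ball]
    have := dist_triangle x₀ z y
    rw [dist_comm z y] at this hRy
    linarith)
  obtain ⟨C, hC⟩ := hC x₀ hx₀D
  refine hx₀ (eventually_eq_zero_of_ball he hR (hX e he)
    (eventually_of_mem (hD.mem_nhds hx₀D) hu) hC fun x hx => ?_)
  rw [hxz] at hx
  exact (not_not.1 (hempty x hx) : x ∈ Z).self_of_nhds

/-- Second order necessary condition at a local minimum. -/
theorem IsLocalMin.fderiv_fderiv_nonneg {F : E → ℝ} {y : E} (h : IsLocalMin F y)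
    (hF : ContDiffAt ℝ 2 F y) (ξ : E) : 0 ≤ fderiv ℝ (fderiv ℝ F) y ξ ξ := by
  set g : ℝ → ℝ := fun t => F (y + t • ξ) with hg
  have hline : ∀ t : ℝ, HasDerivAt (fun t : ℝ => y + t • ξ) ξ t := fun t => by
    simpa using ((hasDerivAt_id t).smul_const ξ).const_add y
  have hcont : Tendsto (fun t : ℝ => y + t • ξ) (𝓝 0) (𝓝 y) := by
    simpa using (hline 0).continuousAt.tendsto
  have hd : deriv g =ᶠ[𝓝 0] fun t => fderiv ℝ F (y + t • ξ) ξ := by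
    filter_upwards [hcont.eventually (hF.eventually (by simp))] with t ht
    exact ((ht.differentiableAt (by norm_num)).hasFDerivAt.comp_hasDerivAt t (hline t)).deriv
  have hdd : deriv (deriv g) 0 = fderiv ℝ (fderiv ℝ F) y ξ ξ := by
    rw [hd.deriv_eq]
    have h1 := hasFDerivAt_fderiv_apply hF ξ
    have h2 : HasFDerivAt (fun x => fderiv ℝ F x ξ) ((fderiv ℝ (fderiv ℝ F) y).flip ξ)
        (y + (0 : ℝ) • ξ) := by simpa using h1
    exact (h2.comp_hasDerivAt 0 (hline 0)).deriv
  by_contra hcon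
  have hgmin : IsLocalMin g 0 := by
    have : ∀ᶠ t in 𝓝 (0 : ℝ), F y ≤ F (y + t • ξ) := hcont.eventually h
    simpa [IsLocalMin, IsMinFilter, hg] using this
  have hgc : ContinuousAt g 0 := by
    have : ContinuousAt F (y + (0 : ℝ) • ξ) := by simpa using hF.continuousAt
    exact ContinuousAt.comp (f := fun t : ℝ => y + t • ξ) (g := F) this (hline 0).continuousAt
  have hgmax : IsLocalMax g 0 := isLocalMax_of_deriv_deriv_neg (by rw [hdd]; exact not_le.1 hcon)
    hgmin.deriv_eq_zero hgc
  have hconst : g =ᶠ[𝓝 0] fun _ => g 0 := by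
    filter_upwards [hgmin, hgmax] with t h1 h2 using le_antisymm h2 h1
  have hzero : deriv (deriv g) 0 = 0 := by
    rw [hconst.deriv.deriv_eq]
    simp
  rw [hdd] at hzero
  exact hcon hzero.ge

/-- **Hopf lemma**: a nonnegative function with `∑ Xᵢ² u ≤ C |Du|`, positive in a ball touching `x₀`,
is positive at `x₀`. The frame `X` may depend on the point. -/
theorem ne_zero_of_pos_on_ball [FiniteDimensional ℝ E] {ι : Type*} [Fintype ι] {X : E → ι → E}
    {u : E → ℝ} {x₀ e : E} {R C M c : ℝ} (he : ‖e‖ = 1) (hR : 0 < R) (hc : 0 < c)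
    (hu : ∀ᶠ x in 𝓝 x₀, ContDiffAt ℝ 2 u x) (hnn : ∀ᶠ x in 𝓝 x₀, 0 ≤ u x)
    (hM : ∀ᶠ x in 𝓝 x₀, ∑ i, ‖X x i‖ ^ 2 ≤ M)
    (hX : ∀ᶠ x in 𝓝 x₀, c ≤ ∑ i, ⟪e, X x i⟫ ^ 2)
    (hC : ∀ᶠ x in 𝓝 x₀, ∑ i, fderiv ℝ (fderiv ℝ u) x (X x i) (X x i) ≤ C * ‖fderiv ℝ u x‖)
    (hpos : ∀ x ∈ ball (x₀ + R • e) R, 0 < u x) : u x₀ ≠ 0 := by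
  intro hu0
  have : ProperSpace E := FiniteDimensional.proper ℝ E
  obtain ⟨r₁, hr₁, hball⟩ := nhds_basis_closedBall.eventually_iff.1
    (hu.and (hnn.and (hM.and (hX.and hC))))
  have hM0 : 0 ≤ M := (Finset.sum_nonneg fun i _ => sq_nonneg _).trans
    (hball (mem_closedBall_self hr₁.le)).2.2.1
  set κ := 2 / R with hκ
  have hκ0 : 0 < κ := by positivity
  set β := (κ * M + 3 * |C| + 1) / c with hβdef
  have hβ : 0 ≤ β := by positivity
  have hβc : β * c = κ * M + 3 * |C| + 1 := by rw [hβdef]; field_simp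
  set r := min r₁ (1 / (β + κ)) with hrdef
  have hr : 0 < r := by positivity
  have hβκr : (β + κ) * r ≤ 1 := by
    have : r ≤ 1 / (β + κ) := min_le_right _ _
    rwa [le_div_iff₀' (by positivity)] at this
  have hβr : β * r ≤ 1 := by nlinarith
  have hκr : κ * r ≤ 1 := by nlinarith
  replace hball : ∀ x ∈ closedBall x₀ r, _ := fun x hx =>
    hball (closedBall_subset_closedBall (min_le_left _ _) hx)
  set φ := quadWeight e x₀ β κ with hφ
  have hφsm : ContDiff ℝ 2 φ := contDiff_quadWeight e x₀ β κ
  have hφc := hφsm.continuous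
  have huc : ContinuousOn u (closedBall x₀ r) := fun x hx =>
    (hball x hx).1.continuousAt.continuousWithinAt
  have hsub : sphere x₀ r ⊆ closedBall x₀ r := sphere_subset_closedBall
  obtain ⟨ε, hε, hεs⟩ : ∃ ε > 0, ∀ x ∈ sphere x₀ r, 0 < u x - ε * φ x := by
    set A : Set E := sphere x₀ r ∩ {x | 0 ≤ φ x} with hA
    have hAc : IsCompact A := (isCompact_sphere x₀ r).inter_right (isClosed_le continuous_const hφc)
    obtain ⟨B, hB⟩ := (isCompact_sphere x₀ r).exists_bound_of_continuousOn hφc.continuousOn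
    obtain ⟨δ, hδ, hδA⟩ : ∃ δ > 0, ∀ x ∈ A, δ ≤ u x := by
      rcases A.eq_empty_or_nonempty with hAe | hne
      · exact ⟨1, one_pos, by simp [hAe]⟩
      · obtain ⟨y, hy, hmin⟩ := hAc.exists_isMinOn hne (huc.mono fun x hx => hsub hx.1)
        refine ⟨u y, hpos y (mem_ball_of_quadWeight_nonneg he hR hβ hβr ?_ ?_ hy.2), fun x hx =>
          hmin hx⟩
        · rintro rfl
          have := hy.1
          rw [mem_sphere, dist_self] at this
          exact hr.ne this
        · rw [← dist_eq_norm]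
          exact (mem_sphere.1 hy.1).le
    refine ⟨δ / (|B| + 1), by positivity, fun x hx => ?_⟩
    by_cases hxφ : 0 ≤ φ x
    · have h1 := hδA x ⟨hx, hxφ⟩
      have h2 : φ x < |B| + 1 := by
        have := (le_abs_self (φ x)).trans ((hB x hx).trans (le_abs_self B))
        linarith
      have h3 : δ / (|B| + 1) * φ x < δ / (|B| + 1) * (|B| + 1) := by gcongr
      rw [div_mul_cancel₀ _ (by positivity)] at h3
      linarith
    · have h1 := (hball x (hsub hx)).2.1
      have h2 : δ / (|B| + 1) * φ x < 0 := mul_neg_of_pos_of_neg (by positivity) (not_le.1 hxφ)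
      linarith
  set F : E → ℝ := fun x => u x - ε * φ x with hF
  obtain ⟨y, hy, hmin⟩ := (isCompact_closedBall x₀ r).exists_isMinOn
    ⟨x₀, mem_closedBall_self hr.le⟩ (huc.sub (hφc.const_mul ε).continuousOn)
  have hFx₀ : F x₀ = 0 := by simp [hF, hu0, hφ, quadWeight_self]
  have hyF : F y ≤ 0 := hFx₀ ▸ hmin (mem_closedBall_self hr.le)
  have hyball : y ∈ ball x₀ r := by
    rcases (mem_closedBall.1 hy).lt_or_eq with h | h
    · exact h
    · exact absurd (hεs y h) (not_lt.2 hyF)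
  obtain ⟨huy, -, hMy, hXy, hCy⟩ := hball y hy
  have hlm : IsLocalMin F y :=
    hmin.isLocalMin (mem_of_superset (isOpen_ball.mem_nhds hyball) ball_subset_closedBall)
  have hFsm : ContDiffAt ℝ 2 F y := huy.sub (contDiffAt_const.mul hφsm.contDiffAt)
  have hfd : ∀ x, ContDiffAt ℝ 2 u x → fderiv ℝ F x = fderiv ℝ u x - ε • fderiv ℝ φ x :=
    fun x hx => ((hx.differentiableAt (by norm_num)).hasFDerivAt.fun_sub
      ((hφsm.differentiable (by norm_num) x).hasFDerivAt.const_mul ε)).fderiv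
  have hgrad : fderiv ℝ u y = ε • fderiv ℝ φ y :=
    sub_eq_zero.1 ((hfd y huy).symm.trans hlm.fderiv_eq_zero)
  have hhess : fderiv ℝ (fderiv ℝ F) y
      = fderiv ℝ (fderiv ℝ u) y - ε • fderiv ℝ (fderiv ℝ φ) y := by
    have hev : fderiv ℝ F =ᶠ[𝓝 y] fun x => fderiv ℝ u x - ε • fderiv ℝ φ x :=
      (huy.eventually (by simp)).mono hfd
    rw [hev.fderiv_eq]
    have h1 := ((huy.fderiv_right (m := 1) (by norm_num)).differentiableAt
      (by norm_num)).hasFDerivAt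
    have h2 := ((hφsm.contDiffAt.fderiv_right (m := 1) (x₀ := y) (by norm_num)).differentiableAt
      (by norm_num)).hasFDerivAt
    exact (h1.fun_sub (h2.const_smul ε)).fderiv
  have hsum : ε * (β * ∑ i, ⟪e, X y i⟫ ^ 2 - κ * ∑ i, ‖X y i‖ ^ 2)
      ≤ ∑ i, fderiv ℝ (fderiv ℝ u) y (X y i) (X y i) := by
    rw [Finset.mul_sum, Finset.mul_sum, ← Finset.sum_sub_distrib, Finset.mul_sum]
    refine Finset.sum_le_sum fun i _ => ?_
    have h := hlm.fderiv_fderiv_nonneg hFsm (X y i)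
    rw [hhess] at h
    simp only [sub_apply, smul_apply, smul_eq_mul, hφ,
      fderiv_fderiv_quadWeight, real_inner_self_eq_norm_sq] at h
    nlinarith
  have hnorm : ‖fderiv ℝ φ y‖ ≤ 3 := by
    have hyr : ‖y - x₀‖ ≤ r := by simpa [dist_eq_norm] using hy
    have hin : |⟪e, y - x₀⟫| ≤ r :=
      (by simpa [he] using abs_real_inner_le_norm e (y - x₀) : _ ≤ ‖y - x₀‖).trans hyr
    rw [hφ, fderiv_quadWeight]
    refine (norm_sub_le _ _).trans ?_
    rw [norm_smul, norm_smul, innerSL_apply_norm, innerSL_apply_norm, he, Real.norm_eq_abs,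
      Real.norm_of_nonneg hκ0.le]
    have h1 : |1 + β * ⟪e, y - x₀⟫| ≤ 1 + β * r :=
      (abs_add_le _ _).trans (by
        rw [abs_one, abs_mul, abs_of_nonneg hβ]
        gcongr)
    have h2 : κ * ‖y - x₀‖ ≤ κ * r := by gcongr
    linarith
  have h1 : C * ‖fderiv ℝ u y‖ ≤ ε * (3 * |C|) := by
    rw [hgrad, norm_smul, Real.norm_of_nonneg hε.le]
    calc C * (ε * ‖fderiv ℝ φ y‖) ≤ |C| * (ε * 3) := by
          gcongr
          exact le_abs_self C
      _ = _ := by ring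
  have h2 : 3 * |C| + 1 ≤ β * ∑ i, ⟪e, X y i⟫ ^ 2 - κ * ∑ i, ‖X y i‖ ^ 2 := by
    have h3 := mul_le_mul_of_nonneg_left hXy hβ
    have h4 := mul_le_mul_of_nonneg_left hMy hκ0.le
    linarith
  have h5 := mul_le_mul_of_nonneg_left h2 hε.le
  linarith

/-- **Strong maximum principle** for `∑ Xᵢ² u ≤ C |Du|`. -/
theorem eventually_eq_zero_of_nonneg [FiniteDimensional ℝ E] {ι : Type*} [Fintype ι] {X : E → ι → E}
    {u : E → ℝ} {x₀ : E} {C M c : ℝ} (hc : 0 < c)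
    (hu : ∀ᶠ x in 𝓝 x₀, ContDiffAt ℝ 2 u x) (hnn : ∀ᶠ x in 𝓝 x₀, 0 ≤ u x)
    (hM : ∀ᶠ x in 𝓝 x₀, ∑ i, ‖X x i‖ ^ 2 ≤ M)
    (hX : ∀ᶠ x in 𝓝 x₀, ∀ e : E, ‖e‖ = 1 → c ≤ ∑ i, ⟪e, X x i⟫ ^ 2)
    (hC : ∀ᶠ x in 𝓝 x₀, ∑ i, fderiv ℝ (fderiv ℝ u) x (X x i) (X x i) ≤ C * ‖fderiv ℝ u x‖)
    (hu0 : u x₀ = 0) : ∀ᶠ x in 𝓝 x₀, u x = 0 := by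
  have : ProperSpace E := FiniteDimensional.proper ℝ E
  have hall := hu.and (hnn.and (hM.and (hX.and hC)))
  obtain ⟨ρ, hρ, hball⟩ := nhds_basis_closedBall.eventually_iff.1 hall.eventually_nhds
  refine eventually_of_mem (ball_mem_nhds x₀ (half_pos hρ)) fun z hz => ?_
  by_contra huz
  have huc : ContinuousOn u (closedBall x₀ ρ) := fun x hx =>
    (hball hx).self_of_nhds.1.continuousAt.continuousWithinAt
  obtain ⟨x₁, hx₁, e, he, R, hR, hRy, hxz, hdist, hempty⟩ :=
    (huc.preimage_isClosed_of_isClosed isClosed_closedBall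
      (isClosed_singleton (x := (0 : ℝ)))).exists_touching_ball (y := x₀) (z := z)
      ⟨mem_closedBall_self hρ.le, hu0⟩ (fun h => huz h.2)
  have hz' := mem_ball.1 hz
  have hev := hball hx₁.1
  refine ne_zero_of_pos_on_ball he hR hc (hev.mono fun x h => h.1) (hev.mono fun x h => h.2.1)
    (hev.mono fun x h => h.2.2.1) (hev.mono fun x h => h.2.2.2.1 e he)
    (hev.mono fun x h => h.2.2.2.2) (fun x hx => ?_) hx₁.2
  rw [hxz] at hx
  have hxρ : x ∈ closedBall x₀ ρ := by
    rw [mem_closedBall]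
    have := dist_triangle x z x₀
    rw [mem_ball] at hx
    linarith
  exact lt_of_le_of_ne (hball hxρ).self_of_nhds.2.1 fun h => hempty x hx ⟨hxρ, h.symm⟩
end Carleman

section Translator

variable {n : ℕ}

local notation "𝔼" => EuclideanSpace ℝ (Fin n)

/-- The coefficient operator `B ↦ (1 + |g|²) tr B − B(g, g)` of the translator equation. -/
noncomputable def translatorOp (g : 𝔼) (B : 𝔼 →L[ℝ] 𝔼 →L[ℝ] ℝ) : ℝ :=
  (1 + ‖g‖ ^ 2) * ∑ i, B (EuclideanSpace.single i 1) (EuclideanSpace.single i 1) - B g g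

/-- A frame `X` with `∑ B(Xᵢ, Xᵢ) = translatorOp g B` for symmetric `B`. -/
noncomputable def translatorFrame (g : 𝔼) (i : Fin n) : 𝔼 :=
  √(1 + ‖g‖ ^ 2) • EuclideanSpace.single i 1 - (g i / (1 + √(1 + ‖g‖ ^ 2))) • g

theorem sum_smul_single (g : 𝔼) : ∑ i, g i • EuclideanSpace.single i (1 : ℝ) = g := by
  ext j
  simp [Pi.single_apply]

theorem sum_translatorFrame (g : 𝔼) (B : 𝔼 →L[ℝ] 𝔼 →L[ℝ] ℝ) (hB : ∀ ξ η, B ξ η = B η ξ) :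
    ∑ i, B (translatorFrame g i) (translatorFrame g i) = translatorOp g B := by
  set c := √(1 + ‖g‖ ^ 2) with hc
  have hc2 : c ^ 2 = 1 + ‖g‖ ^ 2 := Real.sq_sqrt (by positivity)
  have hc0 : 0 ≤ c := Real.sqrt_nonneg _
  have hg : ∑ i, g i * B (EuclideanSpace.single i 1) g = B g g := by
    conv_rhs => enter [1]; rw [← sum_smul_single g]
    simp
  have hgg : ∑ i, g i ^ 2 = ‖g‖ ^ 2 := by
    rw [EuclideanSpace.norm_sq_eq]
    simp
  have hterm : ∀ i, B (translatorFrame g i) (translatorFrame g i)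
      = c ^ 2 * B (EuclideanSpace.single i 1) (EuclideanSpace.single i 1)
        - 2 * c / (1 + c) * (g i * B (EuclideanSpace.single i 1) g)
        + g i ^ 2 * (B g g / (1 + c) ^ 2) := by
    intro i
    simp only [translatorFrame, ← hc, map_sub, map_smul, sub_apply, smul_apply, smul_eq_mul]
    rw [hB g (EuclideanSpace.single i 1)]
    field_simp
    ring
  simp only [hterm, Finset.sum_add_distrib, Finset.sum_sub_distrib, ← Finset.mul_sum,
    ← Finset.sum_mul, hg, hgg, translatorOp, ← hc2]
  have : ‖g‖ ^ 2 = c ^ 2 - 1 := by linarith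
  rw [this]
  field_simp
  ring

theorem sum_inner_translatorFrame_sq (g e : 𝔼) :
    ∑ i, ⟪e, translatorFrame g i⟫ ^ 2 = (1 + ‖g‖ ^ 2) * ‖e‖ ^ 2 - ⟪e, g⟫ ^ 2 := by
  have h := sum_translatorFrame g ((innerSL ℝ e).smulRight (innerSL ℝ e))
    (fun ξ η => by simp [mul_comm])
  simpa [translatorOp, ← sq, EuclideanSpace.inner_single_right, EuclideanSpace.norm_sq_eq e]
    using h

theorem norm_sq_le_sum_inner_translatorFrame_sq (g e : 𝔼) :
    ‖e‖ ^ 2 ≤ ∑ i, ⟪e, translatorFrame g i⟫ ^ 2 := by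
  rw [sum_inner_translatorFrame_sq]
  have h := abs_real_inner_le_norm e g
  have h2 : ⟪e, g⟫ ^ 2 ≤ (‖e‖ * ‖g‖) ^ 2 := sq_le_sq' (by linarith [neg_abs_le ⟪e, g⟫])
    ((le_abs_self _).trans h)
  nlinarith

theorem sum_norm_translatorFrame_sq_le (g : 𝔼) :
    ∑ i, ‖translatorFrame g i‖ ^ 2 ≤ n * (1 + ‖g‖ ^ 2) := by
  have h : ∑ i, ⟪translatorFrame g i, translatorFrame g i⟫
      = (1 + ‖g‖ ^ 2) * ∑ i : Fin n, ⟪(EuclideanSpace.single i 1 : 𝔼), EuclideanSpace.single i 1⟫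
        - ⟪g, g⟫ :=
    sum_translatorFrame g (innerSL ℝ) fun ξ η => real_inner_comm η ξ
  simp only [real_inner_self_eq_norm_sq] at h
  rw [h]
  simp
  nlinarith [sq_nonneg ‖g‖]

theorem abs_translatorOp_sub_le {g₁ g₂ v' : 𝔼} {B₁ B₂ : 𝔼 →L[ℝ] 𝔼 →L[ℝ] ℝ} {vn M : ℝ}
    (h₁ : translatorOp g₁ B₁ = (vn - ⟪v', g₁⟫) * (1 + ‖g₁‖ ^ 2))
    (h₂ : translatorOp g₂ B₂ = (vn - ⟪v', g₂⟫) * (1 + ‖g₂‖ ^ 2))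
    (hg₁ : ‖g₁‖ ≤ M) (hg₂ : ‖g₂‖ ≤ M) (hB₁ : ‖B₁‖ ≤ M) :
    |translatorOp g₂ (B₂ - B₁)|
      ≤ (2 * M * (|vn| + ‖v'‖ * M) + ‖v'‖ * (1 + M ^ 2) + 2 * M * (n * M) + 2 * M ^ 2)
        * ‖g₂ - g₁‖ := by
  have hM : 0 ≤ M := (norm_nonneg _).trans hg₁
  set δ := ‖g₂ - g₁‖ with hδ
  have hδ0 : 0 ≤ δ := norm_nonneg _
  set S := ∑ i, B₁ (EuclideanSpace.single i 1) (EuclideanSpace.single i 1) with hS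
  have hSle : |S| ≤ n * M := by
    refine (Finset.abs_sum_le_sum_abs _ _).trans ?_
    calc ∑ i : Fin n, |B₁ (EuclideanSpace.single i 1) (EuclideanSpace.single i 1)|
        ≤ ∑ _i : Fin n, M := Finset.sum_le_sum fun i _ => by
          have := B₁.le_opNorm₂ (EuclideanSpace.single i 1) (EuclideanSpace.single i 1)
          simp at this
          exact this.trans hB₁
      _ = n * M := by simp
  have hsq : |‖g₂‖ ^ 2 - ‖g₁‖ ^ 2| ≤ 2 * M * δ := by
    have h := abs_norm_sub_norm_le g₂ g₁
    rw [sq_sub_sq, abs_mul, abs_of_nonneg (by positivity : 0 ≤ ‖g₂‖ + ‖g₁‖)]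
    gcongr
    linarith
  have hin : |⟪v', g₂⟫ - ⟪v', g₁⟫| ≤ ‖v'‖ * δ := by
    rw [← inner_sub_right]
    exact abs_real_inner_le_norm _ _
  have hin₂ : |vn - ⟪v', g₂⟫| ≤ |vn| + ‖v'‖ * M :=
    (abs_sub _ _).trans (by
      gcongr
      exact (abs_real_inner_le_norm _ _).trans (by gcongr))
  have hquad : |B₁ g₂ g₂ - B₁ g₁ g₁| ≤ 2 * M ^ 2 * δ := by
    have : B₁ g₂ g₂ - B₁ g₁ g₁ = B₁ (g₂ - g₁) g₂ + B₁ g₁ (g₂ - g₁) := by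
      simp
    rw [this]
    have e1 : |B₁ (g₂ - g₁) g₂| ≤ M * δ * M :=
      (B₁.le_opNorm₂ _ _).trans (by gcongr)
    have e2 : |B₁ g₁ (g₂ - g₁)| ≤ M * M * δ :=
      (B₁.le_opNorm₂ _ _).trans (by gcongr)
    calc _ ≤ _ := abs_add_le _ _
      _ ≤ M * δ * M + M * M * δ := add_le_add e1 e2
      _ = _ := by ring
  have hg₁M : 1 + ‖g₁‖ ^ 2 ≤ 1 + M ^ 2 := by gcongr
  have key : translatorOp g₂ (B₂ - B₁)
      = (vn - ⟪v', g₂⟫) * (‖g₂‖ ^ 2 - ‖g₁‖ ^ 2) - (⟪v', g₂⟫ - ⟪v', g₁⟫) * (1 + ‖g₁‖ ^ 2)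
        - (‖g₂‖ ^ 2 - ‖g₁‖ ^ 2) * S + (B₁ g₂ g₂ - B₁ g₁ g₁) := by
    have : translatorOp g₂ (B₂ - B₁) = translatorOp g₂ B₂ - ((1 + ‖g₂‖ ^ 2) * S - B₁ g₂ g₂) := by
      simp only [translatorOp, sub_apply, Finset.sum_sub_distrib, hS]
      ring
    rw [this, h₂]
    simp only [translatorOp, ← hS] at h₁
    linear_combination -h₁
  rw [key]
  have t1 : |(vn - ⟪v', g₂⟫) * (‖g₂‖ ^ 2 - ‖g₁‖ ^ 2)| ≤ (|vn| + ‖v'‖ * M) * (2 * M * δ) := by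
    rw [abs_mul]; gcongr
  have t2 : |(⟪v', g₂⟫ - ⟪v', g₁⟫) * (1 + ‖g₁‖ ^ 2)| ≤ ‖v'‖ * δ * (1 + M ^ 2) := by
    rw [abs_mul, abs_of_nonneg (by positivity : 0 ≤ 1 + ‖g₁‖ ^ 2)]; gcongr
  have t3 : |(‖g₂‖ ^ 2 - ‖g₁‖ ^ 2) * S| ≤ 2 * M * δ * (n * M) := by
    rw [abs_mul]; gcongr
  calc _ ≤ _ := (abs_add_le _ _).trans (add_le_add ((abs_sub _ _).trans
        (add_le_add ((abs_sub _ _).trans (add_le_add t1 t2)) t3)) hquad)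
    _ = _ := by ring

theorem gradient_eq_toDual_symm (f : 𝔼 → ℝ) :
    gradient f = fun x => (InnerProductSpace.toDual ℝ 𝔼).symm (fderiv ℝ f x) := rfl

theorem inner_gradient_apply (f : 𝔼 → ℝ) (x ξ : 𝔼) : ⟪gradient f x, ξ⟫ = fderiv ℝ f x ξ := by
  simp [gradient_eq_toDual_symm]

theorem inner_hess {f : 𝔼 → ℝ} {x : 𝔼} (hf : ContDiffAt ℝ 2 f x) (ξ η : 𝔼) :
    ⟪hess f x ξ, η⟫ = fderiv ℝ (fderiv ℝ f) x ξ η := by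
  have h : DifferentiableAt ℝ (fderiv ℝ f) x :=
    (hf.fderiv_right (m := 1) (by norm_num)).differentiableAt (by norm_num)
  have h2 : HasFDerivAt (gradient f) _ x :=
    ((InnerProductSpace.toDual ℝ 𝔼).symm.toContinuousLinearEquiv.toContinuousLinearMap.hasFDerivAt
      (x := fderiv ℝ f x)).comp x h.hasFDerivAt
  rw [hess, h2.fderiv]
  simp

theorem translatorEqAt_iff {f : 𝔼 → ℝ} {x v' : 𝔼} {vn : ℝ} (hf : ContDiffAt ℝ 2 f x) :
    TranslatorEqAt f v' vn x ↔ translatorOp (gradient f x) (fderiv ℝ (fderiv ℝ f) x)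
      = (vn - ⟪v', gradient f x⟫) * (1 + ‖gradient f x‖ ^ 2) := by
  rw [TranslatorEqAt, lap, translatorOp, real_inner_comm]
  simp only [inner_hess hf]

theorem norm_gradient (f : 𝔼 → ℝ) (x : 𝔼) : ‖gradient f x‖ = ‖fderiv ℝ f x‖ := by
  simp [gradient_eq_toDual_symm]

theorem gradient_sub_gradient {f g : 𝔼 → ℝ} {x : 𝔼} (hf : DifferentiableAt ℝ f x)
    (hg : DifferentiableAt ℝ g x) :
    gradient f x - gradient g x = gradient (fun y => f y - g y) x := by
  simp only [gradient_eq_toDual_symm]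
  rw [fderiv_fun_sub hf hg, map_sub]

theorem fderiv_fderiv_sub {f g : 𝔼 → ℝ} {x : 𝔼} (hf : ContDiffAt ℝ 2 f x)
    (hg : ContDiffAt ℝ 2 g x) :
    fderiv ℝ (fderiv ℝ fun y => f y - g y) x
      = fderiv ℝ (fderiv ℝ f) x - fderiv ℝ (fderiv ℝ g) x := by
  have h : fderiv ℝ (fun y => f y - g y) =ᶠ[𝓝 x] fun y => fderiv ℝ f y - fderiv ℝ g y := by
    filter_upwards [hf.eventually (by simp), hg.eventually (by simp)] with y hfy hgy
    exact fderiv_fun_sub (hfy.differentiableAt (by norm_num)) (hgy.differentiableAt (by norm_num))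
  rw [h.fderiv_eq]
  exact fderiv_fun_sub ((hf.fderiv_right (m := 1) (by norm_num)).differentiableAt (by norm_num))
    ((hg.fderiv_right (m := 1) (by norm_num)).differentiableAt (by norm_num))

theorem fderiv_fderiv_symm {f : 𝔼 → ℝ} {x : 𝔼} (hf : ContDiffAt ℝ 2 f x) (ξ η : 𝔼) :
    fderiv ℝ (fderiv ℝ f) x ξ η = fderiv ℝ (fderiv ℝ f) x η ξ :=
  (hf.isSymmSndFDerivAt (by simp)).eq ξ η

/-- Near any point, a `C²` function has bounded first and second derivatives. -/
theorem exists_eventually_norm_gradient_le {f : 𝔼 → ℝ} {x₀ : 𝔼} (hf : ContDiffAt ℝ 2 f x₀) :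
    ∃ M, ∀ᶠ x in 𝓝 x₀, ‖gradient f x‖ ≤ M ∧ ‖fderiv ℝ (fderiv ℝ f) x‖ ≤ M := by
  have h1 : ContDiffAt ℝ 1 (fderiv ℝ f) x₀ := hf.fderiv_right (by norm_num)
  have h2 : ContDiffAt ℝ 0 (fderiv ℝ (fderiv ℝ f)) x₀ := h1.fderiv_right (by norm_num)
  have hc : ContinuousAt (fun x => ‖fderiv ℝ (fderiv ℝ f) x‖) x₀ :=
    ContinuousAt.norm (E := 𝔼 →L[ℝ] 𝔼 →L[ℝ] ℝ) h2.continuousAt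
  refine ⟨max (‖fderiv ℝ f x₀‖ + 1) (‖fderiv ℝ (fderiv ℝ f) x₀‖ + 1), ?_⟩
  filter_upwards [h1.continuousAt.norm.eventually_lt_const (lt_add_one _),
    hc.eventually_lt_const (lt_add_one _)]
    with x hx hx'
  rw [norm_gradient]
  exact ⟨hx.le.trans (le_max_left _ _), hx'.le.trans (le_max_right _ _)⟩

/-- The difference of two solutions of the translator equation satisfies a linear differential
inequality, with the principal part frozen at the gradient of the first solution. -/
theorem exists_eventually_abs_translatorOp_le {f g : 𝔼 → ℝ} {x₀ v' : 𝔼} {vn : ℝ}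
    (hf : ContDiffAt ℝ 2 f x₀) (hg : ContDiffAt ℝ 2 g x₀)
    (htf : ∀ᶠ x in 𝓝 x₀, TranslatorEqAt f v' vn x) (htg : ∀ᶠ x in 𝓝 x₀, TranslatorEqAt g v' vn x) :
    ∃ C, ∀ᶠ x in 𝓝 x₀,
      |translatorOp (gradient f x) (fderiv ℝ (fderiv ℝ fun y => f y - g y) x)|
        ≤ C * ‖fderiv ℝ (fun y => f y - g y) x‖ := by
  obtain ⟨Mf, hMf⟩ := exists_eventually_norm_gradient_le hf
  obtain ⟨Mg, hMg⟩ := exists_eventually_norm_gradient_le hg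
  set M := max Mf Mg
  refine ⟨2 * M * (|vn| + ‖v'‖ * M) + ‖v'‖ * (1 + M ^ 2) + 2 * M * (n * M) + 2 * M ^ 2, ?_⟩
  filter_upwards [hMf, hMg, htf, htg, hf.eventually (by simp), hg.eventually (by simp)]
    with x hxf hxg htfx htgx hfx hgx
  rw [fderiv_fderiv_sub hfx hgx, ← norm_gradient, ← gradient_sub_gradient
    (hfx.differentiableAt (by norm_num)) (hgx.differentiableAt (by norm_num))]
  exact abs_translatorOp_sub_le (M := M) ((translatorEqAt_iff hgx).1 htgx)
    ((translatorEqAt_iff hfx).1 htfx) (hxg.1.trans (le_max_right _ _))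
    (hxf.1.trans (le_max_left _ _)) (hxg.2.trans (le_max_right _ _))

/-- **Strong maximum principle** for translating graphs: two of them which touch at a point, one
lying above the other, coincide near that point. -/
theorem eventually_eq_of_translatorEqAt {f g : 𝔼 → ℝ} {x₀ v' : 𝔼} {vn : ℝ}
    (hf : ContDiffAt ℝ 2 f x₀) (hg : ContDiffAt ℝ 2 g x₀)
    (htf : ∀ᶠ x in 𝓝 x₀, TranslatorEqAt f v' vn x) (htg : ∀ᶠ x in 𝓝 x₀, TranslatorEqAt g v' vn x)
    (hle : ∀ᶠ x in 𝓝 x₀, g x ≤ f x) (h₀ : f x₀ = g x₀) : ∀ᶠ x in 𝓝 x₀, f x = g x := by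
  obtain ⟨C, hC⟩ := exists_eventually_abs_translatorOp_le hf hg htf htg
  obtain ⟨M, hM⟩ := exists_eventually_norm_gradient_le hf
  have hsub := (hf.sub hg).eventually (by simp)
  have key := eventually_eq_zero_of_nonneg (X := fun x => translatorFrame (gradient f x))
    (u := fun y => f y - g y) (x₀ := x₀) (C := C) (M := n * (1 + M ^ 2)) (c := 1) one_pos
    hsub ?_ ?_ ?_ ?_ (sub_eq_zero.2 h₀)
  · filter_upwards [key] with x hx using sub_eq_zero.1 hx
  · filter_upwards [hle] with x hx using sub_nonneg.2 hx
  · filter_upwards [hM] with x hx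
    refine (sum_norm_translatorFrame_sq_le _).trans ?_
    have := hx.1
    gcongr
  · refine .of_forall fun x e he => ?_
    simpa [he] using norm_sq_le_sum_inner_translatorFrame_sq (gradient f x) e
  · filter_upwards [hC, hsub] with x hx hsm
    rw [sum_translatorFrame _ _ (fderiv_fderiv_symm hsm)]
    exact (le_abs_self _).trans hx

theorem hasFDerivAt_inner_add_const (a x : 𝔼) (c : ℝ) :
    HasFDerivAt (fun y => ⟪a, y⟫ + c) (innerSL ℝ a) x :=
  (innerSL ℝ a).hasFDerivAt.add_const c

theorem gradient_inner_add_const (a x : 𝔼) (c : ℝ) :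
    gradient (fun y => ⟪a, y⟫ + c) x = a :=
  ext_inner_right ℝ fun ξ => by
    rw [inner_gradient_apply, (hasFDerivAt_inner_add_const a x c).fderiv, innerSL_apply_apply]

theorem fderiv_fderiv_inner_add_const (a x : 𝔼) (c : ℝ) :
    fderiv ℝ (fderiv ℝ fun y => ⟪a, y⟫ + c) x = 0 := by
  have : (fderiv ℝ fun y => ⟪a, y⟫ + c) = fun _ => innerSL ℝ a :=
    funext fun y => (hasFDerivAt_inner_add_const a y c).fderiv
  rw [this, fderiv_const_apply]

theorem contDiff_inner_add_const (a : 𝔼) (c : ℝ) : ContDiff ℝ 2 fun y => ⟪a, y⟫ + c :=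
  (innerSL ℝ a).contDiff.add contDiff_const

theorem translatorEqAt_inner_add_const_iff {a v' x : 𝔼} {c vn : ℝ} :
    TranslatorEqAt (fun y => ⟪a, y⟫ + c) v' vn x ↔ vn = ⟪v', a⟫ := by
  have : 1 + ‖a‖ ^ 2 ≠ 0 := by positivity
  rw [translatorEqAt_iff (contDiff_inner_add_const a c).contDiffAt,
    fderiv_fderiv_inner_add_const, gradient_inner_add_const]
  simp [translatorOp, this, eq_comm (a := (0 : ℝ)), sub_eq_zero]

/-- A translating graph over a connected domain which is planar somewhere is planar. -/
theorem eq_inner_add_const_of_eventually {D : Set 𝔼} (hD : IsOpen D) (hDc : IsPreconnected D)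
    {f : 𝔼 → ℝ} {v' a p : 𝔼} {vn c : ℝ} (hf : ∀ x ∈ D, ContDiffAt ℝ 2 f x)
    (ht : ∀ x ∈ D, TranslatorEqAt f v' vn x) (hv : vn = ⟪v', a⟫) (hp : p ∈ D)
    (hfp : ∀ᶠ x in 𝓝 p, f x = ⟪a, x⟫ + c) : ∀ x ∈ D, f x = ⟪a, x⟫ + c := by
  have hl := contDiff_inner_add_const a c
  have key := eqOn_zero_of_eventually_eq_zero (X := translatorFrame a)
    (u := fun x => (⟪a, x⟫ + c) - f x) hD hDc ?_
    (fun x hx => hl.contDiffAt.sub (hf x hx)) ?_ hp ?_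
  · exact fun x hx => (sub_eq_zero.1 (key x hx)).symm
  · intro e he
    exact one_pos.trans_le (by simpa [he] using norm_sq_le_sum_inner_translatorFrame_sq a e)
  · intro x₀ hx₀
    obtain ⟨C, hC⟩ := exists_eventually_abs_translatorOp_le (f := fun x => ⟪a, x⟫ + c) (g := f)
      hl.contDiffAt (hf x₀ hx₀) (.of_forall fun x => translatorEqAt_inner_add_const_iff.2 hv)
      (by filter_upwards [hD.mem_nhds hx₀] with x hx using ht x hx)
    refine ⟨C ^ 2, ?_⟩
    filter_upwards [hC, hD.mem_nhds hx₀] with x hx hxD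
    rw [gradient_inner_add_const] at hx
    rw [sum_translatorFrame _ _ (fderiv_fderiv_symm (hl.contDiffAt.sub (hf x hxD)))]
    have h := norm_sq_le_sum_inner_translatorFrame_sq a
      (gradient (fun y => (⟪a, y⟫ + c) - f y) x)
    simp only [inner_gradient_apply, norm_gradient] at h
    calc _ ≤ (C * ‖fderiv ℝ (fun y => (⟪a, y⟫ + c) - f y) x‖) ^ 2 := sq_le_sq' (neg_le_of_abs_le hx)
          (le_of_abs_le hx)
      _ ≤ _ := by
        rw [mul_pow]
        gcongr
  · filter_upwards [hfp] with x hx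
    rw [hx, sub_self]

theorem eventually_eq_inner_add_const {f : 𝔼 → ℝ} {a p : 𝔼}
    (hf : ∀ᶠ x in 𝓝 p, HasFDerivAt f (innerSL ℝ a) x) :
    ∃ c, ∀ᶠ x in 𝓝 p, f x = ⟪a, x⟫ + c := by
  obtain ⟨r, hr, hball⟩ := Metric.eventually_nhds_iff_ball.1 hf
  refine ⟨f p - ⟪a, p⟫, ?_⟩
  filter_upwards [ball_mem_nhds p hr] with x hx
  have h := (convex_ball p r).is_const_of_fderivWithin_eq_zero (𝕜 := ℝ)
    (f := fun y => f y - ⟪a, y⟫)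
    (fun y hy => ((hball y hy).sub (innerSL ℝ a).hasFDerivAt).differentiableAt.differentiableWithinAt)
    (fun y hy => by
      rw [fderivWithin_of_isOpen isOpen_ball hy]
      exact ((hball y hy).sub (innerSL ℝ a).hasFDerivAt).fderiv.trans (sub_self _))
    hx (mem_ball_self hr)
  linarith

theorem translatorEqAt_comp_sub_add {f : 𝔼 → ℝ} {x v' w : 𝔼} {vn m : ℝ}
    (ht : TranslatorEqAt f v' vn (x - w)) :
    TranslatorEqAt (fun y => f (y - w) + m) v' vn x := by
  have h1 : gradient (fun y => f (y - w) + m) = fun y => gradient f (y - w) := by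
    funext y
    simp only [gradient_eq_toDual_symm]
    rw [fderiv_add_const, fderiv_comp_sub]
  have h2 : ∀ ξ, hess (fun y => f (y - w) + m) x ξ = hess f (x - w) ξ := fun ξ => by
    rw [hess, hess, h1, fderiv_comp_sub]
  simpa only [TranslatorEqAt, lap, h2, h1] using ht

/-- The first-order condition for a point of the graph of `f` closest to `(y, s)`. -/
theorem IsLocalMin.inner_sub_add_mul_fderiv_eq_zero {f : 𝔼 → ℝ} {x y : 𝔼} {s : ℝ}
    (h : IsLocalMin (fun z => ‖z - y‖ ^ 2 + (f z - s) ^ 2) x) (hf : DifferentiableAt ℝ f x)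
    (ξ : 𝔼) : ⟪x - y, ξ⟫ + (f x - s) * fderiv ℝ f x ξ = 0 := by
  have h1 := h.hasFDerivAt_eq_zero
    (((hasFDerivAt_id x).sub_const y).norm_sq.add ((hf.hasFDerivAt.sub_const s).pow 2))
  have h2 := congrArg (fun L : 𝔼 →L[ℝ] ℝ => L ξ) h1
  simp at h2
  rw [inner_sub_left]
  linarith

theorem IsLocalMin.hasFDerivAt_of_norm_sq_add {f : 𝔼 → ℝ} {x y : 𝔼} {s : ℝ}
    (h : IsLocalMin (fun z => ‖z - y‖ ^ 2 + (f z - s) ^ 2) x) (hf : DifferentiableAt ℝ f x)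
    (hs : s - f x ≠ 0) : HasFDerivAt f (innerSL ℝ ((s - f x)⁻¹ • (x - y))) x := by
  refine hf.hasFDerivAt.congr_fderiv (ContinuousLinearMap.ext fun ξ => ?_)
  have := h.inner_sub_add_mul_fderiv_eq_zero hf ξ
  rw [innerSL_apply_apply, real_inner_smul_left]
  field_simp
  linarith

theorem translatorEqAt_congr {f g : 𝔼 → ℝ} {x v' : 𝔼} {vn : ℝ} (h : f =ᶠ[𝓝 x] g) :
    TranslatorEqAt f v' vn x ↔ TranslatorEqAt g v' vn x := by
  have h1 : gradient f =ᶠ[𝓝 x] gradient g := by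
    filter_upwards [h.fderiv (𝕜 := ℝ)] with y hy
    simp only [gradient_eq_toDual_symm, hy]
  simp only [TranslatorEqAt, lap, hess, h1.fderiv_eq, h1.eq_of_nhds]

end Translator

/-- If `f₁, f₂` are smooth solutions of the translator equation with the same
velocity on a nonempty open connected `D ⊆ ℝⁿ`, with `f₂ > f₁` on `D`, and the Euclidean distance
in `ℝ^{n+1}` between the graphs, `(x,y) ↦ ‖(x, f₁(x)) − (y, f₂(y))‖`, attains its infimum at some
pair `(p, q) ∈ D × D`, then `f₁` and `f₂` are affine with the same linear part (the graphs lie in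
parallel hyperplanes), and `v` is parallel to those hyperplanes. -/
theorem subsequent_singularities_stmt1 {n : ℕ}
    (D : Set (EuclideanSpace ℝ (Fin n))) (hD : IsOpen D) (hDconn : IsConnected D)
    (v' : EuclideanSpace ℝ (Fin n)) (vn : ℝ)
    (f₁ f₂ : EuclideanSpace ℝ (Fin n) → ℝ)
    (hf₁ : ContDiffOn ℝ (⊤ : ℕ∞) f₁ D) (hf₂ : ContDiffOn ℝ (⊤ : ℕ∞) f₂ D)
    (ht₁ : ∀ x ∈ D, TranslatorEqAt f₁ v' vn x)
    (ht₂ : ∀ x ∈ D, TranslatorEqAt f₂ v' vn x)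
    (hlt : ∀ x ∈ D, f₁ x < f₂ x)
    (p q : EuclideanSpace ℝ (Fin n)) (hp : p ∈ D) (hq : q ∈ D)
    (hmin : ∀ x ∈ D, ∀ y ∈ D,
      Real.sqrt (‖p - q‖ ^ 2 + (f₁ p - f₂ q) ^ 2)
        ≤ Real.sqrt (‖x - y‖ ^ 2 + (f₁ x - f₂ y) ^ 2)) :
    ∃ (a : EuclideanSpace ℝ (Fin n)) (c₁ c₂ : ℝ),
      (∀ x ∈ D, f₁ x = ⟪a, x⟫ + c₁) ∧ (∀ x ∈ D, f₂ x = ⟪a, x⟫ + c₂) ∧ vn = ⟪v', a⟫ := by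
  have hc₁ : ∀ x ∈ D, ContDiffAt ℝ 2 f₁ x := fun x hx =>
    (hf₁.contDiffAt (hD.mem_nhds hx)).of_le (WithTop.coe_le_coe.2 (le_top (a := (2 : ℕ∞))))
  have hc₂ : ∀ x ∈ D, ContDiffAt ℝ 2 f₂ x := fun x hx =>
    (hf₂.contDiffAt (hD.mem_nhds hx)).of_le (WithTop.coe_le_coe.2 (le_top (a := (2 : ℕ∞))))
  have hsq : ∀ x ∈ D, ∀ y ∈ D,
      ‖p - q‖ ^ 2 + (f₁ p - f₂ q) ^ 2 ≤ ‖x - y‖ ^ 2 + (f₁ x - f₂ y) ^ 2 := fun x hx y hy =>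
    (Real.sqrt_le_sqrt_iff (by positivity)).1 (hmin x hx y hy)
  obtain ⟨w, hw⟩ : ∃ w, w = q - p := ⟨_, rfl⟩
  obtain ⟨m, hm⟩ : ∃ m, m = f₂ q - f₁ p := ⟨_, rfl⟩
  have hqw : q - w = p := by rw [hw]; abel
  have hwn : ‖p - q‖ = ‖w‖ := by rw [hw, norm_sub_rev]
  have hmin' : ∀ x ∈ D, ∀ y ∈ D, ‖w‖ ^ 2 + m ^ 2 ≤ ‖x - y‖ ^ 2 + (f₁ x - f₂ y) ^ 2 := by
    intro x hx y hy
    have h := hsq x hx y hy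
    rw [hwn, ← neg_sub, ← hm, neg_sq] at h
    exact h
  -- The first-order conditions at a minimizing pair.
  have hfo₁ : ∀ x ∈ D, x + w ∈ D → f₂ (x + w) = f₁ x + m → m ≠ 0 →
      HasFDerivAt f₁ (innerSL ℝ (-(m⁻¹ • w))) x := by
    intro x hx hy hxy hm0
    have h : IsLocalMin (fun z => ‖z - (x + w)‖ ^ 2 + (f₁ z - f₂ (x + w)) ^ 2) x := by
      filter_upwards [hD.mem_nhds hx] with z hz
      simpa [hxy] using hmin' z hz _ hy
    have hs : f₂ (x + w) - f₁ x = m := by rw [hxy]; ring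
    simpa [hs] using h.hasFDerivAt_of_norm_sq_add ((hc₁ x hx).differentiableAt (by norm_num))
      (hs ▸ hm0)
  have hfo₂ : ∀ x ∈ D, x - w ∈ D → f₂ x = f₁ (x - w) + m → m ≠ 0 →
      HasFDerivAt f₂ (innerSL ℝ (-(m⁻¹ • w))) x := by
    intro x hx hy hxy hm0
    have h : IsLocalMin (fun z => ‖z - (x - w)‖ ^ 2 + (f₂ z - f₁ (x - w)) ^ 2) x := by
      filter_upwards [hD.mem_nhds hx] with z hz
      have := hmin' _ hy z hz
      rw [norm_sub_rev, ← neg_sub (f₂ z), neg_sq] at this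
      simpa [hxy] using this
    have hs : f₁ (x - w) - f₂ x = -m := by rw [hxy]; ring
    simpa [hs, inv_neg] using h.hasFDerivAt_of_norm_sq_add
      ((hc₂ x hx).differentiableAt (by norm_num)) (hs ▸ neg_ne_zero.2 hm0)
  have hm0 : m ≠ 0 := by
    rintro rfl
    have h : IsLocalMin (fun z => ‖z - q‖ ^ 2 + (f₁ z - f₂ q) ^ 2) p := by
      filter_upwards [hD.mem_nhds hp] with z hz using hsq z hz q hq
    have h2 := h.inner_sub_add_mul_fderiv_eq_zero
      ((hc₁ p hp).differentiableAt (by norm_num)) (p - q)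
    rw [← neg_sub (f₂ q), ← hm, neg_zero, zero_mul, add_zero, inner_self_eq_zero,
      sub_eq_zero] at h2
    have h3 := hlt p hp
    rw [← h2] at hm
    linarith
  have hsub : Tendsto (fun x => x - w) (𝓝 q) (𝓝 p) := by
    have : ContinuousAt (fun x => x - w) q := by fun_prop
    simpa [ContinuousAt, hqw] using this
  have hadd : Tendsto (fun x => x + w) (𝓝 p) (𝓝 q) := by
    have : ContinuousAt (fun x => x + w) p := by fun_prop
    have h : p + w = q := by rw [hw]; abel
    simpa [ContinuousAt, h] using this
  have hDp : ∀ᶠ x in 𝓝 p, x ∈ D := hD.mem_nhds hp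
  have hDq : ∀ᶠ x in 𝓝 q, x ∈ D := hD.mem_nhds hq
  have hcg : ContDiffAt ℝ 2 (fun x => f₁ (x - w) + m) q :=
    ContDiffAt.add (ContDiffAt.comp q (by rw [hqw]; exact hc₁ p hp) (by fun_prop))
      contDiffAt_const
  have htg : ∀ᶠ x in 𝓝 q, TranslatorEqAt (fun x => f₁ (x - w) + m) v' vn x := by
    filter_upwards [hsub.eventually hDp] with x hx using translatorEqAt_comp_sub_add (ht₁ _ hx)
  have htf : ∀ᶠ x in 𝓝 q, TranslatorEqAt f₂ v' vn x := by
    filter_upwards [hDq] with x hx using ht₂ x hx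
  have hq0 : f₂ q = f₁ (q - w) + m := by rw [hqw, hm]; ring
  have hgap : ∀ᶠ x in 𝓝 q, m ^ 2 ≤ (f₂ x - f₁ (x - w)) ^ 2 := by
    filter_upwards [hDq, hsub.eventually hDp] with x hx hxw
    have h := hmin' _ hxw x hx
    rw [sub_sub_cancel_left, norm_neg] at h
    linarith [sq_abs (f₁ (x - w) - f₂ x), neg_sq (f₁ (x - w) - f₂ x),
      neg_sub (f₁ (x - w)) (f₂ x)]
  have hcont : ContinuousAt (fun x => f₂ x - f₁ (x - w)) q := by
    simpa using ContinuousAt.fun_sub (hc₂ q hq).continuousAt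
      (ContinuousAt.fun_sub hcg.continuousAt (continuousAt_const (y := m)))
  have heq : ∀ᶠ x in 𝓝 q, f₂ x = f₁ (x - w) + m := by
    have hval : f₂ q - f₁ (q - w) = m := by rw [hq0]; ring
    rcases hm0.lt_or_gt with hneg | hpos
    · have h := eventually_eq_of_translatorEqAt hcg (hc₂ q hq) htg htf ?_ hq0.symm
      · filter_upwards [h] with x hx using hx.symm
      · filter_upwards [hgap, hcont.eventually_lt_const (hval.trans_lt hneg)] with x hx hx'
        nlinarith
    · refine eventually_eq_of_translatorEqAt (hc₂ q hq) hcg htf htg ?_ hq0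
      filter_upwards [hgap, hcont.eventually_const_lt (hpos.trans_eq hval.symm)] with x hx hx'
      nlinarith
  obtain ⟨c₁, h₁⟩ : ∃ c, ∀ᶠ x in 𝓝 p, f₁ x = ⟪-(m⁻¹ • w), x⟫ + c := by
    refine eventually_eq_inner_add_const ?_
    filter_upwards [hDp, hadd.eventually hDq, hadd.eventually heq] with x hx hxw hxe
    exact hfo₁ x hx hxw (by simpa using hxe) hm0
  obtain ⟨c₂, h₂⟩ : ∃ c, ∀ᶠ x in 𝓝 q, f₂ x = ⟪-(m⁻¹ • w), x⟫ + c := by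
    refine eventually_eq_inner_add_const ?_
    filter_upwards [hDq, hsub.eventually hDp, heq] with x hx hxw hxe using hfo₂ x hx hxw hxe hm0
  have hv : vn = ⟪v', -(m⁻¹ • w)⟫ := by
    refine (translatorEqAt_inner_add_const_iff (x := p) (c := c₁)).1 ?_
    exact (translatorEqAt_congr h₁).1 (ht₁ p hp)
  exact ⟨-(m⁻¹ • w), c₁, c₂,
    eq_inner_add_const_of_eventually hD hDconn.isPreconnected hc₁ ht₁ hv hp h₁,
    eq_inner_add_const_of_eventually hD hDconn.isPreconnected hc₂ ht₂ hv hq h₂, hv⟩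
end

section
/- Let D ⊆ ℝⁿ be open, let f : D → ℝ, let p ∈ D, and suppose f is differentiable at p. Let μ > 0. If ‖(y, f(y)) − (p, f(p) + μ)‖ ≥ μ for every y ∈ D (Euclidean norm in ℝ^{n+1}), then the derivative of f at p is zero. -/
/-- Let `D ⊆ ℝⁿ` be open, `f : D → ℝ` differentiable at `p ∈ D`, and `μ > 0`.
If the point `(p, f(p) + μ)` of `ℝ^{n+1}` lying at height `μ` above the graph point `(p, f(p))`
is at Euclidean distance at least `μ` from every point `(y, f(y))` of the graph of `f`, then the
derivative of `f` at `p` is zero. -/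
theorem subsequent_singularities_stmt2 {n : ℕ}
    (D : Set (EuclideanSpace ℝ (Fin n))) (hD : IsOpen D)
    (f : EuclideanSpace ℝ (Fin n) → ℝ)
    (p : EuclideanSpace ℝ (Fin n)) (hp : p ∈ D)
    (hdiff : DifferentiableAt ℝ f p)
    (μ : ℝ) (hμ : 0 < μ)
    (hdist : ∀ y ∈ D, μ ≤ Real.sqrt (‖y - p‖ ^ 2 + (f y - (f p + μ)) ^ 2)) :
    fderiv ℝ f p = 0 := by
  have hmin : IsLocalMin (fun y => ‖y - p‖ ^ 2 + (f y - (f p + μ)) ^ 2) p := by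
    filter_upwards [hD.mem_nhds hp] with y hy
    have h := (Real.le_sqrt' hμ).1 (hdist y hy)
    simpa using h
  have hf := hdiff.hasFDerivAt
  have hderiv := ((hasFDerivAt_id p).sub_const p).norm_sq.add
    ((hf.sub_const (f p + μ)).pow 2)
  have hzero := hmin.hasFDerivAt_eq_zero hderiv
  ext v
  have hv := congrArg (fun L => L v) hzero
  simpa [hμ.ne'] using hv
end

section
/- Let D ⊆ ℝⁿ be open and connected, let f : D → ℝ be differentiable at every point of D, and let μ > 0. If ‖(x, f(x) + μ) − (y, f(y))‖ ≥ μ for all x, y ∈ D (Euclidean norm in ℝ^{n+1}), then f is constant on D. -/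
open Filter Topology in
/-- A function that is continuous at `x` and satisfies
`2 * μ * |f y - f x| ≤ ‖y - x‖ ^ 2 + (f y - f x) ^ 2` near `x` has vanishing derivative at `x`. -/
theorem fderiv_eq_zero_of_two_mul_abs_sub_le {E : Type*} [NormedAddCommGroup E] [NormedSpace ℝ E]
    {f : E → ℝ} {x : E} {μ : ℝ} (hμ : 0 < μ) (hf : ContinuousAt f x)
    (h : ∀ᶠ y in 𝓝 x, 2 * μ * |f y - f x| ≤ ‖y - x‖ ^ 2 + (f y - f x) ^ 2) :
    fderiv ℝ f x = 0 := by
  have hO : (fun y => f y - f x) =O[𝓝 x] fun y => ‖y - x‖ ^ 2 := by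
    refine Asymptotics.IsBigO.of_bound μ⁻¹ ?_
    filter_upwards [h, Metric.continuousAt_iff'.1 hf μ hμ] with y hy hclose
    rw [Real.dist_eq] at hclose
    rw [Real.norm_eq_abs, Real.norm_of_nonneg (by positivity), inv_mul_eq_div, le_div_iff₀ hμ]
    nlinarith [sq_abs (f y - f x), abs_nonneg (f y - f x)]
  simpa only [fderiv_sub_const] using (hO.hasFDerivAt one_lt_two).fderiv

/-- Let `D ⊆ ℝⁿ` be open and connected, `f : D → ℝ` differentiable at every
point of `D`, and `μ > 0`. If the upward vertical translate by `μ` of the graph of `f` stays at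
Euclidean distance (in `ℝ^{n+1}`) at least `μ` from the graph of `f`, i.e.
`‖(x, f(x) + μ) − (y, f(y))‖ ≥ μ` for all `x, y ∈ D`, then `f` is constant on `D`. -/
theorem subsequent_singularities_stmt3 {n : ℕ}
    (D : Set (EuclideanSpace ℝ (Fin n))) (hD : IsOpen D) (hDconn : IsConnected D)
    (f : EuclideanSpace ℝ (Fin n) → ℝ)
    (hdiff : ∀ x ∈ D, DifferentiableAt ℝ f x)
    (μ : ℝ) (hμ : 0 < μ)
    (hdist : ∀ x ∈ D, ∀ y ∈ D, μ ≤ Real.sqrt (‖x - y‖ ^ 2 + (f x + μ - f y) ^ 2)) :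
    ∀ x ∈ D, ∀ y ∈ D, f x = f y := by
  have key : ∀ x ∈ D, ∀ y ∈ D, 2 * μ * (f y - f x) ≤ ‖y - x‖ ^ 2 + (f y - f x) ^ 2 := by
    intro x hx y hy
    have h := (Real.le_sqrt' hμ).1 (hdist x hx y hy)
    rw [norm_sub_rev] at h
    nlinarith
  intro x hx y hy
  refine hD.is_const_of_fderiv_eq_zero (𝕜 := ℝ) hDconn.isPreconnected
    (fun z hz => (hdiff z hz).differentiableWithinAt) (fun z hz => ?_) hx hy
  refine fderiv_eq_zero_of_two_mul_abs_sub_le hμ (hdiff z hz).continuousAt ?_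
  filter_upwards [hD.mem_nhds hz] with w hw
  have h₁ := key z hz w hw
  have h₂ := key w hw z hz
  rw [norm_sub_rev] at h₂
  rcases abs_cases (f w - f z) with h | h <;> rw [h.1] <;> nlinarith
end

section
/- Let D ⊆ ℝⁿ be open and connected, let v = (v', v_{n+1}) ∈ ℝⁿ × ℝ, and let f : D → ℝ be a smooth solution of the translator equation with velocity v on D. Define h : D → ℝ by h(x) := (v_{n+1} − ⟨v', ∇f(x)⟩)/√(1 + |∇f(x)|²) (by the translator equation, h is the scalar mean curvature of the graph of f with respect to the upward unit normal). If h(x) ≥ 0 for all x ∈ D and h has a local minimum at some point of D, then h ≡ 0 on D. -/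
open scoped RealInnerProductSpace

open Filter Topology Metric

section MaximumPrinciple

variable {n : ℕ}

local notation "𝔼" => EuclideanSpace ℝ (Fin n)

/-- `(1 + |p|²)` times the trace of `B` with respect to the inverse metric of a graph with
gradient `p`. -/
noncomputable def graphTrace (p : 𝔼) (B : 𝔼 →L[ℝ] 𝔼 →L[ℝ] ℝ) : ℝ :=
  (1 + ‖p‖ ^ 2) * ∑ i, B (EuclideanSpace.single i 1) (EuclideanSpace.single i 1) - B p p

lemma graphTrace_add (p : 𝔼) (B C : 𝔼 →L[ℝ] 𝔼 →L[ℝ] ℝ) :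
    graphTrace p (B + C) = graphTrace p B + graphTrace p C := by
  simp only [graphTrace, add_apply, Finset.sum_add_distrib]
  ring

lemma graphTrace_smul (p : 𝔼) (c : ℝ) (B : 𝔼 →L[ℝ] 𝔼 →L[ℝ] ℝ) :
    graphTrace p (c • B) = c * graphTrace p B := by
  simp only [graphTrace, smul_apply, smul_eq_mul, ← Finset.mul_sum]
  ring

lemma graphTrace_sub (p : 𝔼) (B C : 𝔼 →L[ℝ] 𝔼 →L[ℝ] ℝ) :
    graphTrace p (B - C) = graphTrace p B - graphTrace p C := by
  simp only [graphTrace, sub_apply, Finset.sum_sub_distrib]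
  ring

lemma EuclideanSpace.eq_sum_single (p : 𝔼) :
    p = ∑ i, p i • (EuclideanSpace.single i (1 : ℝ) : 𝔼) := by
  ext j
  simp [Finset.sum_apply, Pi.single_apply]

/-- The trace of a positive semidefinite form is bounded by its `graphTrace`. The proof is
Lagrange's identity
`|p|² tr B - B(p, p) = ½ ∑ᵢⱼ B(pᵢ eⱼ - pⱼ eᵢ, pᵢ eⱼ - pⱼ eᵢ)`. -/
lemma sum_le_graphTrace (p : 𝔼) (B : 𝔼 →L[ℝ] 𝔼 →L[ℝ] ℝ) (hB : ∀ ξ, 0 ≤ B ξ ξ) :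
    ∑ i, B (EuclideanSpace.single i 1) (EuclideanSpace.single i 1) ≤ graphTrace p B := by
  set e : Fin n → 𝔼 := fun i => EuclideanSpace.single i 1
  have hpp : B p p = ∑ i, ∑ j, p i * p j * B (e i) (e j) := by
    conv_lhs => rw [EuclideanSpace.eq_sum_single p]
    simp only [map_sum, map_smul, sum_apply, smul_apply,
      smul_eq_mul, Finset.mul_sum]
    rw [Finset.sum_comm]
    exact Finset.sum_congr rfl fun i _ => Finset.sum_congr rfl fun j _ => by simp only [e]; ring
  have hnorm : ‖p‖ ^ 2 = ∑ i, p i ^ 2 := EuclideanSpace.real_norm_sq_eq p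
  have hdiag : ∑ i, ∑ j, p i ^ 2 * B (e j) (e j) = ‖p‖ ^ 2 * ∑ i, B (e i) (e i) := by
    rw [hnorm, Finset.sum_mul_sum]
  have hdiag' : ∑ i, ∑ j, p j ^ 2 * B (e i) (e i) = ‖p‖ ^ 2 * ∑ i, B (e i) (e i) := by
    rw [Finset.sum_comm, hdiag]
  have hpp' : B p p = ∑ i, ∑ j, p i * p j * B (e j) (e i) := by
    rw [hpp, Finset.sum_comm]
    exact Finset.sum_congr rfl fun i _ => Finset.sum_congr rfl fun j _ => by ring
  have hnn : 0 ≤ ∑ i, ∑ j, B (p i • e j - p j • e i) (p i • e j - p j • e i) :=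
    Finset.sum_nonneg fun i _ => Finset.sum_nonneg fun j _ => hB _
  have hlagrange : ∑ i, ∑ j, B (p i • e j - p j • e i) (p i • e j - p j • e i)
      = 2 * (‖p‖ ^ 2 * ∑ i, B (e i) (e i) - B p p) := by
    calc _ = ∑ i, ∑ j, (p i ^ 2 * B (e j) (e j) + p j ^ 2 * B (e i) (e i)
          - p i * p j * B (e i) (e j) - p i * p j * B (e j) (e i)) := by
          refine Finset.sum_congr rfl fun i _ => Finset.sum_congr rfl fun j _ => ?_
          simp only [map_sub, map_smul, sub_apply,
            smul_apply, smul_eq_mul]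
          ring
      _ = _ := by
          simp only [Finset.sum_add_distrib, Finset.sum_sub_distrib]
          rw [hdiag, hdiag', ← hpp, ← hpp']
          ring
  have hdef : graphTrace p B = (1 + ‖p‖ ^ 2) * ∑ i, B (e i) (e i) - B p p := rfl
  rw [hdef]
  linarith

/-- The second order elliptic operator with principal part `graphTrace p` and drift `b`, acting on
the first and second derivatives of a function at a point. -/
noncomputable def graphOperator (p b : 𝔼) (l : 𝔼 →L[ℝ] ℝ) (B : 𝔼 →L[ℝ] 𝔼 →L[ℝ] ℝ) : ℝ :=
  graphTrace p B + l b

/-- The second derivative test at an interior minimum. -/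
lemma IsLocalMin.second_derivative_nonneg {F : Type*} [NormedAddCommGroup F] [NormedSpace ℝ F]
    {w : F → ℝ} {w' : F → F →L[ℝ] ℝ} {B : F →L[ℝ] F →L[ℝ] ℝ} {y : F} (hmin : IsLocalMin w y)
    (hw : ∀ᶠ x in 𝓝 y, HasFDerivAt w (w' x) x) (hw' : HasFDerivAt w' B y) (ξ : F) :
    0 ≤ B ξ ξ := by
  by_contra! hneg
  set γ : ℝ → F := fun t => y + t • ξ with hγ
  have hγ0 : γ 0 = y := by simp [hγ]
  have hγd : ∀ t, HasDerivAt γ ξ t := fun t => by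
    simpa [hγ] using ((hasDerivAt_id t).smul_const ξ).const_add y
  have hγc : Tendsto γ (𝓝 0) (𝓝 y) := by
    simpa [hγ0] using (hγd 0).continuousAt.tendsto
  have hd : ∀ᶠ t in 𝓝 (0 : ℝ), HasDerivAt (w ∘ γ) (w' (γ t) ξ) t :=
    (hγc.eventually hw).mono fun t ht => ht.comp_hasDerivAt t (hγd t)
  have hdd : HasDerivAt (fun t => w' (γ t) ξ) (B ξ ξ) 0 := by
    have h1 : HasDerivAt (fun t => w' (γ t)) (B ξ) 0 :=
      HasFDerivAt.comp_hasDerivAt (l := w') 0 (hγ0.symm ▸ hw') (hγd 0)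
    simpa using h1.clm_apply (hasDerivAt_const 0 ξ)
  have hderiv : deriv (w ∘ γ) =ᶠ[𝓝 0] fun t => w' (γ t) ξ := hd.mono fun t ht => ht.deriv
  have hmin0 : IsLocalMin (w ∘ γ) 0 := by
    have : ∀ᶠ t in 𝓝 (0 : ℝ), w y ≤ w (γ t) := hγc.eventually hmin
    simpa [IsLocalMin, IsMinFilter, hγ0] using this
  have hmax0 : IsLocalMax (w ∘ γ) 0 := by
    refine isLocalMax_of_deriv_deriv_neg ?_ hmin0.deriv_eq_zero hd.self_of_nhds.continuousAt
    rwa [hderiv.deriv_eq, hdd.deriv]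
  have hconst : w ∘ γ =ᶠ[𝓝 0] fun _ => (w ∘ γ) 0 := by
    filter_upwards [hmin0, hmax0] with t h1 h2 using le_antisymm h2 h1
  have hzero : (fun t => w' (γ t) ξ) =ᶠ[𝓝 0] fun _ => 0 := by
    refine hderiv.symm.trans ?_
    filter_upwards [hconst.eventuallyEq_nhds] with t ht
    rw [ht.deriv_eq, deriv_const]
  have := hdd.deriv
  rw [hzero.deriv_eq, deriv_const] at this
  linarith

lemma graphOperator_nonneg_of_isLocalMin {w : 𝔼 → ℝ} {w' : 𝔼 → 𝔼 →L[ℝ] ℝ}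
    {B : 𝔼 →L[ℝ] 𝔼 →L[ℝ] ℝ} {y : 𝔼} (p b : 𝔼) (hmin : IsLocalMin w y)
    (hw : ∀ᶠ x in 𝓝 y, HasFDerivAt w (w' x) x) (hw' : HasFDerivAt w' B y) :
    0 ≤ graphOperator p b (w' y) B := by
  have hB := hmin.second_derivative_nonneg hw hw'
  rw [graphOperator, hmin.hasFDerivAt_eq_zero hw.self_of_nhds, zero_apply,
    add_zero]
  exact (Finset.sum_nonneg fun i _ => hB _).trans (sum_le_graphTrace p B hB)

/-- The second derivative of a composition `φ ∘ s` with a function of one variable. -/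
lemma HasFDerivAt.smul_comp_deriv {s : 𝔼 → ℝ} {s' : 𝔼 → 𝔼 →L[ℝ] ℝ} {B : 𝔼 →L[ℝ] 𝔼 →L[ℝ] ℝ}
    {φ' : ℝ → ℝ} {d : ℝ} {x : 𝔼} (hs : HasFDerivAt s (s' x) x) (hs' : HasFDerivAt s' B x)
    (hφ' : HasDerivAt φ' d (s x)) :
    HasFDerivAt (fun y => φ' (s y) • s' y)
      (φ' (s x) • B + d • (s' x).smulRight (s' x)) x := by
  have h1 : HasFDerivAt (fun y => φ' (s y)) (d • s' x) x := hφ'.comp_hasFDerivAt x hs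
  have h2 : d • (s' x).smulRight (s' x) = (d • s' x).smulRight (s' x) := by
    ext ξ η
    simp [mul_assoc]
  rw [h2]
  exact h1.smul hs'

lemma graphOperator_comp (p b : 𝔼) (l : 𝔼 →L[ℝ] ℝ) (B : 𝔼 →L[ℝ] 𝔼 →L[ℝ] ℝ) (c d : ℝ) :
    graphOperator p b (c • l) (c • B + d • l.smulRight l)
      = c * graphOperator p b l B + d * graphTrace p (l.smulRight l) := by
  simp only [graphOperator, graphTrace_add, graphTrace_smul, smul_apply,
    smul_eq_mul]
  ring

/-- The ball with diameter `[q, z]` touches the sphere of centre `q` through `z` only at `z`. -/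
lemma dist_lt_of_norm_sub_midpoint_le {F : Type*} [NormedAddCommGroup F] [InnerProductSpace ℝ F]
    {q z x : F} (hx : ‖x - midpoint ℝ q z‖ ≤ dist q z / 2) (hxz : x ≠ z) :
    dist q x < dist q z := by
  have h1 : z - midpoint ℝ q z = (2⁻¹ : ℝ) • (z - q) := by
    rw [right_sub_midpoint, invOf_eq_inv]
  have h2 : midpoint ℝ q z - q = (2⁻¹ : ℝ) • (z - q) := by
    rw [midpoint_sub_left, invOf_eq_inv]
  have h3 : ‖(2⁻¹ : ℝ) • (z - q)‖ = dist q z / 2 := by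
    rw [norm_smul, dist_comm, dist_eq_norm]
    norm_num
    ring
  have hpar := parallelogram_law_with_norm ℝ (x - midpoint ℝ q z) ((2⁻¹ : ℝ) • (z - q))
  have h4 : x - midpoint ℝ q z + (2⁻¹ : ℝ) • (z - q) = x - q := by rw [← h2]; abel
  have h5 : x - midpoint ℝ q z - (2⁻¹ : ℝ) • (z - q) = x - z := by rw [← h1]; abel
  rw [h4, h5, h3] at hpar
  have h6 : 0 < ‖x - z‖ := norm_pos_iff.2 (sub_ne_zero.2 hxz)
  rw [dist_comm q x, dist_eq_norm x q]
  nlinarith [norm_nonneg (x - q), norm_nonneg (x - midpoint ℝ q z)]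

/-- Hopf's barrier: the Gaussian `exp (-α |x - q|²)` is a strict subsolution near a given point
`z ≠ q` when `α` is large. -/
lemma exists_gaussian_subsolution {P b : 𝔼 → 𝔼} {z q : 𝔼} (hzq : z ≠ q)
    (hPz : ContinuousAt P z) (hbz : ContinuousAt b z) :
    ∃ α : ℝ, 0 < α ∧ ∃ (v' : 𝔼 → 𝔼 →L[ℝ] ℝ) (v'' : 𝔼 → 𝔼 →L[ℝ] 𝔼 →L[ℝ] ℝ),
      (∀ x, HasFDerivAt (fun x => Real.exp (-α * ‖x - q‖ ^ 2)) (v' x) x) ∧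
      (∀ x, HasFDerivAt v' (v'' x) x) ∧
      ∀ᶠ x in 𝓝 z, 0 < graphOperator (P x) (b x) (v' x) (v'' x) := by
  set s : 𝔼 → ℝ := fun x => ‖x - q‖ ^ 2 with hs_def
  set s' : 𝔼 → 𝔼 →L[ℝ] ℝ := fun x => (2 : ℝ) • innerSL ℝ (x - q) with hs'_def
  set G : 𝔼 →L[ℝ] 𝔼 →L[ℝ] ℝ := (2 : ℝ) • innerSL ℝ
  have hs : ∀ x, HasFDerivAt s (s' x) x := fun x => by
    have h := ((hasFDerivAt_id x).sub_const q).norm_sq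
    refine h.congr_fderiv ?_
    ext ξ
    simp [hs'_def]
  have hs' : ∀ x, HasFDerivAt s' G x := fun x =>
    ((innerSL ℝ : 𝔼 →L[ℝ] 𝔼 →L[ℝ] ℝ).hasFDerivAt.comp x
      ((hasFDerivAt_id x).sub_const q)).const_smul (2 : ℝ)
  have hs'c : Continuous s' := continuous_iff_continuousAt.2 fun x => (hs' x).continuousAt
  set c₁ : 𝔼 → ℝ := fun x => graphOperator (P x) (b x) (s' x) G with hc₁_def
  set c₂ : 𝔼 → ℝ := fun x => graphTrace (P x) ((s' x).smulRight (s' x)) with hc₂_def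
  have hs'z : ContinuousAt s' z := hs'c.continuousAt
  have hc₁ : ContinuousAt c₁ z := by
    simp only [hc₁_def, graphOperator, graphTrace]
    fun_prop
  have hc₂ : ContinuousAt c₂ z := by
    simp only [hc₂_def, graphTrace, ContinuousLinearMap.smulRight_apply, smul_apply]
    fun_prop
  have hc₂z : 0 < c₂ z := by
    have h1 := sum_le_graphTrace (P z) ((s' z).smulRight (s' z)) fun ξ => by
      simpa using mul_self_nonneg (s' z ξ)
    refine lt_of_lt_of_le ?_ h1
    have h2 : ∑ i, ((s' z).smulRight (s' z)) (EuclideanSpace.single i 1)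
        (EuclideanSpace.single i 1) = 4 * ‖z - q‖ ^ 2 := by
      rw [EuclideanSpace.real_norm_sq_eq, Finset.mul_sum]
      refine Finset.sum_congr rfl fun i _ => ?_
      simp [hs'_def, EuclideanSpace.inner_single_right]
      ring
    have h3 : 0 < ‖z - q‖ := norm_pos_iff.2 (sub_ne_zero.2 hzq)
    rw [h2]
    positivity
  obtain ⟨α, hα, hαz⟩ : ∃ α : ℝ, 0 < α ∧ 0 < -α * c₁ z + α ^ 2 * c₂ z := by
    have hα : 0 < (|c₁ z| + 1) / c₂ z := by positivity
    refine ⟨(|c₁ z| + 1) / c₂ z, hα, ?_⟩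
    have h1 : (|c₁ z| + 1) / c₂ z * c₂ z = |c₁ z| + 1 := div_mul_cancel₀ _ hc₂z.ne'
    have h2 : 0 < (|c₁ z| + 1) / c₂ z * ((|c₁ z| + 1) / c₂ z * c₂ z - c₁ z) := by
      refine mul_pos hα ?_
      rw [h1]
      linarith [le_abs_self (c₁ z)]
    nlinarith
  have hφ : ∀ t, HasDerivAt (fun t => Real.exp (-α * t)) (-α * Real.exp (-α * t)) t := fun t => by
    simpa [mul_comm] using ((hasDerivAt_id t).const_mul (-α)).exp
  have hφ' : ∀ t, HasDerivAt (fun t => -α * Real.exp (-α * t)) (α ^ 2 * Real.exp (-α * t)) t :=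
    fun t => ((hφ t).const_mul (-α)).congr_deriv (by ring)
  refine ⟨α, hα, fun x => (-α * Real.exp (-α * s x)) • s' x, fun x => (-α * Real.exp (-α * s x)) • G
    + (α ^ 2 * Real.exp (-α * s x)) • (s' x).smulRight (s' x),
    fun x => (hφ (s x)).comp_hasFDerivAt x (hs x),
    fun x => (hs x).smul_comp_deriv (hs' x) (hφ' (s x)), ?_⟩
  filter_upwards [((hc₁.const_mul (-α)).add (hc₂.const_mul (α ^ 2))).eventually (lt_mem_nhds hαz)]
    with x hx
  rw [graphOperator_comp]
  have hpos := mul_pos (Real.exp_pos (-α * s x)) hx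
  simp only [Pi.add_apply, hc₁_def, hc₂_def] at hpos
  linear_combination hpos

/-- A local form of the strong maximum principle: a nonnegative supersolution vanishes in a
neighbourhood of each of its zeros. -/
lemma eventually_eq_zero_of_supersolution {U : Set 𝔼} (hU : IsOpen U) {P b : 𝔼 → 𝔼}
    (hP : ContinuousOn P U) (hb : ContinuousOn b U) {w : 𝔼 → ℝ} {w' : 𝔼 → 𝔼 →L[ℝ] ℝ}
    {w'' : 𝔼 → 𝔼 →L[ℝ] 𝔼 →L[ℝ] ℝ} (hw : ∀ x ∈ U, HasFDerivAt w (w' x) x)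
    (hw' : ∀ x ∈ U, HasFDerivAt w' (w'' x) x)
    (hsuper : ∀ x ∈ U, graphOperator (P x) (b x) (w' x) (w'' x) ≤ 0)
    (hnonneg : ∀ x ∈ U, 0 ≤ w x) {p : 𝔼} (hp : p ∈ U) (hp0 : w p = 0) :
    ∀ᶠ x in 𝓝 p, w x = 0 := by
  have hwc : ContinuousOn w U := fun x hx => (hw x hx).continuousAt.continuousWithinAt
  obtain ⟨R, hR, hRU⟩ := nhds_basis_closedBall.mem_iff.1 (hU.mem_nhds hp)
  filter_upwards [ball_mem_nhds p (half_pos hR)] with q hq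
  by_contra hq0
  rw [mem_ball] at hq
  -- a zero `z` of `w` closest to `q`
  have hZ : IsCompact (closedBall p R ∩ w ⁻¹' {0}) :=
    (isCompact_closedBall p R).of_isClosed_subset
      ((hwc.mono hRU).preimage_isClosed_of_isClosed isClosed_closedBall isClosed_singleton)
      Set.inter_subset_left
  obtain ⟨z, ⟨hzR, hz0⟩, hzmin⟩ := hZ.exists_isMinOn ⟨p, mem_closedBall_self hR.le, hp0⟩
    (continuous_const.dist continuous_id : Continuous fun x => dist q x).continuousOn
  have hz0 : w z = 0 := hz0
  have hzU : z ∈ U := hRU hzR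
  have hqp : dist q z ≤ dist q p := hzmin ⟨mem_closedBall_self hR.le, hp0⟩
  have hqz : 0 < dist q z := dist_pos.2 fun h => hq0 (h ▸ hz0)
  have hpos : ∀ x, dist q x < dist q z → x ∈ U ∧ 0 < w x := fun x hx => by
    have hxR : x ∈ closedBall p R := by
      rw [mem_closedBall]
      linarith [dist_triangle x q p, dist_comm x q]
    exact ⟨hRU hxR, (hnonneg x (hRU hxR)).lt_of_ne fun h => hx.not_ge (hzmin ⟨hxR, h.symm⟩)⟩
  -- a smaller ball, touching the zero set of `w` only at `z`
  obtain ⟨q', r, hr, hzr, hball⟩ : ∃ q' : 𝔼, ∃ r : ℝ, 0 < r ∧ ‖z - q'‖ = r ∧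
      ∀ x, ‖x - q'‖ ≤ r → x ≠ z → x ∈ U ∧ 0 < w x := by
    have h1 : ‖z - midpoint ℝ q z‖ = dist q z / 2 := by
      rw [← dist_eq_norm, dist_comm, dist_midpoint_right, Real.norm_ofNat]
      ring
    exact ⟨midpoint ℝ q z, dist q z / 2, half_pos hqz, h1,
      fun x hx hxz => hpos x (dist_lt_of_norm_sub_midpoint_le hx hxz)⟩
  have hzq : z ≠ q' := fun h => by simp [h] at hzr; exact hr.ne hzr
  obtain ⟨α, hα, v', v'', hv, hv', hvz⟩ := exists_gaussian_subsolution hzq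
    (hP.continuousAt (hU.mem_nhds hzU)) (hb.continuousAt (hU.mem_nhds hzU))
  obtain ⟨δ, hδ, hδU⟩ := nhds_basis_closedBall.mem_iff.1 ((hU.eventually_mem hzU).and hvz)
  -- comparison of `w` with a small multiple of the barrier
  obtain ⟨m, hm, hmK⟩ : ∃ m : ℝ, 0 < m ∧ ∀ x ∈ sphere z δ ∩ closedBall q' r, m ≤ w x := by
    have hK : IsCompact (sphere z δ ∩ closedBall q' r) :=
      (isCompact_sphere z δ).inter_right isClosed_closedBall
    have hKpos : ∀ x ∈ sphere z δ ∩ closedBall q' r, 0 < w x := fun x hx =>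
      (hball x (by simpa [dist_eq_norm] using hx.2) (ne_of_mem_sphere hx.1 hδ.ne')).2
    exact hK.exists_forall_le' (hwc.mono fun x hx => (hδU (sphere_subset_closedBall hx.1)).1) hKpos
  set F : 𝔼 → ℝ :=
    fun x => w x - m / 2 * (Real.exp (-α * ‖x - q'‖ ^ 2) - Real.exp (-α * r ^ 2)) with hF_def
  have hF : ∀ x ∈ U, HasFDerivAt F (w' x - (m / 2) • v' x) x := fun x hx =>
    (hw x hx).sub (((hv x).sub_const _).const_mul (m / 2))
  have hF' : ∀ x ∈ U, HasFDerivAt (fun x => w' x - (m / 2) • v' x) (w'' x - (m / 2) • v'' x) x :=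
    fun x hx => (hw' x hx).sub ((hv' x).const_smul (m / 2))
  obtain ⟨y, hy, hymin⟩ := (isCompact_closedBall z δ).exists_isMinOn
    ⟨z, mem_closedBall_self hδ.le⟩ (f := F)
    fun x hx => (hF x (hδU hx).1).continuousAt.continuousWithinAt
  have hFz : F z = 0 := by simp [hF_def, hz0, hzr]
  have hyF : F y ≤ 0 := hFz ▸ hymin (mem_closedBall_self hδ.le)
  have hyball : y ∈ ball z δ := by
    by_contra hyb
    have hysph : y ∈ sphere z δ :=
      mem_sphere.2 (le_antisymm (mem_closedBall.1 hy) (not_lt.1 fun h => hyb (mem_ball.2 h)))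
    by_cases hyr : ‖y - q'‖ ≤ r
    · have h1 : m ≤ w y := hmK y ⟨hysph, by simpa [dist_eq_norm] using hyr⟩
      have h2 : Real.exp (-α * ‖y - q'‖ ^ 2) ≤ 1 := by
        rw [Real.exp_le_one_iff]
        have : 0 ≤ ‖y - q'‖ ^ 2 := by positivity
        nlinarith
      have h3 := Real.exp_pos (-α * r ^ 2)
      simp only [hF_def] at hyF
      nlinarith
    · have h1 : r ^ 2 < ‖y - q'‖ ^ 2 := by
        have := not_le.1 hyr
        gcongr
      have h2 : Real.exp (-α * ‖y - q'‖ ^ 2) < Real.exp (-α * r ^ 2) := by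
        rw [Real.exp_lt_exp]
        nlinarith
      have h3 := hnonneg y (hδU hy).1
      simp only [hF_def] at hyF
      nlinarith
  have hyU : y ∈ U := (hδU hy).1
  have hloc : IsLocalMin F y :=
    hymin.isLocalMin (mem_of_superset (isOpen_ball.mem_nhds hyball) ball_subset_closedBall)
  have hop := graphOperator_nonneg_of_isLocalMin (P y) (b y) hloc
    ((hU.eventually_mem hyU).mono hF) (hF' y hyU)
  have hwy := hsuper y hyU
  have hvy := mul_pos (half_pos hm) (hδU hy).2
  simp only [graphOperator, graphTrace_sub, graphTrace_smul, sub_apply, smul_apply,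
    smul_eq_mul] at hop hwy hvy
  linarith

end MaximumPrinciple

section Translator

variable {n : ℕ}

local notation "𝔼" => EuclideanSpace ℝ (Fin n)

/-- Second and third derivatives of `f`, written through its gradient `g`, are symmetric. -/
lemma symmetric_of_hasFDerivAt_gradient {D : Set 𝔼} (hD : IsOpen D) {f : 𝔼 → ℝ} {g : 𝔼 → 𝔼}
    {H : 𝔼 → 𝔼 →L[ℝ] 𝔼} {T : 𝔼 → 𝔼 →L[ℝ] 𝔼 →L[ℝ] 𝔼}
    (hf : ∀ x ∈ D, HasFDerivAt f (innerSL ℝ (g x)) x) (hg : ∀ x ∈ D, HasFDerivAt g (H x) x)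
    (hH : ∀ x ∈ D, HasFDerivAt H (T x) x) {x : 𝔼} (hx : x ∈ D) :
    (∀ ξ η, ⟪H x ξ, η⟫ = ⟪H x η, ξ⟫) ∧ ∀ ζ ξ, ⟪T x ζ ξ, ξ⟫ = ⟪T x ξ ξ, ζ⟫ := by
  have hsymm : ∀ y ∈ D, ∀ ξ η, ⟪H y ξ, η⟫ = ⟪H y η, ξ⟫ := fun y hy ξ η => by
    have h1 : HasFDerivAt (fun y => innerSL ℝ (g y))
        ((innerSL ℝ : 𝔼 →L[ℝ] 𝔼 →L[ℝ] ℝ).comp (H y)) y :=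
      (innerSL ℝ : 𝔼 →L[ℝ] 𝔼 →L[ℝ] ℝ).hasFDerivAt.comp y (hg y hy)
    simpa using second_derivative_symmetric_of_eventually_of_real
      ((hD.eventually_mem hy).mono hf) h1 ξ η
  refine ⟨hsymm x hx, fun ζ ξ => ?_⟩
  have hT : T x ζ ξ = T x ξ ζ := second_derivative_symmetric_of_eventually_of_real
    ((hD.eventually_mem hx).mono hg) (hH x hx) ζ ξ
  have hd : ∀ η θ : 𝔼, HasFDerivAt (fun y => ⟪H y η, θ⟫)
      ((innerSL ℝ θ).comp ((T x).flip η)) x := fun η θ => by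
    have h1 := ((hH x hx).clm_apply (hasFDerivAt_const η x)).inner ℝ (hasFDerivAt_const θ x)
    refine h1.congr_fderiv ?_
    ext ρ
    simp [fderivInnerCLM_apply, real_inner_comm]
  have heq := (hd ζ ξ).congr_of_eventuallyEq
    ((hD.eventually_mem hx).mono fun y hy => hsymm y hy ξ ζ)
  have := congrArg (fun l => l ξ) ((hd ξ ζ).unique heq)
  simp only [ContinuousLinearMap.comp_apply, ContinuousLinearMap.flip_apply, innerSL_apply_apply]
    at this
  rw [hT, real_inner_comm, ← this, real_inner_comm]

/-- The drift of the linearized translator equation. -/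
noncomputable def translatorDrift (v' : 𝔼) (vn : ℝ) (g : 𝔼) (H : 𝔼 →L[ℝ] 𝔼) : 𝔼 :=
  (1 + ‖g‖ ^ 2) • v' - (2 : ℝ) • H g
    + (2 * (∑ i, ⟪H (EuclideanSpace.single i 1), EuclideanSpace.single i 1⟫ - (vn - ⟪v', g⟫))) • g

/-- The principal part of the linearized translator equation applied to the gradient. -/
noncomputable def graphTraceVec (g : 𝔼) (T : 𝔼 →L[ℝ] 𝔼 →L[ℝ] 𝔼) : 𝔼 :=
  (1 + ‖g‖ ^ 2) • ∑ i, T (EuclideanSpace.single i 1) (EuclideanSpace.single i 1) - T g g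

lemma inner_graphTraceVec (a g : 𝔼) (T : 𝔼 →L[ℝ] 𝔼 →L[ℝ] 𝔼) :
    ⟪a, graphTraceVec g T⟫ = (1 + ‖g‖ ^ 2) *
      ∑ i, ⟪a, T (EuclideanSpace.single i 1) (EuclideanSpace.single i 1)⟫ - ⟪a, T g g⟫ := by
  rw [graphTraceVec, inner_sub_right, inner_smul_right, inner_sum]

/-- The translator equation differentiated in the direction `ζ`. -/
lemma inner_graphTraceVec_eq_of_translator {D : Set 𝔼} (hD : IsOpen D) {f : 𝔼 → ℝ} {g : 𝔼 → 𝔼}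
    {H : 𝔼 → 𝔼 →L[ℝ] 𝔼} {T : 𝔼 → 𝔼 →L[ℝ] 𝔼 →L[ℝ] 𝔼}
    (hf : ∀ x ∈ D, HasFDerivAt f (innerSL ℝ (g x)) x) (hg : ∀ x ∈ D, HasFDerivAt g (H x) x)
    (hH : ∀ x ∈ D, HasFDerivAt H (T x) x) {v' : 𝔼} {vn : ℝ}
    (heq : ∀ x ∈ D, (1 + ‖g x‖ ^ 2) *
      ∑ i, ⟪H x (EuclideanSpace.single i 1), EuclideanSpace.single i 1⟫ - ⟪g x, H x (g x)⟫
        = (vn - ⟪v', g x⟫) * (1 + ‖g x‖ ^ 2)) {x : 𝔼} (hx : x ∈ D) (ζ : 𝔼) :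
    ⟪ζ, graphTraceVec (g x) (T x)⟫ + ⟪ζ, H x (translatorDrift v' vn (g x) (H x))⟫ = 0 := by
  obtain ⟨hHs, hTs⟩ := symmetric_of_hasFDerivAt_gradient hD hf hg hH hx
  have hgx := hg x hx
  have hHx := hH x hx
  have hs : HasFDerivAt (fun y => 1 + ‖g y‖ ^ 2) _ x := hgx.norm_sq.const_add 1
  have htr : HasFDerivAt
      (fun y => ∑ i, ⟪H y (EuclideanSpace.single i 1), EuclideanSpace.single i 1⟫) _ x :=
    HasFDerivAt.fun_sum fun i _ => (hHx.clm_apply (hasFDerivAt_const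
      (EuclideanSpace.single i 1 : 𝔼) x)).inner ℝ (hasFDerivAt_const (EuclideanSpace.single i 1) x)
  have hq : HasFDerivAt (fun y => ⟪g y, H y (g y)⟫) _ x := hgx.inner ℝ (hHx.clm_apply hgx)
  have hu : HasFDerivAt (fun y => vn - ⟪v', g y⟫) _ x :=
    ((hasFDerivAt_const v' x).inner ℝ hgx).const_sub vn
  have hleft := (hs.mul htr).sub hq
  have hright := (hu.mul hs).congr_of_eventuallyEq ((hD.eventually_mem hx).mono heq)
  have h := congrArg (fun l => l ζ) (hleft.unique hright)
  have hb : ⟪ζ, H x (translatorDrift v' vn (g x) (H x))⟫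
      = ⟪H x ζ, translatorDrift v' vn (g x) (H x)⟫ := by
    rw [real_inner_comm, hHs]
  have hHH : ⟪g x, H x (H x ζ)⟫ = ⟪H x ζ, H x (g x)⟫ := by
    rw [real_inner_comm, hHs, real_inner_comm]
  have hTg : ⟪g x, T x ζ (g x)⟫ = ⟪ζ, T x (g x) (g x)⟫ := by
    rw [real_inner_comm, hTs, real_inner_comm]
  have hTe : ∀ i : Fin n, ⟪T x ζ (EuclideanSpace.single i 1), EuclideanSpace.single i 1⟫
      = ⟪ζ, T x (EuclideanSpace.single i 1) (EuclideanSpace.single i 1)⟫ := fun i => by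
    rw [hTs, real_inner_comm]
  rw [inner_graphTraceVec, hb, translatorDrift, inner_add_right, inner_sub_right, inner_smul_right,
    inner_smul_right, inner_smul_right, real_inner_comm (g x) (H x ζ), real_inner_comm v' (H x ζ)]
  simp [fderivInnerCLM_apply, inner_add_right, hTe, hHH, hTg] at h
  linear_combination h

/-- The function `vn - ⟨v', ∇f⟩` solves the linearized translator equation. -/
lemma exists_graphOperator_velocity_eq_zero {D : Set 𝔼} {g : 𝔼 → 𝔼} {H : 𝔼 → 𝔼 →L[ℝ] 𝔼}
    {T : 𝔼 → 𝔼 →L[ℝ] 𝔼 →L[ℝ] 𝔼} {b : 𝔼 → 𝔼} (hg : ∀ x ∈ D, HasFDerivAt g (H x) x)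
    (hH : ∀ x ∈ D, HasFDerivAt H (T x) x)
    (hlin : ∀ x ∈ D, ∀ ζ, ⟪ζ, graphTraceVec (g x) (T x)⟫ + ⟪ζ, H x (b x)⟫ = 0)
    (v' : 𝔼) (vn : ℝ) :
    ∃ (u' : 𝔼 → 𝔼 →L[ℝ] ℝ) (u'' : 𝔼 → 𝔼 →L[ℝ] 𝔼 →L[ℝ] ℝ), ∀ x ∈ D,
      HasFDerivAt (fun y => vn - ⟪v', g y⟫) (u' x) x ∧ HasFDerivAt u' (u'' x) x ∧
      graphOperator (g x) (b x) (u' x) (u'' x) = 0 := by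
  refine ⟨fun x => -(innerSL ℝ v').comp (H x),
    fun x => -((ContinuousLinearMap.compL ℝ 𝔼 𝔼 ℝ (innerSL ℝ v')).comp (T x)),
    fun x hx => ⟨((innerSL ℝ v').hasFDerivAt.comp x (hg x hx)).const_sub vn,
      ((ContinuousLinearMap.compL ℝ 𝔼 𝔼 ℝ (innerSL ℝ v')).hasFDerivAt.comp x (hH x hx)).neg, ?_⟩⟩
  have h := hlin x hx v'
  rw [inner_graphTraceVec] at h
  simp only [graphOperator, graphTrace, neg_apply, ContinuousLinearMap.comp_apply,
    ContinuousLinearMap.compL_apply, innerSL_apply_apply, Finset.sum_neg_distrib]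
  linear_combination -h

/-- The function `1 + |∇f|²`, its derivatives, and its image under the linearized translator
operator. -/
lemma exists_graphOperator_one_add_norm_sq_eq {D : Set 𝔼} {g : 𝔼 → 𝔼} {H : 𝔼 → 𝔼 →L[ℝ] 𝔼}
    {T : 𝔼 → 𝔼 →L[ℝ] 𝔼 →L[ℝ] 𝔼} {b : 𝔼 → 𝔼} (hg : ∀ x ∈ D, HasFDerivAt g (H x) x)
    (hH : ∀ x ∈ D, HasFDerivAt H (T x) x)
    (hlin : ∀ x ∈ D, ∀ ζ, ⟪ζ, graphTraceVec (g x) (T x)⟫ + ⟪ζ, H x (b x)⟫ = 0) :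
    ∃ s'' : 𝔼 → 𝔼 →L[ℝ] 𝔼 →L[ℝ] ℝ, ∀ x ∈ D,
      HasFDerivAt (fun y => 1 + ‖g y‖ ^ 2) ((2 : ℝ) • (innerSL ℝ (g x)).comp (H x)) x ∧
      HasFDerivAt (fun y => (2 : ℝ) • (innerSL ℝ (g y)).comp (H y)) (s'' x) x ∧
      graphOperator (g x) (b x) ((2 : ℝ) • (innerSL ℝ (g x)).comp (H x)) (s'' x)
        = 2 * graphTrace (g x) ((innerSL ℝ : 𝔼 →L[ℝ] 𝔼 →L[ℝ] ℝ).bilinearComp (H x) (H x)) := by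
  have hinner : ∀ x ∈ D, HasFDerivAt (fun y => innerSL ℝ (g y))
      ((innerSL ℝ : 𝔼 →L[ℝ] 𝔼 →L[ℝ] ℝ).comp (H x)) x := fun x hx =>
    (innerSL ℝ : 𝔼 →L[ℝ] 𝔼 →L[ℝ] ℝ).hasFDerivAt.comp x (hg x hx)
  refine ⟨_, fun x hx => ⟨?_, ((hinner x hx).clm_comp (hH x hx)).const_smul (2 : ℝ), ?_⟩⟩
  · refine ((hg x hx).norm_sq.const_add 1).congr_fderiv ?_
    ext ξ
    simp
  · have h := hlin x hx (g x)
    rw [inner_graphTraceVec] at h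
    simp only [graphOperator, graphTrace, smul_apply, add_apply, smul_eq_mul,
      ContinuousLinearMap.comp_apply, ContinuousLinearMap.compL_apply,
      ContinuousLinearMap.flip_apply, innerSL_apply_apply, ContinuousLinearMap.bilinearComp_apply,
      ← Finset.mul_sum, Finset.sum_add_distrib]
    linear_combination 2 * h

lemma hasDerivAt_one_div_two_mul_sqrt {t : ℝ} (ht : 0 < t) :
    HasDerivAt (fun t => 1 / (2 * √t)) (-(1 / (4 * √t ^ 3))) t := by
  have hpos : 0 < √t := Real.sqrt_pos.2 ht
  have h := ((Real.hasDerivAt_sqrt ht.ne').const_mul 2).inv (by positivity)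
  simp only [one_div]
  refine h.congr_deriv ?_
  field_simp
  norm_num

/-- The area element `√(1 + |∇f|²)` is a subsolution of the linearized translator equation, strict
wherever the Hessian does not vanish. -/
lemma exists_sum_norm_sq_le_graphOperator_areaElement {D : Set 𝔼} {g : 𝔼 → 𝔼}
    {H : 𝔼 → 𝔼 →L[ℝ] 𝔼} {T : 𝔼 → 𝔼 →L[ℝ] 𝔼 →L[ℝ] 𝔼} {b : 𝔼 → 𝔼}
    (hg : ∀ x ∈ D, HasFDerivAt g (H x) x) (hH : ∀ x ∈ D, HasFDerivAt H (T x) x)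
    (hlin : ∀ x ∈ D, ∀ ζ, ⟪ζ, graphTraceVec (g x) (T x)⟫ + ⟪ζ, H x (b x)⟫ = 0) :
    ∃ (W' : 𝔼 → 𝔼 →L[ℝ] ℝ) (W'' : 𝔼 → 𝔼 →L[ℝ] 𝔼 →L[ℝ] ℝ), ∀ x ∈ D,
      HasFDerivAt (fun y => √(1 + ‖g y‖ ^ 2)) (W' x) x ∧ HasFDerivAt W' (W'' x) x ∧
      ∑ i, ‖H x (EuclideanSpace.single i 1)‖ ^ 2
        ≤ √(1 + ‖g x‖ ^ 2) ^ 3 * graphOperator (g x) (b x) (W' x) (W'' x) := by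
  obtain ⟨s'', hs⟩ := exists_graphOperator_one_add_norm_sq_eq hg hH hlin
  set l : 𝔼 → 𝔼 →L[ℝ] ℝ := fun x => (innerSL ℝ (g x)).comp (H x) with hl
  refine ⟨fun x => (1 / (2 * √(1 + ‖g x‖ ^ 2))) • ((2 : ℝ) • l x), fun x =>
    (1 / (2 * √(1 + ‖g x‖ ^ 2))) • s'' x
      + (-(1 / (4 * √(1 + ‖g x‖ ^ 2) ^ 3))) • ((2 : ℝ) • l x).smulRight ((2 : ℝ) • l x),
    fun x hx => ?_⟩
  have hspos : 0 < 1 + ‖g x‖ ^ 2 := by positivity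
  obtain ⟨hs1, hs2, hs3⟩ := hs x hx
  refine ⟨(Real.hasDerivAt_sqrt hspos.ne').comp_hasFDerivAt x hs1,
    hs1.smul_comp_deriv (s' := fun y => (2 : ℝ) • l y) hs2
      (hasDerivAt_one_div_two_mul_sqrt hspos), ?_⟩
  set K : 𝔼 →L[ℝ] 𝔼 →L[ℝ] ℝ := (innerSL ℝ : 𝔼 →L[ℝ] 𝔼 →L[ℝ] ℝ).bilinearComp (H x) (H x)
  have hKl : ∀ ξ, ‖H x ξ‖ ^ 2 ≤ ((1 + ‖g x‖ ^ 2) • K - (l x).smulRight (l x)) ξ ξ := fun ξ => by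
    have h1 : ((1 + ‖g x‖ ^ 2) • K - (l x).smulRight (l x)) ξ ξ
        = (1 + ‖g x‖ ^ 2) * ‖H x ξ‖ ^ 2 - ⟪g x, H x ξ⟫ * ⟪g x, H x ξ⟫ := by
      simp [K, hl]
    have h2 := real_inner_mul_inner_self_le (g x) (H x ξ)
    rw [real_inner_self_eq_norm_sq, real_inner_self_eq_norm_sq] at h2
    rw [h1]
    linarith
  have hsum := sum_le_graphTrace (g x) _ fun ξ => (sq_nonneg _).trans (hKl ξ)
  refine (Finset.sum_le_sum fun i _ => hKl (EuclideanSpace.single i 1)).trans (hsum.trans_eq ?_)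
  have hl2 : graphTrace (g x) (((2 : ℝ) • l x).smulRight ((2 : ℝ) • l x))
      = 4 * graphTrace (g x) ((l x).smulRight (l x)) := by
    rw [← graphTrace_smul]
    congr 1
    ext ξ η
    simp
    ring
  have hsq : √(1 + ‖g x‖ ^ 2) ^ 2 = 1 + ‖g x‖ ^ 2 := Real.sq_sqrt hspos.le
  have hWpos : 0 < √(1 + ‖g x‖ ^ 2) := Real.sqrt_pos.2 hspos
  rw [graphOperator_comp, hs3, hl2, graphTrace_sub, graphTrace_smul]
  nth_rewrite 1 [← hsq]
  field_simp
  ring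

/-- A continuous function which vanishes in a neighbourhood of each of its zeros vanishes identically on
a preconnected set containing one of its zeros. -/
lemma IsPreconnected.eq_zero_of_eventually_eq_zero {X : Type*} [TopologicalSpace X] {D : Set X}
    (hD : IsPreconnected D) {u : X → ℝ} (hu : ∀ x ∈ D, ContinuousAt u x)
    (hopen : ∀ x ∈ D, u x = 0 → ∀ᶠ y in 𝓝 x, u y = 0) {p : X} (hp : p ∈ D) (hp0 : u p = 0) :
    ∀ x ∈ D, u x = 0 := by
  have hsub : D ⊆ interior {x | u x = 0} := by
    refine hD.subset_of_closure_inter_subset isOpen_interior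
      ⟨p, hp, mem_interior_iff_mem_nhds.2 (hopen p hp hp0)⟩ fun x ⟨hx, hxD⟩ => ?_
    refine mem_interior_iff_mem_nhds.2 (hopen x hxD ?_)
    by_contra hne
    obtain ⟨y, hy, hyi⟩ := mem_closure_iff_nhds.1 hx _ ((hu x hxD).eventually_ne hne)
    exact hy (interior_subset hyi : y ∈ {x | u x = 0})
  exact fun x hx => (hsub.trans interior_subset hx : x ∈ {x | u x = 0})

end Translator

/-- Let `f` be a smooth solution of the translator equation with velocity
`(v', vn)` on an open connected `D ⊆ ℝⁿ`, and let
`h(x) = (vn − ⟨v', ∇f(x)⟩)/√(1 + |∇f(x)|²)` (the scalar mean curvature of the graph of `f`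
with respect to the upward unit normal, by the translator equation). If `h ≥ 0` on `D` and
`h` has a local minimum at some point of `D`, then `h ≡ 0` on `D`. -/
theorem subsequent_singularities_stmt4 {n : ℕ}
    (D : Set (EuclideanSpace ℝ (Fin n))) (hD : IsOpen D) (hDconn : IsConnected D)
    (v' : EuclideanSpace ℝ (Fin n)) (vn : ℝ)
    (f : EuclideanSpace ℝ (Fin n) → ℝ)
    (hf : ContDiffOn ℝ (⊤ : ℕ∞) f D)
    (ht : ∀ x ∈ D, TranslatorEqAt f v' vn x)
    (h : EuclideanSpace ℝ (Fin n) → ℝ)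
    (hdef : ∀ x, h x = (vn - ⟪v', gradient f x⟫) / Real.sqrt (1 + ‖gradient f x‖ ^ 2))
    (hnonneg : ∀ x ∈ D, 0 ≤ h x)
    (p : EuclideanSpace ℝ (Fin n)) (hp : p ∈ D)
    (hmin : IsLocalMinOn h D p) :
    ∀ x ∈ D, h x = 0 := by
  set g : EuclideanSpace ℝ (Fin n) → EuclideanSpace ℝ (Fin n) := gradient f with hg_def
  have hfc : ContDiffOn ℝ (⊤ : ℕ∞) (fderiv ℝ f) D := hf.fderiv_of_isOpen hD (by simp)
  have hgc : ContDiffOn ℝ (⊤ : ℕ∞) g D :=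
    (InnerProductSpace.toDual ℝ (EuclideanSpace ℝ (Fin n))).symm.contDiff.comp_contDiffOn hfc
  have hHc : ContDiffOn ℝ (⊤ : ℕ∞) (fderiv ℝ g) D := hgc.fderiv_of_isOpen hD (by simp)
  have hf1 : ∀ x ∈ D, HasFDerivAt f (innerSL ℝ (g x)) x := fun x hx =>
    ((hf.contDiffAt (hD.mem_nhds hx)).differentiableAt (by simp)).hasGradientAt
  have hg1 : ∀ x ∈ D, HasFDerivAt g (fderiv ℝ g x) x := fun x hx =>
    ((hgc.contDiffAt (hD.mem_nhds hx)).differentiableAt (by simp)).hasFDerivAt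
  have hH1 : ∀ x ∈ D, HasFDerivAt (fderiv ℝ g) (fderiv ℝ (fderiv ℝ g) x) x := fun x hx =>
    ((hHc.contDiffAt (hD.mem_nhds hx)).differentiableAt (by simp)).hasFDerivAt
  have hgcont : ContinuousOn g D := hgc.continuousOn
  have hHcont : ContinuousOn (fderiv ℝ g) D := hHc.continuousOn
  set b : EuclideanSpace ℝ (Fin n) → EuclideanSpace ℝ (Fin n) :=
    fun x => translatorDrift v' vn (g x) (fderiv ℝ g x) with hb_def
  have hbcont : ContinuousOn b D := by
    simp only [hb_def, translatorDrift]
    fun_prop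
  have hlin := fun x (hx : x ∈ D) =>
    inner_graphTraceVec_eq_of_translator hD hf1 hg1 hH1 ht hx
  obtain ⟨u', u'', hu⟩ := exists_graphOperator_velocity_eq_zero hg1 hH1 hlin v' vn
  obtain ⟨W', W'', hW⟩ := exists_sum_norm_sq_le_graphOperator_areaElement hg1 hH1 hlin
  have hWpos : ∀ x, 0 < √(1 + ‖g x‖ ^ 2) := fun x => Real.sqrt_pos.2 (by positivity)
  have huh : ∀ x, vn - ⟪v', g x⟫ = h x * √(1 + ‖g x‖ ^ 2) := fun x => by
    rw [hdef, div_mul_cancel₀ _ (hWpos x).ne']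
  have hc : 0 ≤ h p := hnonneg p hp
  have hWop : ∀ x ∈ D, 0 ≤ graphOperator (g x) (b x) (W' x) (W'' x) := fun x hx =>
    nonneg_of_mul_nonneg_right
      ((Finset.sum_nonneg fun i _ => sq_nonneg _).trans (hW x hx).2.2) (pow_pos (hWpos x) 3)
  set w : EuclideanSpace ℝ (Fin n) → ℝ :=
    fun x => (vn - ⟪v', g x⟫) - h p * √(1 + ‖g x‖ ^ 2) with hw_def
  have hw : ∀ x ∈ D, HasFDerivAt w (u' x - h p • W' x) x := fun x hx =>
    (hu x hx).1.sub ((hW x hx).1.const_mul (h p))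
  have hw' : ∀ x ∈ D, HasFDerivAt (fun x => u' x - h p • W' x) (u'' x - h p • W'' x) x :=
    fun x hx => (hu x hx).2.1.sub ((hW x hx).2.1.const_smul (h p))
  have hwop : ∀ x ∈ D, graphOperator (g x) (b x) (u' x - h p • W' x) (u'' x - h p • W'' x)
      = -(h p * graphOperator (g x) (b x) (W' x) (W'' x)) := fun x hx => by
    have h1 := (hu x hx).2.2
    simp only [graphOperator, graphTrace_sub, graphTrace_smul, sub_apply, smul_apply,
      smul_eq_mul] at h1 ⊢
    linear_combination h1
  have hmin' : ∀ᶠ x in 𝓝 p, x ∈ D ∧ h p ≤ h x :=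
    (hD.eventually_mem hp).and (by rwa [IsLocalMinOn, IsMinFilter, hD.nhdsWithin_eq hp] at hmin)
  obtain ⟨U, hUsub, hU, hpU⟩ := _root_.mem_nhds_iff.1 hmin'
  have hUD : U ⊆ D := fun x hx => (hUsub hx).1
  have hw0 : ∀ᶠ x in 𝓝 p, w x = 0 := by
    refine eventually_eq_zero_of_supersolution hU (hgcont.mono hUD) (hbcont.mono hUD)
      (fun x hx => hw x (hUD hx)) (fun x hx => hw' x (hUD hx)) (fun x hx => ?_) (fun x hx => ?_)
      hpU ?_
    · rw [hwop x (hUD hx)]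
      exact neg_nonpos.2 (mul_nonneg hc (hWop x (hUD hx)))
    · simp only [hw_def, huh x]
      exact sub_nonneg.2 (mul_le_mul_of_nonneg_right (hUsub hx).2 (hWpos x).le)
    · simp only [hw_def, huh p, sub_self]
  have hw'0 : ∀ᶠ x in 𝓝 p, u' x - h p • W' x = 0 := by
    filter_upwards [hw0.eventually_nhds, hD.eventually_mem hp] with x hx hxD
    exact (hw x hxD).unique ((hasFDerivAt_const (0 : ℝ) x).congr_of_eventuallyEq hx)
  have hw''0 : u'' p - h p • W'' p = 0 :=
    (hw' p hp).unique ((hasFDerivAt_const _ p).congr_of_eventuallyEq hw'0)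
  have hpzero : h p = 0 := by
    by_contra hne
    have h1 := hwop p hp
    rw [hw'0.self_of_nhds, hw''0] at h1
    have h2 : graphOperator (g p) (b p) (W' p) (W'' p) = 0 := by
      simpa [graphOperator, graphTrace, hne] using h1
    have h3 := (hW p hp).2.2
    rw [h2, mul_zero] at h3
    have h4 : ∀ i, fderiv ℝ g p (EuclideanSpace.single i 1) = 0 := fun i => by
      have := (Finset.sum_eq_zero_iff_of_nonneg fun i _ => sq_nonneg _).1
        (h3.antisymm (Finset.sum_nonneg fun i _ => sq_nonneg _)) i (Finset.mem_univ i)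
      simpa using this
    have h5 : fderiv ℝ g p (g p) = 0 := by
      rw [EuclideanSpace.eq_sum_single (g p)]
      simp [h4]
    have h6 := ht p hp
    simp only [TranslatorEqAt, lap, hess, ← hg_def, h4, h5, inner_zero_left, inner_zero_right,
      Finset.sum_const_zero, mul_zero, sub_zero] at h6
    have h7 : vn - ⟪v', g p⟫ = 0 :=
      (mul_eq_zero.1 h6.symm).resolve_right (by positivity)
    rw [huh p] at h7
    exact hne ((mul_eq_zero.1 h7).resolve_right (hWpos p).ne')
  have hu0 : ∀ x ∈ D, vn - ⟪v', g x⟫ = 0 := by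
    refine hDconn.isPreconnected.eq_zero_of_eventually_eq_zero
      (fun x hx => (hu x hx).1.continuousAt) (fun x hx hx0 => ?_) hp (by rw [huh, hpzero, zero_mul])
    refine eventually_eq_zero_of_supersolution hD hgcont hbcont (fun x hx => (hu x hx).1)
      (fun x hx => (hu x hx).2.1) (fun x hx => (hu x hx).2.2.le) (fun x hx => ?_) hx hx0
    rw [huh]
    exact mul_nonneg (hnonneg x hx) (hWpos x).le
  intro x hx
  rw [hdef, hu0 x hx, zero_div]
end
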